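/- For the exponential random graph model with parameter β in the subcritical region, there exists a constant C > 0, depending only on β₁,…,β_k and H₁,…,H_k, such that for all n ≥ 2 the normalized number of edges W_n satisfies d_Wass(W_n, Z) ≤ C n^{−1/4}, where Z is a standard normal random variable. -/

import Mathlib

open MeasureTheory ProbabilityTheory Real Finset

noncomputable section

/-- The index set `I = {(i,j) : 1 ≤ i < j ≤ n}` of potential edges on `n` labeled vertices. -/
def EdgeIdx (n : ℕ) : Type := {p : Fin n × Fin n // p.1 < p.2}

instance (n : ℕ) : Fintype (EdgeIdx n) := by unfold EdgeIdx; infer_instance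
instance (n : ℕ) : DecidableEq (EdgeIdx n) := by unfold EdgeIdx; infer_instance

/-- Adjacency of the graph `G_y` encoded by the edge-indicator vector `y`. -/
def yAdj {n : ℕ} (y : EdgeIdx n → Bool) (a b : Fin n) : Bool :=
  if h : a < b then y ⟨(a, b), h⟩ else if h' : b < a then y ⟨(b, a), h'⟩ else false

/-- The number of edges of a graph `H`. -/
def eCount {V : Type} [Fintype V] (H : SimpleGraph V) : ℕ :=
  Nat.card H.edgeSet

/-- `|Hom(H, G_y)|`: the number of injective maps from the vertex set of `H` to `Fin n`
mapping every edge of `H` to an edge of `G_y`. -/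
def homCount {V : Type} [Fintype V] {n : ℕ} (H : SimpleGraph V) (y : EdgeIdx n → Bool) : ℕ :=
  Nat.card {φ : V → Fin n //
    Function.Injective φ ∧ ∀ a b, H.Adj a b → yAdj y (φ a) (φ b) = true}

/-- `|Hom(H, G_y, s)|`: the number of pairs `(φ, (u, v))` where `φ` is injective, `(u, v)` is
an ordered pair of adjacent vertices of `H` with `{φ u, φ v} = s`, and every edge of `H` other
than `{u, v}` is mapped by `φ` to an edge of `G_y` (regardless of whether the edge `s` is
present in `G_y`). -/
def homCountAt {V : Type} [Fintype V] {n : ℕ} (H : SimpleGraph V) (y : EdgeIdx n → Bool)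
    (s : EdgeIdx n) : ℕ :=
  Nat.card {t : (V → Fin n) × V × V //
    Function.Injective t.1 ∧ H.Adj t.2.1 t.2.2 ∧
    Sym2.mk (t.1 t.2.1, t.1 t.2.2) = Sym2.mk (s.1.1, s.1.2) ∧
    ∀ a b, H.Adj a b → Sym2.mk (a, b) ≠ Sym2.mk (t.2.1, t.2.2) →
      yAdj y (t.1 a) (t.1 b) = true}

section ERGM

variable {k : ℕ} (β : Fin (k + 1) → ℝ) (v : Fin (k + 1) → ℕ)
  (H : ∀ j : Fin (k + 1), SimpleGraph (Fin (v j)))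

/-- The (unnormalized) ERGM weight `exp (Σ_j β_j n^{2−v_j} |Hom(H_j, G_y)|)`. -/
def ergmWeight (n : ℕ) (y : EdgeIdx n → Bool) : ℝ :=
  Real.exp (∑ j, β j * (n : ℝ) ^ ((2 : ℤ) - (v j : ℤ)) * (homCount (H j) y : ℝ))

/-- The ERGM normalizing constant. -/
def ergmZ (n : ℕ) : ℝ := ∑ y : EdgeIdx n → Bool, ergmWeight β v H n y

/-- The ERGM probability of the configuration `y`. -/
def ergmProb (n : ℕ) (y : EdgeIdx n → Bool) : ℝ := ergmWeight β v H n y / ergmZ β v H n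

/-- Expectation of `G(Y)` under the ERGM. -/
def ergmExp (n : ℕ) (G : (EdgeIdx n → Bool) → ℝ) : ℝ :=
  ∑ y : EdgeIdx n → Bool, ergmProb β v H n y * G y

/-- Variance of `G(Y)` under the ERGM. -/
def ergmVar (n : ℕ) (G : (EdgeIdx n → Bool) → ℝ) : ℝ :=
  ergmExp β v H n (fun y => (G y - ergmExp β v H n G) ^ 2)

/-- The total number of edges of `G_y`. -/
def edgeSum {n : ℕ} (y : EdgeIdx n → Bool) : ℝ :=
  ∑ s : EdgeIdx n, (if y s then (1 : ℝ) else 0)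

/-- `Φ_β(a) = Σ_j β_j e_j a^{e_j − 1}`. -/
def PhiFn : ℝ → ℝ := fun a =>
  ∑ j, β j * (eCount (H j) : ℝ) * a ^ (eCount (H j) - 1)

/-- `φ_β(a) = e^{2Φ_β(a)} / (e^{2Φ_β(a)} + 1)`. -/
def phiFn : ℝ → ℝ := fun a =>
  Real.exp (2 * PhiFn β v H a) / (Real.exp (2 * PhiFn β v H a) + 1)

/-- `σ_n² = N p (1−p) / (1 − 2 p (1−p) Φ_β'(p))` with `N = n(n−1)/2`. -/
def sigmaSq (p : ℝ) (n : ℕ) : ℝ :=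
  ((n : ℝ) * ((n : ℝ) - 1) / 2) * p * (1 - p) /
    (1 - 2 * p * (1 - p) * deriv (PhiFn β v H) p)

/-- `μ_n = E Σ_{s ∈ I} Y_s`. -/
def muN (n : ℕ) : ℝ := ergmExp β v H n (edgeSum)

/-- The standardized number of edges `W_n`. -/
def Wn (p : ℝ) (n : ℕ) (y : EdgeIdx n → Bool) : ℝ :=
  (edgeSum y - muN β v H n) / Real.sqrt (sigmaSq β v H p n)

end ERGM

open scoped NNReal

/-
Gibbs integration by parts bounds high moments of the fluctuations of rooted subgraph counts, so
outside an event of small probability these counts satisfy their mean-field equations up to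
`θ = n ^ (-5/12)`. On this event the extreme conditional edge probabilities satisfy the fixed-point
inequality of `φ` up to `O(θ)`, and the repulsion away from its unique fixed point `p` forces all of
them to be within `O(θ)` of `p`. Linearizing around `p`, the sum of `Y_t - P(Y_t = 1 | rest)` equals
`(1 - φ' p)` times the centred edge count plus a remainder, which changes by `O(θ)` when one edge is
flipped, up to an error that is small on typical configurations. The interaction being
ferromagnetic, association bounds the variance of such a function by `O(θ ^ 2)` times that of the
edge count. Since `Y_t - P(Y_t = 1 | rest)` is orthogonal to functions of the other edges, this
approximate linearity turns Stein's equation for the edge count into the stated rate.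
-/

namespace ErgmCLT

section Gibbs

variable {Ω : Type*} [Fintype Ω]

/-- The expectation of `f` under the Gibbs measure on the finite set `Ω` with density proportional
to `exp h`. -/
def gibbsExp (h f : Ω → ℝ) : ℝ :=
  (∑ y, Real.exp (h y) * f y) / ∑ y, Real.exp (h y)

/-- The variance of `f` under the Gibbs measure with density proportional to `exp h`. -/
def gibbsVar (h f : Ω → ℝ) : ℝ := gibbsExp h fun y => (f y - gibbsExp h f) ^ 2

section Linear

variable (h : Ω → ℝ)

lemma gibbsExp_add (f g : Ω → ℝ) :
    gibbsExp h (fun y => f y + g y) = gibbsExp h f + gibbsExp h g := by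
  simp only [gibbsExp, mul_add, sum_add_distrib, add_div]

lemma gibbsExp_sub (f g : Ω → ℝ) :
    gibbsExp h (fun y => f y - g y) = gibbsExp h f - gibbsExp h g := by
  simp only [gibbsExp, mul_sub, sum_sub_distrib, sub_div]

lemma gibbsExp_const_mul (a : ℝ) (f : Ω → ℝ) :
    gibbsExp h (fun y => a * f y) = a * gibbsExp h f := by
  simp only [gibbsExp, mul_left_comm _ a, ← mul_sum, mul_div_assoc]

lemma gibbsExp_sum {ι : Type*} (A : Finset ι) (f : ι → Ω → ℝ) :
    gibbsExp h (fun y => ∑ i ∈ A, f i y) = ∑ i ∈ A, gibbsExp h (f i) := by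
  simp only [gibbsExp, mul_sum, ← sum_div]
  rw [sum_comm]

end Linear

section Order

variable {h : Ω → ℝ}

lemma gibbsExp_mono {f g : Ω → ℝ} (hfg : ∀ y, f y ≤ g y) : gibbsExp h f ≤ gibbsExp h g := by
  unfold gibbsExp
  gcongr with y
  exact hfg y

lemma gibbsExp_nonneg {f : Ω → ℝ} (hf : ∀ y, 0 ≤ f y) : 0 ≤ gibbsExp h f :=
  div_nonneg (sum_nonneg fun y _ => mul_nonneg (Real.exp_pos _).le (hf y))
    (sum_nonneg fun _ _ => (Real.exp_pos _).le)

lemma abs_gibbsExp_le (f : Ω → ℝ) : |gibbsExp h f| ≤ gibbsExp h (fun y => |f y|) := by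
  refine abs_le'.mpr ⟨gibbsExp_mono fun _ => le_abs_self _, ?_⟩
  rw [← neg_one_mul, ← gibbsExp_const_mul]
  exact gibbsExp_mono fun y => by linarith [neg_abs_le (f y)]

lemma gibbsExp_add_sq_le (f g : Ω → ℝ) :
    gibbsExp h (fun y => (f y + g y) ^ 2)
      ≤ 2 * gibbsExp h (fun y => f y ^ 2) + 2 * gibbsExp h (fun y => g y ^ 2) := by
  rw [← gibbsExp_const_mul, ← gibbsExp_const_mul, ← gibbsExp_add]
  exact gibbsExp_mono fun y => by nlinarith [sq_nonneg (f y - g y)]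

lemma gibbsVar_nonneg (f : Ω → ℝ) : 0 ≤ gibbsVar h f := gibbsExp_nonneg fun _ => sq_nonneg _

lemma gibbsVar_add_le (f g : Ω → ℝ) :
    gibbsVar h (fun y => f y + g y) ≤ 2 * gibbsVar h f + 2 * gibbsVar h g := by
  refine le_trans (le_of_eq ?_) (gibbsExp_add_sq_le _ _)
  rw [gibbsVar, gibbsExp_add]
  congr 1; funext y; ring

end Order

section Nonempty

variable [Nonempty Ω] (h : Ω → ℝ)

lemma sum_exp_pos : 0 < ∑ y, Real.exp (h y) :=
  sum_pos (fun _ _ => Real.exp_pos _) univ_nonempty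

lemma gibbsExp_const (a : ℝ) : gibbsExp h (fun _ => a) = a := by
  simp only [gibbsExp, ← sum_mul]
  field_simp [(sum_exp_pos h).ne']

lemma gibbsExp_sq_sub_const (f : Ω → ℝ) (a : ℝ) :
    gibbsExp h (fun y => (f y - a) ^ 2) =
      gibbsExp h (fun y => f y ^ 2) - 2 * a * gibbsExp h f + a ^ 2 := by
  simp only [sub_sq, mul_right_comm _ _ a, gibbsExp_add, gibbsExp_sub, gibbsExp_const_mul,
    gibbsExp_const]

lemma gibbsVar_eq (f : Ω → ℝ) :
    gibbsVar h f = gibbsExp h (fun y => f y ^ 2) - gibbsExp h f ^ 2 := by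
  rw [gibbsVar, gibbsExp_sq_sub_const]
  ring

lemma gibbsVar_le_gibbsExp_sq_sub (f : Ω → ℝ) (a : ℝ) :
    gibbsVar h f ≤ gibbsExp h fun y => (f y - a) ^ 2 := by
  rw [gibbsVar_eq, gibbsExp_sq_sub_const]
  linarith [sq_nonneg (gibbsExp h f - a)]

lemma gibbsVar_le_gibbsExp_sq (f : Ω → ℝ) : gibbsVar h f ≤ gibbsExp h fun y => f y ^ 2 := by
  simpa only [sub_zero] using gibbsVar_le_gibbsExp_sq_sub h f 0

variable {h}

lemma gibbsExp_le_of_le {f : Ω → ℝ} {a : ℝ} (hf : ∀ y, f y ≤ a) : gibbsExp h f ≤ a :=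
  (gibbsExp_mono hf).trans_eq (gibbsExp_const h a)

lemma gibbsExp_abs_le_of_sq_le {f : Ω → ℝ} {a : ℝ} (ha : 0 ≤ a)
    (hf : gibbsExp h (fun y => f y ^ 2) ≤ a ^ 2) : gibbsExp h (fun y => |f y|) ≤ a := by
  have hvar := gibbsVar_nonneg (h := h) fun y => |f y|
  rw [gibbsVar_eq] at hvar
  simp only [sq_abs] at hvar
  exact le_of_sq_le_sq (by linarith) ha

end Nonempty

section FKG

variable {Ω : Type*} [DistribLattice Ω]

/-- Supermodular functions on a lattice: the log-densities satisfying the FKG lattice condition. -/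
def Supermodular (h : Ω → ℝ) : Prop := ∀ a b, h a + h b ≤ h (a ⊓ b) + h (a ⊔ b)

variable [Fintype Ω] {h : Ω → ℝ} (hsup : Supermodular h) {f g : Ω → ℝ}
include hsup

lemma gibbsExp_mul_le_of_nonneg (hf0 : 0 ≤ f) (hg0 : 0 ≤ g) (hf : Monotone f) (hg : Monotone g)
    [Nonempty Ω] : gibbsExp h f * gibbsExp h g ≤ gibbsExp h (fun y => f y * g y) := by
  have hZ := sum_exp_pos h
  have hfkg := fkg f g (fun y => Real.exp (h y)) (fun y => (Real.exp_pos _).le) hf0 hg0 hf hg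
    fun a b => by
      simp only [← Real.exp_add]
      exact Real.exp_le_exp.mpr (hsup a b)
  unfold gibbsExp
  rw [div_mul_div_comm, div_le_div_iff₀ (mul_pos hZ hZ) hZ]
  calc _ ≤ _ := mul_le_mul_of_nonneg_right hfkg hZ.le
    _ = _ := by ring

lemma gibbsExp_mul_le [OrderBot Ω] (hf : Monotone f) (hg : Monotone g) :
    gibbsExp h f * gibbsExp h g ≤ gibbsExp h (fun y => f y * g y) := by
  have hshift := gibbsExp_mul_le_of_nonneg hsup (f := fun y => f y - f ⊥) (g := fun y => g y - g ⊥)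
    (fun y => sub_nonneg.mpr (hf bot_le)) (fun y => sub_nonneg.mpr (hg bot_le))
    (fun a b hab => sub_le_sub_right (hf hab) _) (fun a b hab => sub_le_sub_right (hg hab) _)
  simp only [mul_sub, sub_mul, mul_comm _ (g ⊥), gibbsExp_sub, gibbsExp_const_mul,
    gibbsExp_const] at hshift
  linarith

lemma gibbsVar_le_of_monotone_add_sub [OrderBot Ω] (hadd : Monotone fun y => g y + f y)
    (hsub : Monotone fun y => g y - f y) : gibbsVar h f ≤ gibbsVar h g := by
  have hfkg := gibbsExp_mul_le hsup hadd hsub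
  simp only [← sq_sub_sq, gibbsExp_sub, gibbsExp_add] at hfkg
  rw [gibbsVar_eq, gibbsVar_eq]
  linarith

end FKG

end Gibbs

section Cube

variable {I : Type*}

/-- The indicator that the coordinate `s` of the configuration `y` is present. -/
def coord (s : I) (y : I → Bool) : ℝ := if y s then 1 else 0

lemma coord_eq_zero_or_one (s : I) (y : I → Bool) : coord s y = 0 ∨ coord s y = 1 := by
  unfold coord; split_ifs <;> simp

lemma coord_nonneg (s : I) (y : I → Bool) : 0 ≤ coord s y := by
  rcases coord_eq_zero_or_one s y with h | h <;> simp [h]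

lemma coord_le_one (s : I) (y : I → Bool) : coord s y ≤ 1 := by
  rcases coord_eq_zero_or_one s y with h | h <;> simp [h]

variable [DecidableEq I]

/-- The discrete derivative of `f` in the direction `s`. -/
def cubeDiff (s : I) (f : (I → Bool) → ℝ) (y : I → Bool) : ℝ :=
  f (Function.update y s true) - f (Function.update y s false)

/-- The functions on the cube that do not depend on the coordinate `s`. -/
def IndepOf (s : I) (f : (I → Bool) → ℝ) : Prop :=
  ∀ y b, f (Function.update y s b) = f y

lemma coord_update_self (s : I) (y : I → Bool) (b : Bool) :
    coord s (Function.update y s b) = if b then 1 else 0 := by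
  simp [coord]

lemma coord_update_of_ne {s t : I} (h : t ≠ s) (y : I → Bool) (b : Bool) :
    coord t (Function.update y s b) = coord t y := by
  simp [coord, Function.update_of_ne h]

lemma update_eq_self_of_coord_eq_one {s : I} {y : I → Bool} (h : coord s y = 1) :
    Function.update y s true = y := by
  rw [Function.update_eq_self_iff]
  by_contra hs
  simp [coord, Ne.symm hs] at h

lemma eq_add_coord_mul_cubeDiff (s : I) (f : (I → Bool) → ℝ) (y : I → Bool) :
    f y = f (Function.update y s false) + coord s y * cubeDiff s f y := by
  nth_rw 1 [← Function.update_eq_self s y]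
  cases h : y s <;> simp [coord, cubeDiff, h]

lemma indepOf_cubeDiff (s : I) (f : (I → Bool) → ℝ) : IndepOf s (cubeDiff s f) := by
  intro y b; simp [cubeDiff]

lemma abs_sub_update_false_le (s : I) (f : (I → Bool) → ℝ) (y : I → Bool) :
    |f y - f (Function.update y s false)| ≤ |cubeDiff s f y| := by
  rw [sub_eq_of_eq_add' (eq_add_coord_mul_cubeDiff s f y), abs_mul,
    abs_of_nonneg (coord_nonneg s y)]
  exact mul_le_of_le_one_left (abs_nonneg _) (coord_le_one s y)

lemma cubeDiff_add (s : I) (f g : (I → Bool) → ℝ) (y : I → Bool) :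
    cubeDiff s (fun y => f y + g y) y = cubeDiff s f y + cubeDiff s g y := by
  simp only [cubeDiff]; ring

lemma cubeDiff_sub (s : I) (f g : (I → Bool) → ℝ) (y : I → Bool) :
    cubeDiff s (fun y => f y - g y) y = cubeDiff s f y - cubeDiff s g y := by
  simp only [cubeDiff]; ring

lemma cubeDiff_const_mul (s : I) (a : ℝ) (f : (I → Bool) → ℝ) (y : I → Bool) :
    cubeDiff s (fun y => a * f y) y = a * cubeDiff s f y := by
  simp only [cubeDiff]; ring

lemma cubeDiff_mul (s : I) (f g : (I → Bool) → ℝ) (y : I → Bool) :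
    cubeDiff s (fun y => f y * g y) y = cubeDiff s f y * g (Function.update y s true)
      + f (Function.update y s false) * cubeDiff s g y := by
  simp only [cubeDiff]; ring

lemma cubeDiff_sum {ι : Type*} (s : I) (A : Finset ι) (f : ι → (I → Bool) → ℝ) (y : I → Bool) :
    cubeDiff s (fun y => ∑ i ∈ A, f i y) y = ∑ i ∈ A, cubeDiff s (f i) y := by
  simp [cubeDiff]

lemma cubeDiff_coord_self (s : I) (y : I → Bool) : cubeDiff s (coord s) y = 1 := by
  simp [cubeDiff, coord]

lemma cubeDiff_coord_of_ne {s t : I} (h : t ≠ s) (y : I → Bool) : cubeDiff s (coord t) y = 0 := by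
  simp [cubeDiff, coord_update_of_ne h]

/-- The conditional probability that the coordinate `s` is present given the other coordinates,
under the Gibbs measure with density proportional to `exp h`. -/
def condProb (h : (I → Bool) → ℝ) (s : I) (y : I → Bool) : ℝ := Real.sigmoid (cubeDiff s h y)

section CondProb

variable (h : (I → Bool) → ℝ)

lemma condProb_nonneg (s : I) (y : I → Bool) : 0 ≤ condProb h s y := Real.sigmoid_nonneg _

lemma condProb_le_one (s : I) (y : I → Bool) : condProb h s y ≤ 1 := Real.sigmoid_le_one _

lemma indepOf_condProb (s : I) : IndepOf s (condProb h s) := fun y b =>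
  congrArg Real.sigmoid (indepOf_cubeDiff s h y b)

lemma abs_coord_sub_condProb_le (s t : I) (y z : I → Bool) :
    |coord s y - condProb h t z| ≤ 1 :=
  abs_sub_le_of_nonneg_of_le (coord_nonneg s y) (coord_le_one s y) (condProb_nonneg h t z)
    (condProb_le_one h t z)

end CondProb

lemma monotone_of_cubeDiff_nonneg [Finite I] {f : (I → Bool) → ℝ} (hf : ∀ s y, 0 ≤ cubeDiff s f y) :
    Monotone f := by
  cases nonempty_fintype I
  have le_update (y : I → Bool) (s : I) : f y ≤ f (Function.update y s true) := by
    have h := mul_le_of_le_one_left (hf s y) (coord_le_one s y)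
    rw [eq_add_coord_mul_cubeDiff s f y]
    exact (add_le_add_right h _).trans_eq (add_sub_cancel _ _)
  have le_raise (a : I → Bool) (A : Finset I) : f a ≤ f fun i => if i ∈ A then true else a i := by
    induction A using Finset.induction_on with
    | empty => simp
    | insert s A _ ih =>
      refine ih.trans ((le_update _ s).trans_eq (congrArg f (funext fun i => ?_)))
      by_cases hi : i = s <;> simp [hi]
  intro a b hab
  refine (le_raise a (univ.filter fun i => b i = true)).trans_eq (congrArg f (funext fun i => ?_))
  have := hab i
  cases hb : b i <;> cases ha : a i <;> simp_all [Bool.le_iff_imp]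

variable [Fintype I]

/-- The number of present coordinates. -/
def coordSum (y : I → Bool) : ℝ := ∑ s, coord s y

lemma cubeDiff_coordSum (s : I) (y : I → Bool) : cubeDiff s coordSum y = 1 := by
  rw [← cubeDiff_coord_self s y]
  exact (cubeDiff_sum s univ coord y).trans
    (sum_eq_single s (fun t _ ht => cubeDiff_coord_of_ne ht y) (by simp))

variable (h : (I → Bool) → ℝ)

lemma sum_eq_half_sum_update (s : I) (f : (I → Bool) → ℝ) :
    ∑ y, f y = (∑ y, (f (Function.update y s true) + f (Function.update y s false))) / 2 := by
  have hflip : Function.Involutive (fun y : I → Bool => Function.update y s (!(y s))) := by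
    intro y; simp
  have hpair (y : I → Bool) : f (Function.update y s true) + f (Function.update y s false)
      = f y + f (Function.update y s (!(y s))) := by
    nth_rw 3 [← Function.update_eq_self s y]
    cases y s <;> simp [add_comm]
  have hsum : ∑ y, f (Function.update y s (!(y s))) = ∑ y, f y := Equiv.sum_comp hflip.toPerm f
  rw [sum_congr rfl fun y _ => hpair y, sum_add_distrib, hsum]
  ring

lemma gibbsExp_coord_sub_condProb_mul (s : I) {w : (I → Bool) → ℝ} (hw : IndepOf s w) :
    gibbsExp h (fun y => (coord s y - condProb h s y) * w y) = 0 := by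
  unfold gibbsExp
  rw [sum_eq_half_sum_update s, sum_eq_zero, zero_div, zero_div]
  intro y _
  have hexp : Real.exp (h (Function.update y s true))
      = Real.exp (h (Function.update y s false)) * Real.exp (cubeDiff s h y) := by
    rw [← Real.exp_add, cubeDiff, add_sub_cancel]
  simp only [hw y, indepOf_condProb h s y, coord_update_self, if_true, Bool.false_eq_true,
    if_false, hexp]
  rw [condProb, Real.sigmoid_def, Real.exp_neg]
  have := Real.exp_pos (cubeDiff s h y)
  field_simp
  ring

lemma gibbsExp_integration_by_parts (s : I) {w : (I → Bool) → ℝ} (hw : IndepOf s w)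
    (f : (I → Bool) → ℝ) :
    gibbsExp h (fun y => w y * (coord s y - condProb h s y) * f y)
      = gibbsExp h (fun y => w y * (1 - condProb h s y) * (coord s y * cubeDiff s f y)) := by
  have h0 : gibbsExp h (fun y => (coord s y - condProb h s y)
      * (w y * f (Function.update y s false))) = 0 :=
    gibbsExp_coord_sub_condProb_mul h s fun y b => by simp [hw y]
  rw [← sub_zero (gibbsExp h fun y => w y * (coord s y - condProb h s y) * f y), ← h0,
    ← gibbsExp_sub]
  congr 1
  funext y
  have hf := eq_add_coord_mul_cubeDiff s f y
  rcases coord_eq_zero_or_one s y with hc | hc <;> rw [hc] at hf ⊢ <;> rw [hf] <;> ring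

variable {h} in
/-- Newman's comparison inequality for positively associated variables. -/
lemma gibbsVar_le_sq_mul_gibbsVar_coordSum (hsup : Supermodular h) {f : (I → Bool) → ℝ} {L : ℝ}
    (hf : ∀ s y, |cubeDiff s f y| ≤ L) : gibbsVar h f ≤ L ^ 2 * gibbsVar h coordSum := by
  have hL : gibbsVar h (fun y => L * coordSum y) = L ^ 2 * gibbsVar h coordSum := by
    simp only [gibbsVar_eq, mul_pow, gibbsExp_const_mul]
    ring
  have hdiff (s : I) (y : I → Bool) : cubeDiff s (fun y => L * coordSum y) y = L := by
    rw [cubeDiff_const_mul, cubeDiff_coordSum, mul_one]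
  refine (gibbsVar_le_of_monotone_add_sub hsup ?_ ?_).trans_eq hL <;>
    refine monotone_of_cubeDiff_nonneg fun s y => ?_
  · rw [cubeDiff_add, hdiff]
    linarith [neg_le_of_abs_le (hf s y)]
  · rw [cubeDiff_sub, hdiff]
    linarith [le_of_abs_le (hf s y)]

end Cube

section CoordLattice

variable {I : Type*}

lemma coord_inf (s : I) (a b : I → Bool) : coord s (a ⊓ b) = coord s a * coord s b := by
  cases ha : a s <;> cases hb : b s <;> simp [coord, ha, hb]

lemma coord_add_coord (s : I) (a b : I → Bool) :
    coord s a + coord s b = coord s (a ⊓ b) + coord s (a ⊔ b) := by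
  cases ha : a s <;> cases hb : b s <;> simp [coord, ha, hb]

lemma monotone_coord (s : I) : Monotone (coord s) := by
  intro a b hab
  have := hab s
  cases ha : a s <;> cases hb : b s <;> simp_all [coord, Bool.le_iff_imp]

end CoordLattice

lemma lipschitzWith_sigmoid : LipschitzWith 1 Real.sigmoid := by
  refine lipschitzWith_of_nnnorm_deriv_le differentiable_sigmoid fun x => ?_
  rw [Real.deriv_sigmoid, ← NNReal.coe_le_coe, coe_nnnorm, Real.norm_eq_abs, abs_le]
  constructor <;> simp only [NNReal.coe_one] <;>
    nlinarith [Real.sigmoid_nonneg x, Real.sigmoid_le_one x]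

lemma abs_sigmoid_sub_le (x y : ℝ) : |Real.sigmoid x - Real.sigmoid y| ≤ |x - y| := by
  simpa only [Real.dist_eq, NNReal.coe_one, one_mul] using lipschitzWith_sigmoid.dist_le_mul x y

/-- Weighted families of placements of abstract graphs `j`, with `m j` edges, into a common set `I`
of potential edges. Each edge of `I` carries the same weight of placements through a given abstract
edge, and pairs of edges carry a small weight. The scale `u` stands for the twelfth root of the
number of vertices, so that all the rates below are natural powers of `u`. -/
structure PlacementSystem {J : Type*} (m : J → ℕ) (K : ℝ≥0) where
  I : Type
  fintypeI : Fintype I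
  decidableEqI : DecidableEq I
  P : J → Type
  fintypeP : ∀ j, Fintype (P j)
  place : ∀ j, P j → Fin (m j) → I
  c : J → ℝ
  κ : J → ℝ
  u : ℝ
  one_le_u : 1 ≤ u
  place_injective : ∀ j φ, Function.Injective (place j φ)
  c_nonneg : ∀ j, 0 ≤ c j
  degree_eq : ∀ j r t, c j * #{φ | place j φ r = t} = κ j
  abs_kappa_sub_two_le : ∀ j, |κ j - 2| ≤ K / u ^ 12
  codegree_le : ∀ j r e t s, r ≠ e → c j * #{φ | place j φ r = t ∧ place j φ e = s} ≤ K / u ^ 12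
  card_le : (Fintype.card I : ℝ) ≤ u ^ 24

namespace PlacementSystem

attribute [instance] fintypeI decidableEqI fintypeP

variable {J : Type*} {m : J → ℕ} {K : ℝ≥0} (S : PlacementSystem m K)

lemma u_pos : 0 < S.u := zero_lt_one.trans_le S.one_le_u

lemma div_u_pow_le {a : ℝ} (ha : 0 ≤ a) (m : ℕ) : a / S.u ^ m ≤ a :=
  div_le_self ha (one_le_pow₀ S.one_le_u)

lemma kappa_le (j : J) : S.κ j ≤ K + 2 := by
  linarith [le_of_abs_le (S.abs_kappa_sub_two_le j), S.div_u_pow_le K.coe_nonneg 12]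

lemma abs_sum_le_u_pow_mul {f : S.I → ℝ} {b : ℝ} (hb : 0 ≤ b) (hf : ∀ t, |f t| ≤ b) :
    |∑ t, f t| ≤ S.u ^ 24 * b :=
  calc |∑ t, f t| ≤ ∑ t, |f t| := abs_sum_le_sum_abs _ _
    _ ≤ Fintype.card S.I * b := by
      rw [← nsmul_eq_mul, ← card_univ]
      exact sum_le_card_nsmul _ _ _ fun t _ => hf t
    _ ≤ S.u ^ 24 * b := mul_le_mul_of_nonneg_right S.card_le hb

section Rooted

/-- The weighted sum of `g` over the placements of `j` sending `r` to `t`. -/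
def rooted (j : J) (r : Fin (m j)) (t : S.I) (g : S.P j → ℝ) : ℝ :=
  S.c j * ∑ φ with S.place j φ r = t, g φ

lemma rooted_add (j : J) (r : Fin (m j)) (t : S.I) (f g : S.P j → ℝ) :
    S.rooted j r t (fun φ => f φ + g φ) = S.rooted j r t f + S.rooted j r t g := by
  simp only [rooted, sum_add_distrib, mul_add]

lemma rooted_sub (j : J) (r : Fin (m j)) (t : S.I) (f g : S.P j → ℝ) :
    S.rooted j r t (fun φ => f φ - g φ) = S.rooted j r t f - S.rooted j r t g := by
  simp only [rooted, sum_sub_distrib, mul_sub]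

lemma rooted_const_mul (j : J) (r : Fin (m j)) (t : S.I) (a : ℝ) (g : S.P j → ℝ) :
    S.rooted j r t (fun φ => a * g φ) = a * S.rooted j r t g := by
  simp only [rooted, ← mul_sum, mul_left_comm]

lemma rooted_sum {ι : Type*} (j : J) (r : Fin (m j)) (t : S.I) (A : Finset ι) (g : ι → S.P j → ℝ) :
    S.rooted j r t (fun φ => ∑ i ∈ A, g i φ) = ∑ i ∈ A, S.rooted j r t (g i) := by
  simp only [rooted, ← mul_sum]
  rw [sum_comm]

lemma rooted_const (j : J) (r : Fin (m j)) (t : S.I) (a : ℝ) :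
    S.rooted j r t (fun _ => a) = S.κ j * a := by
  rw [rooted, sum_const, nsmul_eq_mul, ← mul_assoc, S.degree_eq]

variable {S}

lemma rooted_mono {j : J} {r : Fin (m j)} {t : S.I} {f g : S.P j → ℝ} (hfg : ∀ φ, f φ ≤ g φ) :
    S.rooted j r t f ≤ S.rooted j r t g :=
  mul_le_mul_of_nonneg_left (sum_le_sum fun φ _ => hfg φ) (S.c_nonneg j)

lemma rooted_congr {j : J} {r : Fin (m j)} {t : S.I} {f g : S.P j → ℝ}
    (hfg : ∀ φ, S.place j φ r = t → f φ = g φ) : S.rooted j r t f = S.rooted j r t g :=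
  congrArg (S.c j * ·) (sum_congr rfl fun φ hφ => hfg φ (mem_filter.mp hφ).2)

lemma abs_rooted_le_rooted {j : J} {r : Fin (m j)} {t : S.I} {f g : S.P j → ℝ}
    (hfg : ∀ φ, |f φ| ≤ g φ) : |S.rooted j r t f| ≤ S.rooted j r t g := by
  rw [rooted, abs_mul, abs_of_nonneg (S.c_nonneg j)]
  exact mul_le_mul_of_nonneg_left
    ((abs_sum_le_sum_abs _ _).trans (sum_le_sum fun φ _ => hfg φ)) (S.c_nonneg j)

lemma abs_rooted_le {j : J} {r : Fin (m j)} {t : S.I} {f : S.P j → ℝ} {a : ℝ}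
    (hf : ∀ φ, |f φ| ≤ a) : |S.rooted j r t f| ≤ S.κ j * a :=
  (abs_rooted_le_rooted hf).trans_eq (S.rooted_const j r t a)

variable (S)

lemma sum_mul_rooted (j : J) (r : Fin (m j)) (a : S.I → ℝ) (g : S.P j → ℝ) :
    ∑ t, a t * S.rooted j r t g = S.c j * ∑ φ, a (S.place j φ r) * g φ := by
  simp only [rooted, mul_left_comm _ (S.c j), ← mul_sum]
  rw [← sum_fiberwise univ (fun φ => S.place j φ r)]
  congr 1
  refine sum_congr rfl fun t _ => ?_
  rw [mul_sum]
  exact sum_congr rfl fun φ hφ => by rw [(mem_filter.mp hφ).2]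

lemma sum_rooted (j : J) (r : Fin (m j)) (g : S.P j → ℝ) :
    ∑ t, S.rooted j r t g = S.c j * ∑ φ, g φ := by
  simpa only [one_mul] using S.sum_mul_rooted j r (fun _ => 1) g

/-- The weighted sum of `g` over the placements of `j` sending `r` to `t` and `e` to `s`. -/
def birooted (j : J) (r e : Fin (m j)) (t s : S.I) (g : S.P j → ℝ) : ℝ :=
  S.rooted j r t fun φ => if S.place j φ e = s then g φ else 0

lemma birooted_comm (j : J) (r e : Fin (m j)) (t s : S.I) (g : S.P j → ℝ) :
    S.birooted j r e t s g = S.birooted j e r s t g := by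
  simp only [birooted, rooted, ← sum_filter, filter_filter, and_comm]

/-- The weight of the placements of `j` sending `r` to `t` and `e` to `s`. -/
def codegree (j : J) (r e : Fin (m j)) (t s : S.I) : ℝ := S.birooted j r e t s fun _ => 1

lemma codegree_le_div {j : J} {r e : Fin (m j)} (hre : r ≠ e) (t s : S.I) :
    S.codegree j r e t s ≤ K / S.u ^ 12 := by
  rw [codegree, birooted, rooted, sum_boole, filter_filter]
  exact S.codegree_le j r e t s hre

lemma abs_birooted_le_codegree {j : J} {r e : Fin (m j)} {t s : S.I} {g : S.P j → ℝ}
    (hg : ∀ φ, |g φ| ≤ 1) : |S.birooted j r e t s g| ≤ S.codegree j r e t s :=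
  abs_rooted_le_rooted fun φ => by
    split_ifs
    exacts [hg φ, abs_zero.le]

lemma sum_mul_birooted (j : J) (r e : Fin (m j)) (t : S.I) (a : S.I → ℝ) (g : S.P j → ℝ) :
    ∑ s, a s * S.birooted j r e t s g = S.rooted j r t fun φ => a (S.place j φ e) * g φ := by
  simp only [birooted, ← rooted_const_mul]
  rw [← S.rooted_sum]
  simp only [mul_ite, mul_zero, sum_ite_eq, mem_univ, if_true]

lemma sum_codegree_right (j : J) (r e : Fin (m j)) (t : S.I) :
    ∑ s, S.codegree j r e t s = S.κ j := by
  simpa only [codegree, one_mul, rooted_const, mul_one] using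
    S.sum_mul_birooted j r e t (fun _ => 1) fun _ => 1

lemma sum_codegree_left (j : J) (r e : Fin (m j)) (s : S.I) :
    ∑ t, S.codegree j r e t s = S.κ j :=
  (sum_congr rfl fun t _ => S.birooted_comm j r e t s _).trans (S.sum_codegree_right j e r s)

end Rooted

section Mon

/-- The indicator that all edges in `A` are present under the placement `φ`. -/
def mon (j : J) (A : Finset (Fin (m j))) (φ : S.P j) (y : S.I → Bool) : ℝ :=
  ∏ e ∈ A, coord (S.place j φ e) y

variable {j : J} (A : Finset (Fin (m j))) (φ : S.P j)

lemma mon_nonneg (y : S.I → Bool) : 0 ≤ S.mon j A φ y := prod_nonneg fun _ _ => coord_nonneg _ _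

lemma mon_le_one (y : S.I → Bool) : S.mon j A φ y ≤ 1 :=
  prod_le_one (fun _ _ => coord_nonneg _ _) fun _ _ => coord_le_one _ _

lemma abs_mon_le_one (y : S.I → Bool) : |S.mon j A φ y| ≤ 1 :=
  (abs_of_nonneg (S.mon_nonneg A φ y)).trans_le (S.mon_le_one A φ y)

lemma mon_eq_zero_or_one (y : S.I → Bool) : S.mon j A φ y = 0 ∨ S.mon j A φ y = 1 := by
  by_cases hzero : ∃ e ∈ A, coord (S.place j φ e) y = 0
  · obtain ⟨e, he, h0⟩ := hzero
    exact .inl (prod_eq_zero he h0)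
  · push Not at hzero
    exact .inr (prod_eq_one fun e he => (coord_eq_zero_or_one _ y).resolve_left (hzero e he))

lemma mon_inf (a b : S.I → Bool) : S.mon j A φ (a ⊓ b) = S.mon j A φ a * S.mon j A φ b := by
  simp only [mon, coord_inf, prod_mul_distrib]

lemma monotone_mon : Monotone (S.mon j A φ) := fun _ _ hab =>
  prod_le_prod (fun _ _ => coord_nonneg _ _) fun _ _ => monotone_coord _ hab

lemma supermodular_mon : Supermodular (S.mon j A φ) := by
  intro a b
  have hl := S.monotone_mon A φ (le_sup_left : a ≤ a ⊔ b)
  have hr := S.monotone_mon A φ (le_sup_right : b ≤ a ⊔ b)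
  rw [mon_inf]
  rcases S.mon_eq_zero_or_one A φ a with ha | ha <;>
    rcases S.mon_eq_zero_or_one A φ b with hb | hb <;> rw [ha] at hl ⊢ <;> rw [hb] at hr ⊢ <;>
    linarith

lemma mon_add_mon_of_card_le_one (hA : #A ≤ 1) (a b : S.I → Bool) :
    S.mon j A φ a + S.mon j A φ b = S.mon j A φ (a ⊓ b) + S.mon j A φ (a ⊔ b) := by
  rcases Nat.le_one_iff_eq_zero_or_eq_one.mp hA with h | h
  · simp only [mon, card_eq_zero.mp h, prod_empty]
  · obtain ⟨e, rfl⟩ := card_eq_one.mp h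
    simpa only [mon, prod_singleton] using coord_add_coord _ a b

lemma mon_update_of_forall_ne {s : S.I} (h : ∀ e ∈ A, S.place j φ e ≠ s) (y : S.I → Bool)
    (b : Bool) : S.mon j A φ (Function.update y s b) = S.mon j A φ y :=
  prod_congr rfl fun e he => coord_update_of_ne (h e he) y b

lemma mon_insert {e : Fin (m j)} (he : e ∉ A) (y : S.I → Bool) :
    S.mon j (insert e A) φ y = coord (S.place j φ e) y * S.mon j A φ y := prod_insert he

lemma cubeDiff_mon (s : S.I) (y : S.I → Bool) :
    cubeDiff s (S.mon j A φ) y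
      = ∑ e ∈ A, if S.place j φ e = s then S.mon j (A.erase e) φ y else 0 := by
  by_cases hs : ∃ e ∈ A, S.place j φ e = s
  · obtain ⟨e, he, rfl⟩ := hs
    have hne : ∀ a ∈ A.erase e, S.place j φ a ≠ S.place j φ e := fun a ha =>
      (S.place_injective j φ).ne (ne_of_mem_erase ha)
    have hupdate (b : Bool) : S.mon j A φ (Function.update y (S.place j φ e) b)
        = (if b then 1 else 0) * S.mon j (A.erase e) φ y := by
      rw [← insert_erase he, S.mon_insert _ φ (notMem_erase e A), coord_update_self,
        erase_insert (notMem_erase e A), S.mon_update_of_forall_ne _ φ hne]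
    rw [sum_eq_single_of_mem e he fun a ha hae => if_neg (hne a (mem_erase.mpr ⟨hae, ha⟩))]
    simp [cubeDiff, hupdate]
  · push Not at hs
    rw [cubeDiff, S.mon_update_of_forall_ne A φ hs, S.mon_update_of_forall_ne A φ hs, sub_self,
      sum_eq_zero fun e he => if_neg (hs e he)]

lemma abs_cubeDiff_mon_le (s : S.I) (y : S.I → Bool) :
    |cubeDiff s (S.mon j A φ) y| ≤ ∑ e ∈ A, if S.place j φ e = s then 1 else 0 := by
  rw [cubeDiff_mon]
  refine (abs_sum_le_sum_abs _ _).trans (sum_le_sum fun e _ => ?_)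
  split_ifs
  exacts [S.abs_mon_le_one _ φ y, abs_zero.le]

end Mon

section Count

/-- The weighted count of the placements sending `r` to `t` for which all edges of `A` are
present. -/
def count (j : J) (r : Fin (m j)) (A : Finset (Fin (m j))) (t : S.I) (y : S.I → Bool) : ℝ :=
  S.rooted j r t fun φ => S.mon j A φ y

lemma cubeDiff_rooted (j : J) (r : Fin (m j)) (t s : S.I) (g : S.P j → (S.I → Bool) → ℝ)
    (y : S.I → Bool) :
    cubeDiff s (fun y => S.rooted j r t fun φ => g φ y) y
      = S.rooted j r t fun φ => cubeDiff s (g φ) y := by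
  simp only [cubeDiff, rooted_sub]

lemma indepOf_count {j : J} {r : Fin (m j)} {A : Finset (Fin (m j))} (hr : r ∉ A) (t : S.I) :
    IndepOf t (S.count j r A t) := fun y b =>
  rooted_congr fun φ hφ => S.mon_update_of_forall_ne A φ
    (fun _ he hes => hr (S.place_injective j φ (hφ.trans hes.symm) ▸ he)) y b

lemma sum_count_insert {j : J} (r : Fin (m j)) {e : Fin (m j)} {A : Finset (Fin (m j))}
    (he : e ∉ A) (y : S.I → Bool) :
    ∑ t, S.count j r (insert e A) t y = ∑ t, coord t y * S.count j e A t y := by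
  simp only [count, sum_rooted, sum_mul_rooted S j e (fun t => coord t y), S.mon_insert A _ he]

variable {j : J}

lemma cubeDiff_count (r : Fin (m j)) (A : Finset (Fin (m j))) (t s : S.I) (y : S.I → Bool) :
    cubeDiff s (S.count j r A t) y
      = ∑ e ∈ A, S.birooted j r e t s fun φ => S.mon j (A.erase e) φ y := by
  unfold count birooted
  rw [cubeDiff_rooted, ← rooted_sum]
  simp only [cubeDiff_mon]

lemma abs_cubeDiff_count_le_sum (r : Fin (m j)) (A : Finset (Fin (m j))) (t s : S.I)
    (y : S.I → Bool) : |cubeDiff s (S.count j r A t) y| ≤ ∑ e ∈ A, S.codegree j r e t s := by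
  rw [cubeDiff_count]
  exact (abs_sum_le_sum_abs _ _).trans
    (sum_le_sum fun e _ => S.abs_birooted_le_codegree fun φ => S.abs_mon_le_one _ φ y)

lemma sum_codegree_le {r : Fin (m j)} {A : Finset (Fin (m j))} (hr : r ∉ A) (t s : S.I) :
    ∑ e ∈ A, S.codegree j r e t s ≤ m j * K / S.u ^ 12 := by
  have hu := S.u_pos
  calc ∑ e ∈ A, S.codegree j r e t s
      ≤ ∑ _e ∈ A, (K / S.u ^ 12 : ℝ) :=
        sum_le_sum fun e he => S.codegree_le_div (ne_of_mem_of_not_mem he hr).symm t s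
    _ = #A * K / S.u ^ 12 := by rw [sum_const, nsmul_eq_mul, mul_div_assoc]
    _ ≤ m j * K / S.u ^ 12 := by
        gcongr
        exact card_finset_fin_le A

lemma abs_cubeDiff_count_le {r : Fin (m j)} {A : Finset (Fin (m j))} (hr : r ∉ A) (t s : S.I)
    (y : S.I → Bool) :
    |cubeDiff s (S.count j r A t) y| ≤ m j * K / S.u ^ 12 :=
  (S.abs_cubeDiff_count_le_sum r A t s y).trans (S.sum_codegree_le hr t s)

lemma sum_abs_cubeDiff_count_le (r : Fin (m j)) (A : Finset (Fin (m j))) (s : S.I)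
    (y : S.I → Bool) : ∑ t, |cubeDiff s (S.count j r A t) y| ≤ m j * (K + 2) := by
  calc ∑ t, |cubeDiff s (S.count j r A t) y|
      ≤ ∑ t, ∑ e ∈ A, S.codegree j r e t s :=
        sum_le_sum fun t _ => S.abs_cubeDiff_count_le_sum r A t s y
    _ = #A * S.κ j := by
        rw [sum_comm, sum_congr rfl fun e _ => S.sum_codegree_left j r e s, sum_const,
          nsmul_eq_mul]
    _ ≤ #A * (K + 2) := mul_le_mul_of_nonneg_left (S.kappa_le j) (Nat.cast_nonneg _)
    _ ≤ m j * (K + 2) := by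
        gcongr
        exact card_finset_fin_le A

end Count

section Field

variable [Fintype J] (β : J → ℝ)

/-- The Hamiltonian: the `β`-weighted number of placements all of whose edges are present. -/
def ham (y : S.I → Bool) : ℝ := ∑ j, β j * (S.c j * ∑ φ, S.mon j univ φ y)

lemma supermodular_ham (hβ : ∀ j, 2 ≤ m j → 0 ≤ β j) :
    Supermodular (S.ham β) := by
  intro a b
  simp only [ham, ← sum_add_distrib, ← mul_add]
  refine sum_le_sum fun j _ => ?_
  by_cases hj : 2 ≤ m j
  · exact mul_le_mul_of_nonneg_left (mul_le_mul_of_nonneg_left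
      (sum_le_sum fun φ _ => S.supermodular_mon univ φ a b) (S.c_nonneg j)) (hβ j hj)
  · rw [sum_congr rfl fun φ _ => S.mon_add_mon_of_card_le_one univ φ (by rw [card_fin]; omega) a b]

/-- The increment of the Hamiltonian caused by the edge `s`. -/
def field (s : S.I) (y : S.I → Bool) : ℝ := cubeDiff s (S.ham β) y

/-- The conditional probability of the edge `s` given the other edges. -/
def prob (s : S.I) (y : S.I → Bool) : ℝ := condProb (S.ham β) s y

lemma prob_eq_sigmoid_field (s : S.I) (y : S.I → Bool) :
    S.prob β s y = Real.sigmoid (S.field β s y) := rfl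

lemma prob_nonneg (s : S.I) (y : S.I → Bool) : 0 ≤ S.prob β s y := condProb_nonneg _ _ _

lemma prob_le_one (s : S.I) (y : S.I → Bool) : S.prob β s y ≤ 1 := condProb_le_one _ _ _

/-- A bound, uniform in the placement system, for the influence of an edge on the local fields. -/
def influenceBound (m : J → ℕ) (β : J → ℝ) (K : ℝ≥0) : ℝ :=
  ∑ j, |β j| * (m j ^ 2 * (K + 2))

lemma influenceBound_nonneg : 0 ≤ influenceBound m β K :=
  sum_nonneg fun _ _ => by positivity

lemma field_eq (s : S.I) (y : S.I → Bool) :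
    S.field β s y = ∑ j, β j * ∑ r, S.count j r (univ.erase r) s y := by
  have hdiff : S.field β s y
      = ∑ j, β j * (S.c j * ∑ φ, cubeDiff s (S.mon j univ φ) y) := by
    have hham : S.ham β = fun y => ∑ j, β j * (S.c j * ∑ φ, S.mon j univ φ y) := rfl
    simp only [field, hham, cubeDiff_sum, cubeDiff_const_mul]
  rw [hdiff]
  refine sum_congr rfl fun j _ => ?_
  simp only [cubeDiff_mon, count, rooted, sum_filter]
  rw [← mul_sum, sum_comm]

lemma abs_cubeDiff_field_le_sum (t s : S.I) (y : S.I → Bool) :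
    |cubeDiff s (S.field β t) y|
      ≤ ∑ j, |β j| * ∑ r, |cubeDiff s (S.count j r (univ.erase r) t) y| := by
  have hfield : S.field β t = fun y => ∑ j, β j * ∑ r, S.count j r (univ.erase r) t y :=
    funext (S.field_eq β t)
  simp only [hfield, cubeDiff_sum, cubeDiff_const_mul]
  refine (abs_sum_le_sum_abs _ _).trans (sum_le_sum fun j _ => ?_)
  rw [abs_mul]
  exact mul_le_mul_of_nonneg_left (abs_sum_le_sum_abs _ _) (abs_nonneg _)

lemma abs_cubeDiff_field_le (t s : S.I) (y : S.I → Bool) :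
    |cubeDiff s (S.field β t) y| ≤ influenceBound m β K / S.u ^ 12 := by
  refine (S.abs_cubeDiff_field_le_sum β t s y).trans ?_
  rw [influenceBound, sum_div]
  refine sum_le_sum fun j _ => ?_
  rw [mul_div_assoc]
  refine mul_le_mul_of_nonneg_left ?_ (abs_nonneg _)
  have hu := S.u_pos
  calc ∑ r, |cubeDiff s (S.count j r (univ.erase r) t) y|
      ≤ ∑ _r : Fin (m j), m j * K / S.u ^ 12 :=
        sum_le_sum fun r _ => S.abs_cubeDiff_count_le (notMem_erase r _) t s y
    _ = m j ^ 2 * K / S.u ^ 12 := by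
        rw [sum_const, card_fin, nsmul_eq_mul]; ring
    _ ≤ m j ^ 2 * (K + 2) / S.u ^ 12 := by
        gcongr
        exact le_add_of_nonneg_right zero_le_two

lemma sum_abs_cubeDiff_field_le (s : S.I) (y : S.I → Bool) :
    ∑ t, |cubeDiff s (S.field β t) y| ≤ influenceBound m β K := by
  calc ∑ t, |cubeDiff s (S.field β t) y|
      ≤ ∑ t, ∑ j, |β j| * ∑ r, |cubeDiff s (S.count j r (univ.erase r) t) y| :=
        sum_le_sum fun t _ => S.abs_cubeDiff_field_le_sum β t s y
    _ = ∑ j, |β j| * ∑ r, ∑ t, |cubeDiff s (S.count j r (univ.erase r) t) y| := by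
        rw [sum_comm]
        refine sum_congr rfl fun j _ => ?_
        rw [← mul_sum, sum_comm]
    _ ≤ ∑ j, |β j| * ∑ _r : Fin (m j), m j * (K + 2 : ℝ) := by
        gcongr with j _ r _
        exact S.sum_abs_cubeDiff_count_le r _ s y
    _ = influenceBound m β K := by
        simp only [sum_const, card_fin, nsmul_eq_mul, influenceBound, sq, mul_assoc]

lemma abs_cubeDiff_prob_le_abs_cubeDiff_field (t s : S.I) (y : S.I → Bool) :
    |cubeDiff s (S.prob β t) y| ≤ |cubeDiff s (S.field β t) y| :=
  abs_sigmoid_sub_le _ _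

lemma abs_cubeDiff_prob_le (t s : S.I) (y : S.I → Bool) :
    |cubeDiff s (S.prob β t) y| ≤ influenceBound m β K / S.u ^ 12 :=
  (S.abs_cubeDiff_prob_le_abs_cubeDiff_field β t s y).trans (S.abs_cubeDiff_field_le β t s y)

lemma sum_abs_cubeDiff_prob_le (s : S.I) (y : S.I → Bool) :
    ∑ t, |cubeDiff s (S.prob β t) y| ≤ influenceBound m β K :=
  (sum_le_sum fun t _ => S.abs_cubeDiff_prob_le_abs_cubeDiff_field β t s y).trans
    (S.sum_abs_cubeDiff_field_le β s y)

end Field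

end PlacementSystem

section Moments

lemma abs_pow_sub_pow_le_of_abs_sub_le {x z b : ℝ} (m : ℕ) (hxz : |x - z| ≤ b) :
    |x ^ (2 * m + 1) - z ^ (2 * m + 1)|
      ≤ b * ((2 * m + 1) * 4 ^ m) * (x ^ (2 * m) + b ^ (2 * m)) := by
  have hb : 0 ≤ b := (abs_nonneg _).trans hxz
  have hmax : max |x| |z| ≤ |x| + b := by
    refine max_le (le_add_of_nonneg_right hb) ?_
    linarith [abs_sub_abs_le_abs_sub z x, abs_sub_comm x z]
  calc |x ^ (2 * m + 1) - z ^ (2 * m + 1)|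
      ≤ |x - z| * ((2 * m + 1 : ℕ) : ℝ) * max |x| |z| ^ (2 * m) := abs_pow_sub_pow_le x z _
    _ ≤ b * (2 * m + 1) * (|x| + b) ^ (2 * m) := by push_cast; gcongr
    _ ≤ b * (2 * m + 1) * (2 ^ (2 * m) * (|x| ^ (2 * m) + b ^ (2 * m))) := by
        gcongr
        refine (add_pow_le (abs_nonneg x) hb _).trans ?_
        gcongr
        exacts [one_le_two, Nat.sub_le _ _]
    _ = b * ((2 * m + 1) * 4 ^ m) * (x ^ (2 * m) + b ^ (2 * m)) := by
        rw [pow_mul 2, (even_two_mul m).pow_abs]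
        ring

/-- The constant in the bound `gibbsExp_pow_le` for the moment of order `2 * m`. -/
def momentConst (a : ℝ) : ℕ → ℝ
  | 0 => 1
  | m + 1 => a * a * ((2 * m + 1) * 4 ^ m) * (momentConst a m + a ^ (2 * m))

lemma momentConst_nonneg (a : ℝ) (m : ℕ) : 0 ≤ momentConst a m := by
  induction m with
  | zero => exact zero_le_one
  | succ m ih =>
    have := (even_two_mul m).pow_nonneg a
    exact mul_nonneg (mul_nonneg (mul_self_nonneg a) (by positivity)) (by positivity)

variable {I : Type*} [DecidableEq I] [Fintype I] {h : (I → Bool) → ℝ} {w : I → (I → Bool) → ℝ}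
  (hw : ∀ s, IndepOf s (w s)) {F : (I → Bool) → ℝ}
  (hF : ∀ y, F y = ∑ s, w s y * (coord s y - condProb h s y)) {a : ℝ}
  (ha : ∀ y, ∑ s, |w s y| ≤ a)
include hw hF ha

lemma gibbsExp_pow_succ_le {b : ℝ} (hb : 0 ≤ b) (hFb : ∀ s y, |cubeDiff s F y| ≤ b) (m : ℕ) :
    gibbsExp h (fun y => F y ^ (2 * (m + 1))) ≤
      a * (b * ((2 * m + 1) * 4 ^ m)) * (gibbsExp h (fun y => F y ^ (2 * m)) + b ^ (2 * m)) := by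
  have hexpand : (fun y => F y ^ (2 * (m + 1)))
      = fun y => ∑ s, w s y * (coord s y - condProb h s y) * F y ^ (2 * m + 1) := by
    funext y
    rw [← sum_mul, ← hF]
    ring
  rw [hexpand, gibbsExp_sum]
  simp only [gibbsExp_integration_by_parts h _ (hw _) fun y => F y ^ (2 * m + 1)]
  rw [← gibbsExp_sum, ← gibbsExp_const h (b ^ (2 * m)), ← gibbsExp_add, ← gibbsExp_const_mul]
  refine gibbsExp_mono fun y => ?_
  set B := b * ((2 * m + 1) * 4 ^ m) * (F y ^ (2 * m) + b ^ (2 * m)) with hB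
  have hB0 : 0 ≤ B := by
    have := (even_two_mul m).pow_nonneg (F y)
    positivity
  have hdiff (s : I) : |coord s y * cubeDiff s (fun y => F y ^ (2 * m + 1)) y| ≤ B := by
    rcases coord_eq_zero_or_one s y with hs | hs
    · simpa only [hs, zero_mul, abs_zero] using hB0
    · rw [hs, one_mul, cubeDiff, update_eq_self_of_coord_eq_one hs]
      exact abs_pow_sub_pow_le_of_abs_sub_le m ((abs_sub_update_false_le s F y).trans (hFb s y))
  calc ∑ s, w s y * (1 - condProb h s y) * (coord s y * cubeDiff s (fun y => F y ^ (2 * m + 1)) y)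
      ≤ ∑ s, |w s y| * B := by
        refine sum_le_sum fun s _ => (le_abs_self _).trans ?_
        rw [abs_mul, abs_mul]
        refine mul_le_mul (mul_le_of_le_one_right (abs_nonneg _) ?_) (hdiff s) (abs_nonneg _)
          (abs_nonneg _)
        rw [abs_le]
        constructor <;> linarith [condProb_nonneg h s y, condProb_le_one h s y]
    _ = (∑ s, |w s y|) * B := by rw [sum_mul]
    _ ≤ a * B := mul_le_mul_of_nonneg_right (ha y) hB0
    _ = a * (b * ((2 * m + 1) * 4 ^ m)) * (F y ^ (2 * m) + b ^ (2 * m)) := by rw [hB]; ring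

lemma gibbsExp_pow_le {n : ℝ} (hn : 1 ≤ n) (hFn : ∀ s y, |cubeDiff s F y| ≤ a / n) (m : ℕ) :
    gibbsExp h (fun y => F y ^ (2 * m)) ≤ momentConst a m / n ^ m := by
  have ha0 : 0 ≤ a := (sum_nonneg fun _ _ => abs_nonneg _).trans (ha fun _ => false)
  induction m with
  | zero => simp [gibbsExp_const, momentConst]
  | succ m ih =>
    calc gibbsExp h (fun y => F y ^ (2 * (m + 1)))
        ≤ a * (a / n * ((2 * m + 1) * 4 ^ m))
          * (gibbsExp h (fun y => F y ^ (2 * m)) + (a / n) ^ (2 * m)) :=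
          gibbsExp_pow_succ_le hw hF ha (by positivity) hFn m
      _ ≤ a * (a / n * ((2 * m + 1) * 4 ^ m))
          * (momentConst a m / n ^ m + a ^ (2 * m) / n ^ m) := by
          rw [div_pow]
          gcongr; omega
      _ = momentConst a (m + 1) / n ^ (m + 1) := by
          rw [momentConst]
          field_simp
          ring

end Moments

section UnionBound

variable {Ω : Type*} [Fintype Ω]

/-- Chebyshev's inequality combined with a union bound. -/
lemma gibbsExp_indicator_exists_lt_abs_le {ι : Type*} [Fintype ι] (h : Ω → ℝ) (f : ι → Ω → ℝ)
    {θ M : ℝ} (hθ : 0 < θ) (m : ℕ) (hf : ∀ i, gibbsExp h (fun y => f i y ^ (2 * m)) ≤ M) :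
    gibbsExp h ({y | ∃ i, θ < |f i y|}.indicator 1) ≤ Fintype.card ι * (M / θ ^ (2 * m)) := by
  have hpos (i : ι) (y : Ω) : 0 ≤ (θ ^ (2 * m))⁻¹ * f i y ^ (2 * m) := by
    have := (even_two_mul m).pow_nonneg (f i y)
    positivity
  have hpoint (y : Ω) : {y | ∃ i, θ < |f i y|}.indicator 1 y
      ≤ ∑ i, (θ ^ (2 * m))⁻¹ * f i y ^ (2 * m) := by
    refine Set.indicator_apply_le' (fun ⟨i, hi⟩ => ?_) fun _ => sum_nonneg fun i _ => hpos i y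
    refine le_trans ?_ (single_le_sum (fun i _ => hpos i y) (mem_univ i))
    rw [Pi.one_apply, inv_mul_eq_div, one_le_div (pow_pos hθ _), ← (even_two_mul m).pow_abs (f i y)]
    exact pow_le_pow_left₀ hθ.le hi.le _
  refine (gibbsExp_mono hpoint).trans ?_
  rw [gibbsExp_sum, ← nsmul_eq_mul, ← card_univ]
  refine sum_le_card_nsmul _ _ _ fun i _ => ?_
  rw [gibbsExp_const_mul, inv_mul_eq_div]
  exact div_le_div_of_nonneg_right (hf i) (pow_pos hθ _).le

end UnionBound

namespace PlacementSystem

variable {J : Type*} {m : J → ℕ} {K : ℝ≥0} (S : PlacementSystem m K)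

section Birooted

variable {j : J}

lemma indepOf_birooted_mon (r : Fin (m j)) {A : Finset (Fin (m j))} {e : Fin (m j)} (he : e ∉ A)
    (t s : S.I) : IndepOf s fun y => S.birooted j r e t s fun φ => S.mon j A φ y := by
  intro y b
  refine rooted_congr fun φ _ => ?_
  split_ifs with hs
  · exact S.mon_update_of_forall_ne A φ
      (fun a ha has => he (S.place_injective j φ (hs.trans has.symm) ▸ ha)) y b
  · rfl

lemma sum_abs_birooted_le (r e : Fin (m j)) (t : S.I) {g : S.P j → ℝ} (hg : ∀ φ, |g φ| ≤ 1) :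
    ∑ s, |S.birooted j r e t s g| ≤ K + 2 :=
  calc ∑ s, |S.birooted j r e t s g|
      ≤ ∑ s, S.codegree j r e t s := sum_le_sum fun _ _ => S.abs_birooted_le_codegree hg
    _ ≤ K + 2 := (S.sum_codegree_right j r e t).trans_le (S.kappa_le j)

end Birooted

/-- The threshold for the fluctuations of rooted counts. -/
def θ : ℝ := (S.u ^ 5)⁻¹

lemma theta_pos : 0 < S.θ := inv_pos.mpr (pow_pos S.u_pos 5)

lemma theta_le_one : S.θ ≤ 1 := inv_le_one_of_one_le₀ (one_le_pow₀ S.one_le_u)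

variable [Fintype J] (β : J → ℝ)

/-- The rooted count of the placements for which the edges of `A` are present, weighted by the
fluctuation of the edge `e`. -/
def fluct (j : J) (r : Fin (m j)) (A : Finset (Fin (m j))) (e : Fin (m j)) (t : S.I)
    (y : S.I → Bool) : ℝ :=
  S.rooted j r t fun φ => S.mon j A φ y * (coord (S.place j φ e) y - S.prob β (S.place j φ e) y)

lemma fluct_eq_sum {j : J} (r : Fin (m j)) (A : Finset (Fin (m j))) (e : Fin (m j)) (t : S.I)
    (y : S.I → Bool) :
    S.fluct β j r A e t y = ∑ s, (S.birooted j r e t s fun φ => S.mon j A φ y)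
      * (coord s y - condProb (S.ham β) s y) := by
  simp only [fluct, mul_comm (S.mon j A _ y), mul_comm (S.birooted j r e t _ _)]
  exact (S.sum_mul_birooted j r e t (fun s => coord s y - S.prob β s y) _).symm

/-- A bound for the total weight, and for `u ^ 12` times the influences, of the fluctuations
`fluct`. -/
def fluctBound (m : J → ℕ) (β : J → ℝ) (K : ℝ≥0) : ℝ :=
  (∑ j, (m j : ℝ)) * K + (K + 2) * (influenceBound m β K + 1)

lemma add_two_le_fluctBound : K + 2 ≤ fluctBound m β K := by
  have hinf := influenceBound_nonneg (m := m) (K := K) β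
  have : 0 ≤ (∑ j, (m j : ℝ)) * K + (K + 2) * influenceBound m β K := by positivity
  rw [fluctBound]
  linarith

variable {j : J} {r : Fin (m j)} {A : Finset (Fin (m j))} {e : Fin (m j)}

lemma abs_cubeDiff_mon_mul_coord_sub_prob_le (heA : e ∉ A) (φ : S.P j) (s : S.I)
    (y : S.I → Bool) :
    |cubeDiff s (fun y => S.mon j A φ y *
        (coord (S.place j φ e) y - S.prob β (S.place j φ e) y)) y|
      ≤ (∑ a ∈ insert e A, if S.place j φ a = s then 1 else 0)
        + influenceBound m β K / S.u ^ 12 := by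
  have hcoord : |cubeDiff s (coord (S.place j φ e)) y| ≤ if S.place j φ e = s then 1 else 0 := by
    split_ifs with hs
    · rw [hs, cubeDiff_coord_self, abs_one]
    · rw [cubeDiff_coord_of_ne hs, abs_zero]
  rw [cubeDiff_mul, cubeDiff_sub, sum_insert heA]
  refine (abs_add_le _ _).trans ?_
  rw [abs_mul, abs_mul]
  have hmon := (mul_le_of_le_one_right (abs_nonneg (cubeDiff s (S.mon j A φ) y))
    (abs_coord_sub_condProb_le (S.ham β) (S.place j φ e) (S.place j φ e)
      (Function.update y s true) (Function.update y s true))).trans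
    (S.abs_cubeDiff_mon_le A φ s y)
  have hedge := (mul_le_of_le_one_left (abs_nonneg _)
    (S.abs_mon_le_one A φ (Function.update y s false))).trans
    ((abs_sub (cubeDiff s (coord (S.place j φ e)) y)
      (cubeDiff s (S.prob β (S.place j φ e)) y)).trans
      (add_le_add hcoord (S.abs_cubeDiff_prob_le β (S.place j φ e) s y)))
  exact (add_le_add hmon hedge).trans_eq (by ring)

lemma abs_cubeDiff_fluct_le (her : e ≠ r) (hrA : r ∉ A) (heA : e ∉ A) (t s : S.I)
    (y : S.I → Bool) :
    |cubeDiff s (S.fluct β j r A e t) y| ≤ fluctBound m β K / S.u ^ 12 := by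
  have hu := S.u_pos
  have hinf := influenceBound_nonneg (m := m) (K := K) β
  have hm : (m j : ℝ) ≤ ∑ j, (m j : ℝ) :=
    single_le_sum (f := fun j => (m j : ℝ)) (fun _ _ => Nat.cast_nonneg _) (mem_univ j)
  have hr : r ∉ insert e A := by simp [her.symm, hrA]
  unfold fluct
  rw [cubeDiff_rooted]
  calc |S.rooted j r t fun φ => cubeDiff s (fun y => S.mon j A φ y *
          (coord (S.place j φ e) y - S.prob β (S.place j φ e) y)) y|
      ≤ S.rooted j r t fun φ => (∑ a ∈ insert e A, if S.place j φ a = s then 1 else 0)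
          + influenceBound m β K / S.u ^ 12 :=
        abs_rooted_le_rooted fun φ => S.abs_cubeDiff_mon_mul_coord_sub_prob_le β heA φ s y
    _ = ∑ a ∈ insert e A, S.codegree j r a t s + S.κ j * (influenceBound m β K / S.u ^ 12) := by
        rw [rooted_add, rooted_sum, rooted_const]
        rfl
    _ ≤ (∑ j, (m j : ℝ)) * K / S.u ^ 12 + (K + 2) * ((influenceBound m β K + 1) / S.u ^ 12) := by
        gcongr
        · exact (S.sum_codegree_le hr t s).trans (by gcongr)
        · exact S.kappa_le j
        · exact le_add_of_nonneg_right zero_le_one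
    _ = fluctBound m β K / S.u ^ 12 := by rw [fluctBound]; ring

lemma gibbsExp_fluct_pow_le (her : e ≠ r) (hrA : r ∉ A) (heA : e ∉ A) (t : S.I) (n : ℕ) :
    gibbsExp (S.ham β) (fun y => S.fluct β j r A e t y ^ (2 * n))
      ≤ momentConst (fluctBound m β K) n / (S.u ^ 12) ^ n :=
  gibbsExp_pow_le (S.indepOf_birooted_mon r heA t) (S.fluct_eq_sum β r A e t)
    (fun y => (S.sum_abs_birooted_le r e t fun φ => S.abs_mon_le_one A φ y).trans
      (add_two_le_fluctBound β))
    (one_le_pow₀ S.one_le_u) (S.abs_cubeDiff_fluct_le β her hrA heA t) n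

/-- The configurations for which all rooted fluctuations are small. -/
def IsTypical (y : S.I → Bool) : Prop :=
  ∀ (j : J) (r : Fin (m j)) (A : Finset (Fin (m j))) (e : Fin (m j)) (t : S.I),
    e ≠ r → r ∉ A → e ∉ A → |S.fluct β j r A e t y| ≤ S.θ

/-- The indicator of the atypical configurations. -/
def atypical : (S.I → Bool) → ℝ := {y | ¬ S.IsTypical β y}.indicator 1

end PlacementSystem

section Atypical

variable {J : Type*} [Fintype J] (m : J → ℕ) (β : J → ℝ) (K : ℝ≥0)

/-- The data `(j, r, A, e)` of the fluctuations controlled by `PlacementSystem.IsTypical`. -/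
abbrev FluctIndex : Type _ :=
  {x : Σ j, Fin (m j) × Finset (Fin (m j)) × Fin (m j) //
    x.2.2.2 ≠ x.2.1 ∧ x.2.1 ∉ x.2.2.1 ∧ x.2.2.2 ∉ x.2.2.1}

lemma exists_gibbsExp_atypical_le : ∃ C : ℝ, 0 ≤ C ∧ ∀ S : PlacementSystem m K,
    gibbsExp (S.ham β) (S.atypical β) ≤ C / S.u ^ 48 := by
  refine ⟨Fintype.card (FluctIndex m) * momentConst (PlacementSystem.fluctBound m β K) 36,
    mul_nonneg (Nat.cast_nonneg _) (momentConst_nonneg _ _), fun S => ?_⟩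
  have hu := S.u_pos
  let f (x : FluctIndex m × S.I) : (S.I → Bool) → ℝ :=
    S.fluct β x.1.1.1 x.1.1.2.1 x.1.1.2.2.1 x.1.1.2.2.2 x.2
  have hatypical : S.atypical β = {y | ∃ x, S.θ < |f x y|}.indicator 1 := by
    refine congrArg (Set.indicator · 1) (Set.ext fun y => ?_)
    simp [PlacementSystem.IsTypical, f, and_assoc]
  have hmoment := momentConst_nonneg (PlacementSystem.fluctBound m β K) 36
  calc gibbsExp (S.ham β) (S.atypical β)
      ≤ Fintype.card (FluctIndex m × S.I)
        * (momentConst (PlacementSystem.fluctBound m β K) 36 / (S.u ^ 12) ^ 36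
          / S.θ ^ (2 * 36)) := by
        rw [hatypical]
        exact gibbsExp_indicator_exists_lt_abs_le _ f S.theta_pos 36 fun ⟨x, t⟩ =>
          S.gibbsExp_fluct_pow_le β x.2.1 x.2.2.1 x.2.2.2 t 36
    _ ≤ Fintype.card (FluctIndex m) * S.u ^ 24
        * (momentConst (PlacementSystem.fluctBound m β K) 36 / (S.u ^ 12) ^ 36
          / S.θ ^ (2 * 36)) := by
        rw [Fintype.card_prod, Nat.cast_mul]
        have := S.theta_pos
        gcongr
        exact S.card_le
    _ = Fintype.card (FluctIndex m) * momentConst (PlacementSystem.fluctBound m β K) 36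
        / S.u ^ 48 := by
        rw [PlacementSystem.θ, inv_pow, ← pow_mul]
        field_simp
        ring

end Atypical

namespace PlacementSystem

variable {J : Type*} [Fintype J] {m : J → ℕ} {β : J → ℝ} {K : ℝ≥0} (S : PlacementSystem m K)

lemma gibbsExp_le_of_isTypical {f : (S.I → Bool) → ℝ} {a b c : ℝ}
    (hc : gibbsExp (S.ham β) (S.atypical β) ≤ c) (ha : 0 ≤ a) (hb : 0 ≤ b)
    (htypical : ∀ y, S.IsTypical β y → f y ≤ a) (hall : ∀ y, f y ≤ b) :
    gibbsExp (S.ham β) f ≤ a + b * c := by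
  have hpoint (y : S.I → Bool) : f y ≤ a + b * S.atypical β y := by
    by_cases hy : S.IsTypical β y
    · simpa [atypical, hy] using htypical y hy
    · simpa [atypical, hy] using (hall y).trans (le_add_of_nonneg_left ha)
  refine (gibbsExp_mono hpoint).trans ?_
  rw [gibbsExp_add, gibbsExp_const, gibbsExp_const_mul]
  gcongr

lemma gibbsExp_le_add_mul_of_isTypical {f : (S.I → Bool) → ℝ} {a b c : ℝ}
    (hc : gibbsExp (S.ham β) (S.atypical β) ≤ c / S.u ^ 48) (hc0 : 0 ≤ c) (ha : 0 ≤ a)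
    (hb : 0 ≤ b) (htypical : ∀ y, S.IsTypical β y → f y ≤ a) (hall : ∀ y, f y ≤ S.u ^ 24 * b) :
    gibbsExp (S.ham β) f ≤ a + b * c := by
  have hu := S.u_pos
  refine (S.gibbsExp_le_of_isTypical hc ha (by positivity) htypical hall).trans ?_
  calc a + S.u ^ 24 * b * (c / S.u ^ 48) = a + b * c / S.u ^ 24 := by field_simp
    _ ≤ a + b * c := by
        gcongr
        exact div_le_self (by positivity) (one_le_pow₀ S.one_le_u)

end PlacementSystem

section Sign

lemma abs_le_of_forall_sign_mul_le {x b : ℝ} (h : ∀ ε : ℝ, |ε| = 1 → ε * x ≤ b) : |x| ≤ b :=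
  abs_le'.mpr ⟨by simpa using h 1 abs_one, by simpa using h (-1) (by simp)⟩

lemma sigmoid_sub_le {x y b : ℝ} (hb : 0 ≤ b) (hxy : x - y ≤ b) :
    Real.sigmoid x - Real.sigmoid y ≤ b := by
  rcases le_total x y with hle | hle
  · exact (sub_nonpos.mpr (Real.sigmoid_strictMono.monotone hle)).trans hb
  · refine (le_abs_self _).trans ((abs_sigmoid_sub_le x y).trans ?_)
    rwa [abs_of_nonneg (sub_nonneg.mpr hle)]

lemma mul_sigmoid_sub_le {ε x y b : ℝ} (hε : |ε| = 1) (hb : 0 ≤ b) (hxy : ε * (x - y) ≤ b) :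
    ε * (Real.sigmoid x - Real.sigmoid y) ≤ b := by
  rcases eq_or_eq_neg_of_abs_eq hε with rfl | rfl
  · rw [one_mul] at hxy ⊢
    exact sigmoid_sub_le hb hxy
  · rw [neg_one_mul, neg_sub] at hxy ⊢
    exact sigmoid_sub_le hb hxy

end Sign

section MeanField

lemma dslope_pos_of_unique_zero {g : ℝ → ℝ} (hg : Differentiable ℝ g) {a b p : ℝ}
    (hp : p ∈ Set.Icc a b) (hgp : g p = 0) (huniq : ∀ x ∈ Set.Icc a b, g x = 0 → x = p)
    (hderiv : 0 < deriv g p) {x : ℝ} (hx : x ∈ Set.Icc a b) : 0 < dslope g p x := by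
  have hcont : ContinuousOn (dslope g p) (Set.Icc a b) :=
    ((continuousOn_dslope Filter.univ_mem).mpr ⟨hg.continuous.continuousOn, hg p⟩).mono
      (Set.subset_univ _)
  rw [← dslope_same] at hderiv
  by_contra! hle
  obtain ⟨z, hz, hz0⟩ := isPreconnected_Icc.intermediate_value hx hp hcont ⟨hle, hderiv.le⟩
  have hgz : g z = 0 := by
    simpa only [hz0, smul_zero, hgp, sub_zero, eq_comm] using sub_smul_dslope g p z
  exact hderiv.ne' (huniq z hz hgz ▸ hz0)

lemma exists_mul_sq_le_of_unique_fixedPoint {f : ℝ → ℝ} (hf : Differentiable ℝ f) {a b p : ℝ}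
    (hp : p ∈ Set.Icc a b) (hfix : f p = p) (huniq : ∀ q ∈ Set.Icc a b, f q = q → q = p)
    (hderiv : deriv f p < 1) :
    ∃ c : ℝ, 0 < c ∧ ∀ x ∈ Set.Icc a b, c * (x - p) ^ 2 ≤ (x - p) * (x - f x) := by
  set g : ℝ → ℝ := fun x => x - f x
  have hgd : Differentiable ℝ g := differentiable_id.sub hf
  have hgp : g p = 0 := sub_eq_zero.mpr hfix.symm
  have hpos : ∀ x ∈ Set.Icc a b, 0 < dslope g p x := by
    refine fun x => dslope_pos_of_unique_zero hgd hp hgp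
      (fun q hq hgq => huniq q hq (sub_eq_zero.mp hgq).symm) ?_
    rw [HasDerivAt.deriv (f := g) ((hasDerivAt_id p).sub (hf p).hasDerivAt)]
    exact sub_pos.mpr hderiv
  have hcont : ContinuousOn (dslope g p) (Set.Icc a b) :=
    ((continuousOn_dslope Filter.univ_mem).mpr ⟨hgd.continuous.continuousOn, hgd p⟩).mono
      (Set.subset_univ _)
  obtain ⟨z, hz, hmin⟩ := isCompact_Icc.exists_isMinOn ⟨p, hp⟩ hcont
  refine ⟨dslope g p z, hpos z hz, fun x hx => ?_⟩
  calc dslope g p z * (x - p) ^ 2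
      ≤ dslope g p x * (x - p) ^ 2 := mul_le_mul_of_nonneg_right (hmin hx) (sq_nonneg _)
    _ = (x - p) * ((x - p) • dslope g p x) := by rw [smul_eq_mul]; ring
    _ = (x - p) * (x - f x) := by rw [sub_smul_dslope, hgp, sub_zero]

variable {J : Type*} [Fintype J] (m : J → ℕ) (β : J → ℝ)

/-- The function `Φ` of the mean-field equation `sigmoid (2 * Φ a) = a`. -/
def meanField (a : ℝ) : ℝ := ∑ j, β j * m j * a ^ (m j - 1)

/-- The derivative of the mean-field function. -/
def meanFieldDeriv (a : ℝ) : ℝ := ∑ j, β j * m j * ((m j - 1 : ℕ) * a ^ (m j - 2))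

/-- `1 - φ' a` at a fixed point `a` of the mean-field map `φ a = sigmoid (2 * Φ a)`. -/
def meanFieldGap (a : ℝ) : ℝ := 1 - 2 * a * (1 - a) * meanFieldDeriv m β a

/-- The subcriticality assumptions, with a quantitative form of the uniqueness of the
fixed point `p`. -/
structure IsSubcritical (p c : ℝ) : Prop where
  ferromagnetic : ∀ j, 2 ≤ m j → 0 ≤ β j
  mem_Ioo : p ∈ Set.Ioo (0 : ℝ) 1
  fixed : Real.sigmoid (2 * meanField m β p) = p
  pos : 0 < c
  repel : ∀ a ∈ Set.Icc (0 : ℝ) 1,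
    c * (a - p) ^ 2 ≤ (a - p) * (a - Real.sigmoid (2 * meanField m β a))
  gap_pos : 0 < meanFieldGap m β p

end MeanField

namespace PlacementSystem

variable {J : Type*} {m : J → ℕ} {K : ℝ≥0} (S : PlacementSystem m K)

lemma div_u_pow_twelve_le {a : ℝ} (ha : 0 ≤ a) : a / S.u ^ 12 ≤ a * S.θ := by
  rw [θ, div_eq_mul_inv]
  gcongr
  exacts [pow_pos S.u_pos 5, S.one_le_u, by norm_num]

lemma count_empty {j : J} (r : Fin (m j)) (t : S.I) (y : S.I → Bool) :
    S.count j r ∅ t y = S.κ j := by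
  simp only [count, mon, prod_empty, rooted_const, mul_one]

lemma abs_kappa_sub_two_le_theta (j : J) : |S.κ j - 2| ≤ K * S.θ :=
  (S.abs_kappa_sub_two_le j).trans (S.div_u_pow_twelve_le K.coe_nonneg)

lemma card_univ_erase {j : J} (r : Fin (m j)) : #(univ.erase r) = m j - 1 := by
  rw [card_erase_of_mem (mem_univ r), card_univ, Fintype.card_fin]

lemma abs_count_erase_sub_le_of_le_one {j : J} (hm : m j ≤ 1) (r : Fin (m j)) (t : S.I)
    (y : S.I → Bool) (a : ℝ) :
    |S.count j r (univ.erase r) t y - 2 * a ^ (m j - 1)| ≤ K * S.θ := by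
  have hm1 : m j - 1 = 0 := Nat.sub_eq_zero_of_le hm
  have herase : univ.erase r = ∅ := by rw [← card_eq_zero, card_univ_erase, hm1]
  rw [herase, count_empty, hm1, pow_zero, mul_one]
  exact S.abs_kappa_sub_two_le_theta j

variable [Fintype J] {β : J → ℝ}

lemma count_insert_sub {j : J} (r : Fin (m j)) {A : Finset (Fin (m j))} {e : Fin (m j)}
    (he : e ∉ A) (t : S.I) (y : S.I → Bool) (a : ℝ) :
    S.count j r (insert e A) t y - S.κ j * a ^ #(insert e A) = S.fluct β j r A e t y
      + (S.rooted j r t fun φ => (S.prob β (S.place j φ e) y - a) * S.mon j A φ y)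
      + a * (S.count j r A t y - S.κ j * a ^ #A) := by
  have hcount : S.count j r (insert e A) t y = S.fluct β j r A e t y
      + (S.rooted j r t fun φ => (S.prob β (S.place j φ e) y - a) * S.mon j A φ y)
      + a * S.count j r A t y := by
    rw [count, count, fluct, ← rooted_const_mul, ← rooted_add, ← rooted_add]
    refine rooted_congr fun φ _ => ?_
    rw [S.mon_insert A φ he]
    ring
  rw [hcount, card_insert_of_notMem he]
  ring

/-- The constant in the mean-field approximation of local fields. -/
def fieldConst (m : J → ℕ) (β : J → ℝ) (K : ℝ≥0) : ℝ :=
  ∑ j, |β j| * m j * (m j * (K + 2) + K)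

lemma fieldConst_nonneg : 0 ≤ fieldConst m β K := sum_nonneg fun j _ => by positivity

section OneSided

variable {ε a δ : ℝ} (hε : |ε| = 1) (ha : a ∈ Set.Icc (0 : ℝ) 1) {y : S.I → Bool}
  (hy : S.IsTypical β y) (hδ : 0 ≤ δ) (hprob : ∀ s, ε * (S.prob β s y - a) ≤ δ)
include hε ha hy hδ hprob

/-- The sign `ε` covers the upper and the lower bound simultaneously. -/
lemma IsTypical.mul_count_sub_le {j : J} {r : Fin (m j)} {A : Finset (Fin (m j))} (hr : r ∉ A)
    (t : S.I) :
    ε * (S.count j r A t y - S.κ j * a ^ #A) ≤ #A * (S.θ + (K + 2) * δ) := by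
  have hθ := S.theta_pos
  induction A using Finset.induction_on with
  | empty => simp [count_empty]
  | insert e A he ih =>
    rw [mem_insert, not_or] at hr
    have hfluct : ε * S.fluct β j r A e t y ≤ S.θ := by
      refine (le_abs_self _).trans ?_
      rw [abs_mul, hε, one_mul]
      exact hy j r A e t (Ne.symm hr.1) hr.2 he
    have hrooted : ε * (S.rooted j r t fun φ => (S.prob β (S.place j φ e) y - a) * S.mon j A φ y)
        ≤ (K + 2) * δ := by
      rw [← rooted_const_mul]
      calc S.rooted j r t (fun φ => ε * ((S.prob β (S.place j φ e) y - a) * S.mon j A φ y))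
          ≤ S.rooted j r t fun _ => δ := by
            refine rooted_mono fun φ => ?_
            rw [← mul_assoc]
            exact (mul_le_mul_of_nonneg_right (hprob _) (S.mon_nonneg A φ y)).trans
              (mul_le_of_le_one_right hδ (S.mon_le_one A φ y))
        _ = S.κ j * δ := S.rooted_const j r t δ
        _ ≤ (K + 2) * δ := by gcongr; exact S.kappa_le j
    have hrec : a * (ε * (S.count j r A t y - S.κ j * a ^ #A)) ≤ #A * (S.θ + (K + 2) * δ) :=
      (mul_le_mul_of_nonneg_left (ih hr.2) ha.1).trans (mul_le_of_le_one_left (by positivity) ha.2)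
    rw [S.count_insert_sub (β := β) r he, card_insert_of_notMem he]
    push_cast
    linarith

lemma IsTypical.mul_count_erase_sub_le {j : J} (r : Fin (m j)) (t : S.I) :
    ε * (S.count j r (univ.erase r) t y - 2 * a ^ (m j - 1))
      ≤ (m j * (K + 2) + K) * (S.θ + δ) := by
  have hθ := S.theta_pos
  have hcount := hy.mul_count_sub_le S hε ha hδ hprob (notMem_erase r univ) t
  have hκ : ε * ((S.κ j - 2) * a ^ (m j - 1)) ≤ K * S.θ := by
    refine (le_abs_self _).trans ?_
    rw [abs_mul, hε, one_mul, abs_mul, abs_of_nonneg (pow_nonneg ha.1 _)]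
    exact (mul_le_of_le_one_right (abs_nonneg _) (pow_le_one₀ ha.1 ha.2)).trans
      (S.abs_kappa_sub_two_le_theta j)
  rw [card_univ_erase] at hcount
  have hle : ((m j - 1 : ℕ) : ℝ) ≤ m j := Nat.cast_le.mpr (Nat.sub_le _ _)
  calc ε * (S.count j r (univ.erase r) t y - 2 * a ^ (m j - 1))
      = ε * (S.count j r (univ.erase r) t y - S.κ j * a ^ (m j - 1))
        + ε * ((S.κ j - 2) * a ^ (m j - 1)) := by ring
    _ ≤ m j * (S.θ + (K + 2) * δ) + K * S.θ := by
        refine add_le_add (hcount.trans ?_) hκ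
        gcongr
    _ ≤ (m j * (K + 2) + K) * (S.θ + δ) := by
        have : 0 ≤ m j * ((K + 1) * S.θ) + K * δ := by positivity
        linarith

lemma IsTypical.mul_field_sub_le (hβ : ∀ j, 2 ≤ m j → 0 ≤ β j) (s : S.I) :
    ε * (S.field β s y - 2 * meanField m β a) ≤ fieldConst m β K * (S.θ + δ) := by
  have hθ := S.theta_pos
  rw [field_eq, meanField, mul_sum, ← sum_sub_distrib, mul_sum, fieldConst, sum_mul]
  refine sum_le_sum fun j _ => ?_
  have hroot (r : Fin (m j)) :
      β j * (ε * (S.count j r (univ.erase r) s y - 2 * a ^ (m j - 1)))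
        ≤ |β j| * ((m j * (K + 2) + K) * (S.θ + δ)) := by
    rcases le_or_gt 0 (β j) with hj | hj
    · rw [abs_of_nonneg hj]
      exact mul_le_mul_of_nonneg_left (hy.mul_count_erase_sub_le S hε ha hδ hprob r s) hj
    · refine (le_abs_self _).trans ?_
      rw [abs_mul, abs_mul, hε, one_mul]
      refine mul_le_mul_of_nonneg_left ((S.abs_count_erase_sub_le_of_le_one
        (Nat.lt_succ_iff.mp (not_le.mp fun h2 => hj.not_ge (hβ j h2))) r s y a).trans ?_)
        (abs_nonneg _)
      exact mul_le_mul (le_add_of_nonneg_left (by positivity)) (le_add_of_nonneg_right hδ) hθ.le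
        (by positivity)
  calc ε * (β j * ∑ r, S.count j r (univ.erase r) s y - 2 * (β j * m j * a ^ (m j - 1)))
      = ∑ r, β j * (ε * (S.count j r (univ.erase r) s y - 2 * a ^ (m j - 1))) := by
        rw [← mul_sum, ← mul_sum, sum_sub_distrib, sum_const, card_univ, Fintype.card_fin,
          nsmul_eq_mul]
        ring
    _ ≤ ∑ _r : Fin (m j), |β j| * ((m j * (K + 2) + K) * (S.θ + δ)) :=
        sum_le_sum fun r _ => hroot r
    _ = |β j| * m j * (m j * (K + 2) + K) * (S.θ + δ) := by
        rw [sum_const, card_univ, Fintype.card_fin, nsmul_eq_mul]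
        ring

end OneSided

lemma IsTypical.mul_prob_sub_le {ε : ℝ} {y : S.I → Bool} (hy : S.IsTypical β y) {p c : ℝ}
    (hs : IsSubcritical m β p c) (hε : |ε| = 1) (s : S.I) :
    ε * (S.prob β s y - p) ≤ fieldConst m β K / c * S.θ := by
  obtain ⟨t, -, ht⟩ := exists_max_image univ (fun s => ε * S.prob β s y) ⟨s, mem_univ s⟩
  set a := S.prob β t y
  have hmem : a ∈ Set.Icc (0 : ℝ) 1 := ⟨S.prob_nonneg β t y, S.prob_le_one β t y⟩
  have hε2 : ε * ε = 1 := by rw [← abs_mul_abs_self, hε, one_mul]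
  have hfield : ε * (S.field β t y - 2 * meanField m β a) ≤ fieldConst m β K * S.θ := by
    simpa only [add_zero] using hy.mul_field_sub_le S hε hmem le_rfl
      (fun s => by linarith [ht s (mem_univ s)]) hs.ferromagnetic t
  have hfix : ε * (a - Real.sigmoid (2 * meanField m β a)) ≤ fieldConst m β K * S.θ := by
    rw [show a = Real.sigmoid (S.field β t y) from rfl] at hfield ⊢
    exact mul_sigmoid_sub_le hε (mul_nonneg fieldConst_nonneg S.theta_pos.le) hfield
  suffices ε * (a - p) ≤ fieldConst m β K / c * S.θ by linarith [ht s (mem_univ s)]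
  rcases le_or_gt (ε * (a - p)) 0 with hle | hlt
  · exact hle.trans (mul_nonneg (div_nonneg fieldConst_nonneg hs.pos.le) S.theta_pos.le)
  rw [div_mul_eq_mul_div, le_div_iff₀ hs.pos]
  refine le_trans (le_of_mul_le_mul_left ?_ hlt) hfix
  calc ε * (a - p) * (ε * (a - p) * c)
      = c * (a - p) ^ 2 * (ε * ε) := by ring
    _ ≤ (a - p) * (a - Real.sigmoid (2 * meanField m β a)) * (ε * ε) := by
        rw [hε2, mul_one, mul_one]
        exact hs.repel a hmem
    _ = ε * (a - p) * (ε * (a - Real.sigmoid (2 * meanField m β a))) := by ring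

end PlacementSystem

section Concentration

open PlacementSystem

variable {J : Type*} [Fintype J] {m : J → ℕ} {β : J → ℝ}

lemma exists_abs_sub_le_of_isTypical {p c : ℝ} (hs : IsSubcritical m β p c) (K : ℝ≥0) :
    ∃ C : ℝ, 0 ≤ C ∧ ∀ (S : PlacementSystem m K) (y : S.I → Bool), S.IsTypical β y →
      (∀ s, |S.prob β s y - p| ≤ C * S.θ) ∧
      (∀ j r A t, r ∉ A → |S.count j r A t y - S.κ j * p ^ #A| ≤ C * S.θ) ∧
      (∀ s, |S.field β s y - 2 * meanField m β p| ≤ C * S.θ) := by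
  have hp : p ∈ Set.Icc (0 : ℝ) 1 := Set.Ioo_subset_Icc_self hs.mem_Ioo
  have hF : 0 ≤ fieldConst m β K := fieldConst_nonneg
  set B := fieldConst m β K / c
  have hB : 0 ≤ B := div_nonneg hF hs.pos.le
  refine ⟨B + (∑ j, (m j : ℝ)) * (1 + (K + 2) * B) + fieldConst m β K * (1 + B), by positivity,
    fun S y hy => ?_⟩
  have hθ := S.theta_pos
  have hδ : 0 ≤ B * S.θ := by positivity
  have hprob {ε : ℝ} (hε : |ε| = 1) (s : S.I) : ε * (S.prob β s y - p) ≤ B * S.θ :=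
    hy.mul_prob_sub_le S hs hε s
  refine ⟨fun s => abs_le_of_forall_sign_mul_le fun ε hε => (hprob hε s).trans ?_,
    fun j r A t hr => abs_le_of_forall_sign_mul_le fun ε hε =>
      (hy.mul_count_sub_le S hε hp hδ (hprob hε) hr t).trans ?_,
    fun s => abs_le_of_forall_sign_mul_le fun ε hε =>
      (hy.mul_field_sub_le S hε hp hδ (hprob hε) hs.ferromagnetic s).trans ?_⟩
  · gcongr
    linarith [show 0 ≤ (∑ j, (m j : ℝ)) * (1 + (K + 2) * B) + fieldConst m β K * (1 + B) by
      positivity]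
  · have hcard : (#A : ℝ) ≤ ∑ j, (m j : ℝ) := by
      refine le_trans ?_ (single_le_sum (f := fun j => (m j : ℝ)) (fun _ _ => Nat.cast_nonneg _)
        (mem_univ j))
      simpa only [Fintype.card_fin] using Nat.cast_le (α := ℝ).mpr (card_le_univ A)
    calc #A * (S.θ + (K + 2) * (B * S.θ))
        ≤ (∑ j, (m j : ℝ)) * (S.θ + (K + 2) * (B * S.θ)) := by gcongr
      _ = (∑ j, (m j : ℝ)) * (1 + (K + 2) * B) * S.θ := by ring
      _ ≤ _ := by
        gcongr
        linarith [show 0 ≤ B + fieldConst m β K * (1 + B) by positivity]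
  · calc fieldConst m β K * (S.θ + B * S.θ) = fieldConst m β K * (1 + B) * S.θ := by ring
      _ ≤ _ := by
        gcongr
        linarith [show 0 ≤ B + (∑ j, (m j : ℝ)) * (1 + (K + 2) * B) by positivity]

end Concentration

section Negligible

variable {J : Type*} [Fintype J] {m : J → ℕ} {K : ℝ≥0}

/-- The function `V` splits into a part of small second moment and a part that is of moderate size
and has small discrete derivatives. -/
def SplitBound (β : J → ℝ) (S : PlacementSystem m K) (C : ℝ) (V : (S.I → Bool) → ℝ) : Prop :=
  ∃ V₁ V₂ : (S.I → Bool) → ℝ, V = V₁ + V₂ ∧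
    gibbsExp (S.ham β) (fun y => V₁ y ^ 2) ≤ C * S.u ^ 18 ∧
    (∀ y, |V₂ y| ≤ C * S.u ^ 14) ∧ ∀ s y, |cubeDiff s V₂ y| ≤ C * S.θ

variable {β : J → ℝ}

section SplitBound

variable {S : PlacementSystem m K} {V V' : (S.I → Bool) → ℝ} {C C' : ℝ}

lemma SplitBound.add (hV : SplitBound β S C V) (hV' : SplitBound β S C' V') :
    SplitBound β S (2 * (C + C')) (V + V') := by
  obtain ⟨V₁, V₂, rfl, hsq, hbdd, hdiff⟩ := hV
  obtain ⟨V₁', V₂', rfl, hsq', hbdd', hdiff'⟩ := hV'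
  refine ⟨V₁ + V₁', V₂ + V₂', add_add_add_comm _ _ _ _, ?_, fun y => ?_, fun s y => ?_⟩
  · refine (gibbsExp_add_sq_le V₁ V₁').trans ?_
    linarith
  · have h0 := (abs_nonneg _).trans (hbdd y)
    have h0' := (abs_nonneg _).trans (hbdd' y)
    rw [Pi.add_apply]
    linarith [abs_add_le (V₂ y) (V₂' y), hbdd y, hbdd' y]
  · have h0 := (abs_nonneg _).trans (hdiff s y)
    have h0' := (abs_nonneg _).trans (hdiff' s y)
    have hadd : cubeDiff s (V₂ + V₂') y = cubeDiff s V₂ y + cubeDiff s V₂' y :=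
      cubeDiff_add s V₂ V₂' y
    rw [hadd]
    linarith [abs_add_le (cubeDiff s V₂ y) (cubeDiff s V₂' y), hdiff s y, hdiff' s y]

lemma SplitBound.const_mul (hV : SplitBound β S C V) (a : ℝ) :
    SplitBound β S ((|a| + a ^ 2) * C) (fun y => a * V y) := by
  obtain ⟨V₁, V₂, rfl, hsq, hbdd, hdiff⟩ := hV
  have hle : |a| ≤ |a| + a ^ 2 := le_add_of_nonneg_right (sq_nonneg a)
  refine ⟨fun y => a * V₁ y, fun y => a * V₂ y, funext fun y => mul_add _ _ _, ?_, fun y => ?_,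
    fun s y => ?_⟩
  · simp only [mul_pow]
    rw [gibbsExp_const_mul, mul_assoc]
    exact mul_le_mul (le_add_of_nonneg_left (abs_nonneg a)) hsq
      (gibbsExp_nonneg fun y => sq_nonneg _) (by positivity)
  · rw [abs_mul, mul_assoc]
    exact mul_le_mul hle (hbdd y) (abs_nonneg _) (by positivity)
  · rw [cubeDiff_const_mul, abs_mul, mul_assoc]
    exact mul_le_mul hle (hdiff s y) (abs_nonneg _) (by positivity)

lemma splitBound_of_smooth (hC : 0 ≤ C) (hbdd : ∀ y, |V y| ≤ C * S.u ^ 14)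
    (hdiff : ∀ s y, |cubeDiff s V y| ≤ C * S.θ) : SplitBound β S C V := by
  have := S.u_pos
  refine ⟨0, V, (zero_add V).symm, ?_, hbdd, hdiff⟩
  simp only [Pi.zero_apply, ne_eq, OfNat.ofNat_ne_zero, not_false_eq_true, zero_pow,
    gibbsExp_const]
  positivity

lemma splitBound_of_sq (hC : 0 ≤ C) (hsq : gibbsExp (S.ham β) (fun y => V y ^ 2) ≤ C * S.u ^ 18) :
    SplitBound β S C V := by
  have := S.u_pos
  have := S.theta_pos
  refine ⟨V, 0, (add_zero V).symm, hsq, fun y => ?_, fun s y => ?_⟩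
  · rw [Pi.zero_apply, abs_zero]
    positivity
  · rw [cubeDiff, Pi.zero_apply, Pi.zero_apply, sub_self, abs_zero]
    positivity

end SplitBound

/-- A function defined for all placement systems satisfies `SplitBound` uniformly. -/
def Negligible (β : J → ℝ) (V : ∀ S : PlacementSystem m K, (S.I → Bool) → ℝ) : Prop :=
  ∃ C : ℝ, 0 ≤ C ∧ ∀ S : PlacementSystem m K, SplitBound β S C (V S)

variable {V V' : ∀ S : PlacementSystem m K, (S.I → Bool) → ℝ}

lemma Negligible.congr (hV : Negligible β V) (hVV' : ∀ S y, V' S y = V S y) : Negligible β V' := by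
  rwa [show V' = V from funext fun S => funext (hVV' S)]

lemma Negligible.add (hV : Negligible β V) (hV' : Negligible β V') :
    Negligible β fun S y => V S y + V' S y := by
  obtain ⟨C, hC, hV⟩ := hV
  obtain ⟨C', hC', hV'⟩ := hV'
  exact ⟨2 * (C + C'), by positivity, fun S => (hV S).add (hV' S)⟩

lemma Negligible.const_mul (hV : Negligible β V) (a : ℝ) :
    Negligible β fun S y => a * V S y := by
  obtain ⟨C, hC, hV⟩ := hV
  exact ⟨(|a| + a ^ 2) * C, by positivity, fun S => (hV S).const_mul a⟩

lemma negligible_zero : Negligible β fun (S : PlacementSystem m K) (_ : S.I → Bool) => 0 :=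
  ⟨0, le_rfl, fun _ => splitBound_of_smooth le_rfl (fun _ => by simp) fun _ _ => by simp [cubeDiff]⟩

lemma Negligible.sum {ι : Type*} (A : Finset ι)
    {V : ι → ∀ S : PlacementSystem m K, (S.I → Bool) → ℝ} (hV : ∀ i ∈ A, Negligible β (V i)) :
    Negligible β fun S y => ∑ i ∈ A, V i S y := by
  classical
  induction A using Finset.induction_on with
  | empty => exact negligible_zero
  | insert i A hi ih =>
    exact ((hV i (mem_insert_self i A)).add
      (ih fun i' hi' => hV i' (mem_insert_of_mem hi'))).congr fun S y => sum_insert hi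

namespace PlacementSystem

variable (S : PlacementSystem m K)

lemma gibbsExp_sq_le_of_isTypical_eq_zero {F : (S.I → Bool) → ℝ} {B c : ℝ}
    (hc : gibbsExp (S.ham β) (S.atypical β) ≤ c / S.u ^ 48)
    (hzero : ∀ y, S.IsTypical β y → F y = 0) (hF : ∀ y, |F y| ≤ S.u ^ 24 * B) :
    gibbsExp (S.ham β) (fun y => F y ^ 2) ≤ B ^ 2 * c := by
  have hu := S.u_pos
  calc gibbsExp (S.ham β) (fun y => F y ^ 2)
      ≤ 0 + (S.u ^ 24 * B) ^ 2 * (c / S.u ^ 48) := by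
        refine S.gibbsExp_le_of_isTypical hc le_rfl (sq_nonneg _) (fun y hy => ?_) fun y => ?_
        · rw [hzero y hy, zero_pow two_ne_zero]
        · exact sq_le_sq' (neg_le_of_abs_le (hF y)) (le_of_abs_le (hF y))
    _ = B ^ 2 * c := by field_simp; ring

end PlacementSystem

/-- Since atypical configurations have probability `O(u ^ (-48))`, a sum of bounded terms may be
replaced by any sum that agrees with it on typical configurations. -/
lemma negligible_of_truncation {C₁ C₂ C₃ : ℝ}
    {f g : ∀ S : PlacementSystem m K, S.I → (S.I → Bool) → ℝ}
    (hC₁ : 0 ≤ C₁) (hC₂ : 0 ≤ C₂) (hC₃ : 0 ≤ C₃)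
    (hfg : ∀ S y, S.IsTypical β y → ∀ t, f S t y = g S t y) (hf : ∀ S t y, |f S t y| ≤ C₁)
    (hg : ∀ S t y, |g S t y| ≤ C₂ * S.θ ^ 2)
    (hdiff : ∀ S s y, ∑ t, |cubeDiff s (g S t) y| ≤ C₃ * S.θ) :
    Negligible β fun S y => ∑ t, f S t y := by
  obtain ⟨c, hc0, hc⟩ := exists_gibbsExp_atypical_le m β K
  have hrare : Negligible β fun (S : PlacementSystem m K) y => ∑ t, (f S t y - g S t y) := by
    refine ⟨(C₁ + C₂) ^ 2 * c, by positivity, fun S => splitBound_of_sq (by positivity) ?_⟩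
    refine (S.gibbsExp_sq_le_of_isTypical_eq_zero (B := C₁ + C₂) (hc S)
      (fun y hy => sum_eq_zero fun t _ => sub_eq_zero.mpr (hfg S y hy t)) fun y =>
      S.abs_sum_le_u_pow_mul (by positivity) fun t => ?_).trans
      (le_mul_of_one_le_right (by positivity) (one_le_pow₀ S.one_le_u))
    refine (abs_sub _ _).trans (add_le_add (hf S t y) ((hg S t y).trans ?_))
    exact mul_le_of_le_one_right hC₂ (pow_le_one₀ S.theta_pos.le S.theta_le_one)
  have hsmooth : Negligible β fun (S : PlacementSystem m K) y => ∑ t, g S t y := by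
    refine ⟨C₂ + C₃, by positivity, fun S => splitBound_of_smooth (by positivity)
      (fun y => ?_) fun s y => ?_⟩
    · have hu := S.u_pos
      calc |∑ t, g S t y| ≤ S.u ^ 24 * (C₂ * S.θ ^ 2) :=
            S.abs_sum_le_u_pow_mul (by positivity) fun t => hg S t y
        _ = C₂ * S.u ^ 14 := by
            rw [PlacementSystem.θ]
            field_simp
        _ ≤ (C₂ + C₃) * S.u ^ 14 := by
            gcongr
            exact le_add_of_nonneg_right hC₃
    · rw [cubeDiff_sum]
      refine (abs_sum_le_sum_abs _ _).trans ((hdiff S s y).trans ?_)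
      exact mul_le_mul_of_nonneg_right (le_add_of_nonneg_left hC₂) S.theta_pos.le
  refine (hrare.add hsmooth).congr fun S y => ?_
  rw [sum_sub_distrib, sub_add_cancel]

end Negligible

section Clamp

/-- Truncation of a real number to `[-r, r]`. -/
def clamp (r x : ℝ) : ℝ := max (-r) (min r x)

lemma abs_clamp_le {r : ℝ} (hr : 0 ≤ r) (x : ℝ) : |clamp r x| ≤ r :=
  abs_le.mpr ⟨le_max_left _ _, max_le (neg_le_self hr) (min_le_left _ _)⟩

lemma clamp_eq_self {r x : ℝ} (hx : |x| ≤ r) : clamp r x = x := by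
  rw [clamp, min_eq_right (le_of_abs_le hx), max_eq_right (neg_le_of_abs_le hx)]

lemma abs_clamp_sub_clamp_le (r x y : ℝ) : |clamp r x - clamp r y| ≤ |x - y| := by
  have hmax := abs_max_sub_max_le_max (-r) (min r x) (-r) (min r y)
  have hmin := abs_min_sub_min_le_max r x r y
  rw [sub_self, abs_zero, max_eq_right (abs_nonneg (min r x - min r y))] at hmax
  rw [sub_self, abs_zero, max_eq_right (abs_nonneg (x - y))] at hmin
  exact hmax.trans hmin

end Clamp

section SigmoidRem

/-- The error of the linear approximation of the sigmoid function at `d`. -/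
def sigmoidRem (d x : ℝ) : ℝ :=
  Real.sigmoid (d + x) - Real.sigmoid d - Real.sigmoid d * (1 - Real.sigmoid d) * x

lemma hasDerivAt_sigmoidRem (d z : ℝ) :
    HasDerivAt (sigmoidRem d) (Real.sigmoid (d + z) * (1 - Real.sigmoid (d + z))
      - Real.sigmoid d * (1 - Real.sigmoid d)) z := by
  have hsigmoid := (Real.hasDerivAt_sigmoid (d + z)).comp_const_add d z
  have hlinear := (hasDerivAt_id z).const_mul (Real.sigmoid d * (1 - Real.sigmoid d))
  rw [mul_one] at hlinear
  exact (hsigmoid.sub_const (Real.sigmoid d)).sub hlinear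

lemma abs_sigmoid_mul_sub_le (x y : ℝ) :
    |Real.sigmoid x * (1 - Real.sigmoid x) - Real.sigmoid y * (1 - Real.sigmoid y)|
      ≤ |x - y| := by
  rw [show Real.sigmoid x * (1 - Real.sigmoid x) - Real.sigmoid y * (1 - Real.sigmoid y)
    = (Real.sigmoid x - Real.sigmoid y) * (1 - Real.sigmoid x - Real.sigmoid y) by ring, abs_mul]
  refine (mul_le_of_le_one_right (abs_nonneg _) ?_).trans (abs_sigmoid_sub_le x y)
  rw [abs_le]
  constructor <;> linarith [Real.sigmoid_nonneg x, Real.sigmoid_le_one x,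
    Real.sigmoid_nonneg y, Real.sigmoid_le_one y]

lemma abs_sigmoidRem_sub_le {d r x y : ℝ} (hx : |x| ≤ r) (hy : |y| ≤ r) :
    |sigmoidRem d x - sigmoidRem d y| ≤ r * |x - y| :=
  Convex.norm_image_sub_le_of_norm_hasDerivWithin_le (s := Set.Icc (-r) r)
    (fun z _ => (hasDerivAt_sigmoidRem d z).hasDerivWithinAt)
    (fun z hz => (abs_sigmoid_mul_sub_le (d + z) d).trans
      (by rw [add_sub_cancel_left]; exact abs_le.mpr hz))
    (convex_Icc _ _) (abs_le.mp hy) (abs_le.mp hx)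

lemma abs_sigmoidRem_le (d x : ℝ) : |sigmoidRem d x| ≤ x ^ 2 := by
  simpa [sigmoidRem, ← sq] using
    abs_sigmoidRem_sub_le (d := d) (le_refl |x|) (abs_zero.trans_le (abs_nonneg x))

end SigmoidRem

section ClampCubeDiff

variable {I : Type*} [DecidableEq I]

lemma cubeDiff_sub_const (s : I) (f : (I → Bool) → ℝ) (a : ℝ) (y : I → Bool) :
    cubeDiff s (fun y => f y - a) y = cubeDiff s f y :=
  sub_sub_sub_cancel_right _ _ a

lemma abs_cubeDiff_clamp_le (s : I) (r : ℝ) (f : (I → Bool) → ℝ) (y : I → Bool) :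
    |cubeDiff s (fun y => clamp r (f y)) y| ≤ |cubeDiff s f y| :=
  abs_clamp_sub_clamp_le r _ _

lemma abs_cubeDiff_clamp_mul_clamp_le {r : ℝ} (hr : 0 ≤ r) (s : I) (f g : (I → Bool) → ℝ)
    (y : I → Bool) :
    |cubeDiff s (fun y => clamp r (f y) * clamp r (g y)) y|
      ≤ r * (|cubeDiff s f y| + |cubeDiff s g y|) := by
  rw [cubeDiff_mul, mul_add, mul_comm r |cubeDiff s f y|]
  refine (abs_add_le _ _).trans ?_
  rw [abs_mul, abs_mul]
  exact add_le_add
    (mul_le_mul (abs_cubeDiff_clamp_le s r f y) (abs_clamp_le hr _) (abs_nonneg _) (abs_nonneg _))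
    (mul_le_mul (abs_clamp_le hr _) (abs_cubeDiff_clamp_le s r g y) (abs_nonneg _) hr)

end ClampCubeDiff

namespace PlacementSystem

variable {J : Type*} {m : J → ℕ} {K : ℝ≥0} (S : PlacementSystem m K)

/-- The deviation of a rooted count from its mean-field value at density `p`. -/
def dev (p : ℝ) (j : J) (r : Fin (m j)) (A : Finset (Fin (m j))) (t : S.I) (y : S.I → Bool) : ℝ :=
  S.count j r A t y - S.κ j * p ^ #A

lemma cubeDiff_dev (p : ℝ) (j : J) (r : Fin (m j)) (A : Finset (Fin (m j))) (t s : S.I)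
    (y : S.I → Bool) : cubeDiff s (S.dev p j r A t) y = cubeDiff s (S.count j r A t) y :=
  cubeDiff_sub_const s _ _ y

lemma sum_dev_eq_sum_dev (p : ℝ) (j : J) (r e : Fin (m j)) (A : Finset (Fin (m j)))
    (y : S.I → Bool) :
    ∑ t, S.dev p j r A t y = ∑ t, S.dev p j e A t y := by
  simp only [dev, sum_sub_distrib, count, sum_rooted]

lemma indepOf_dev (p : ℝ) {j : J} {r : Fin (m j)} {A : Finset (Fin (m j))} (hr : r ∉ A)
    (t : S.I) : IndepOf t (S.dev p j r A t) := fun y b => by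
  rw [dev, dev, S.indepOf_count hr t y b]

lemma abs_dev_le {p : ℝ} (hp : p ∈ Set.Icc (0 : ℝ) 1) (j : J) (r : Fin (m j))
    (A : Finset (Fin (m j))) (t : S.I) (y : S.I → Bool) : |S.dev p j r A t y| ≤ K + 2 := by
  have hconst (a : ℝ) : S.rooted j r t (fun _ => a) = S.κ j * a := S.rooted_const j r t a
  refine (abs_sub_le_of_nonneg_of_le (n := S.κ j * 1) ?_ ?_ ?_ ?_).trans ?_
  · rw [← mul_zero (S.κ j), ← hconst]
    exact rooted_mono fun φ => S.mon_nonneg A φ y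
  · rw [← hconst]
    exact rooted_mono fun φ => S.mon_le_one A φ y
  · rw [← hconst, ← mul_zero (S.κ j), ← hconst]
    exact rooted_mono fun _ => pow_nonneg hp.1 _
  · rw [← hconst, ← hconst]
    exact rooted_mono fun _ => pow_le_one₀ hp.1 hp.2
  · rw [mul_one]
    exact S.kappa_le j

lemma abs_dev_update_le {p : ℝ} {j : J} {e : Fin (m j)} {A : Finset (Fin (m j))} (he : e ∉ A)
    {x : ℝ} {t : S.I} {y : S.I → Bool} (hdev : |S.dev p j e A t y| ≤ x) (s : S.I) :
    |S.dev p j e A t (Function.update y s false)| ≤ x + m j * K * S.θ := by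
  have hupdate := abs_sub_update_false_le s (S.dev p j e A t) y
  rw [cubeDiff_dev, abs_sub_comm] at hupdate
  have htri := abs_sub_abs_le_abs_sub (S.dev p j e A t (Function.update y s false))
    (S.dev p j e A t y)
  linarith [S.abs_cubeDiff_count_le he t s y,
    S.div_u_pow_twelve_le (a := m j * K) (by positivity)]

variable [Fintype J] (β : J → ℝ)

/-- A bound, uniform in the placement system, for the local fields. -/
def fieldBound (m : J → ℕ) (β : J → ℝ) (K : ℝ≥0) : ℝ := ∑ j, |β j| * (m j * (K + 2))

lemma abs_field_le (s : S.I) (y : S.I → Bool) : |S.field β s y| ≤ fieldBound m β K := by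
  rw [field_eq]
  refine (abs_sum_le_sum_abs _ _).trans (sum_le_sum fun j _ => ?_)
  rw [abs_mul]
  refine mul_le_mul_of_nonneg_left ?_ (abs_nonneg _)
  calc |∑ r, S.count j r (univ.erase r) s y|
      ≤ ∑ r, |S.count j r (univ.erase r) s y| := abs_sum_le_sum_abs _ _
    _ ≤ ∑ _r : Fin (m j), (K + 2 : ℝ) := sum_le_sum fun r _ =>
        (abs_rooted_le fun φ => S.abs_mon_le_one _ φ y).trans
          ((mul_one _).trans_le (S.kappa_le j))
    _ = m j * (K + 2) := by rw [sum_const, card_fin, nsmul_eq_mul]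

lemma abs_fluct_le (j : J) (r : Fin (m j)) (A : Finset (Fin (m j))) (e : Fin (m j)) (t : S.I)
    (y : S.I → Bool) : |S.fluct β j r A e t y| ≤ K + 2 := by
  refine (abs_rooted_le (a := 1) fun φ => ?_).trans ((mul_one _).trans_le (S.kappa_le j))
  rw [abs_mul]
  exact mul_le_one₀ (S.abs_mon_le_one A φ y) (abs_nonneg _) (abs_coord_sub_condProb_le _ _ _ _ _)

lemma abs_prob_sub_le_one {p : ℝ} (hp : p ∈ Set.Icc (0 : ℝ) 1) (t : S.I) (y : S.I → Bool) :
    |S.prob β t y - p| ≤ 1 :=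
  abs_sub_le_of_nonneg_of_le (S.prob_nonneg β t y) (S.prob_le_one β t y) hp.1 hp.2

section DevSum

/-- The sum of the edge fluctuations weighted by the deviations of the rooted counts. -/
def devSum (p : ℝ) (j : J) (e : Fin (m j)) (A : Finset (Fin (m j))) (y : S.I → Bool) : ℝ :=
  ∑ t, S.dev p j e A t y * (coord t y - S.prob β t y)

variable {S} {β} {p : ℝ} {j : J} {e : Fin (m j)} {A : Finset (Fin (m j))}

lemma sum_coord_sub_prob_mul_cubeDiff_count (s : S.I) (y : S.I → Bool) :
    ∑ t, (coord t y - S.prob β t y) * cubeDiff s (S.count j e A t) y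
      = ∑ a ∈ A, S.fluct β j a (A.erase a) e s y := by
  simp only [cubeDiff_count, mul_sum]
  rw [sum_comm]
  refine sum_congr rfl fun a _ => ?_
  simp only [S.birooted_comm j e a _ s]
  rw [S.sum_mul_birooted j a e s (fun t => coord t y - S.prob β t y), fluct]
  simp only [mul_comm]

lemma cubeDiff_devSum (he : e ∉ A) {s : S.I} {y : S.I → Bool} (hs : coord s y = 1) :
    cubeDiff s (S.devSum β p j e A) y
      = ∑ a ∈ A, S.fluct β j a (A.erase a) e s y + S.dev p j e A s y
        - ∑ t, S.dev p j e A t (Function.update y s false) * cubeDiff s (S.prob β t) y := by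
  have hterm (t : S.I) : cubeDiff s (fun y => S.dev p j e A t y * (coord t y - S.prob β t y)) y
      = (coord t y - S.prob β t y) * cubeDiff s (S.count j e A t) y
        + S.dev p j e A t (Function.update y s false) * cubeDiff s (coord t) y
        - S.dev p j e A t (Function.update y s false) * cubeDiff s (S.prob β t) y := by
    rw [cubeDiff_mul, cubeDiff_dev, update_eq_self_of_coord_eq_one hs,
      cubeDiff_sub s (coord t) (S.prob β t)]
    ring
  have hself : ∑ t, S.dev p j e A t (Function.update y s false) * cubeDiff s (coord t) y
      = S.dev p j e A s y := by
    rw [sum_eq_single_of_mem s (mem_univ s) fun t _ hts => by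
      rw [cubeDiff_coord_of_ne hts, mul_zero]]
    rw [cubeDiff_coord_self, mul_one, S.indepOf_dev p he s y false]
  unfold devSum
  rw [cubeDiff_sum]
  simp only [hterm]
  rw [sum_sub_distrib, sum_add_distrib, sum_coord_sub_prob_mul_cubeDiff_count, hself]

lemma abs_coord_mul_cubeDiff_devSum_le (he : e ∉ A) {s : S.I} {y : S.I → Bool} {w x x' : ℝ}
    (hw : 0 ≤ w) (hfluct : ∀ a ∈ A, |S.fluct β j a (A.erase a) e s y| ≤ w)
    (hdev : |S.dev p j e A s y| ≤ x)
    (hdev' : ∀ t, |S.dev p j e A t (Function.update y s false)| ≤ x') :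
    |coord s y * cubeDiff s (S.devSum β p j e A) y|
      ≤ m j * w + x + x' * influenceBound m β K := by
  have hx : 0 ≤ x := (abs_nonneg _).trans hdev
  have hx' : 0 ≤ x' := (abs_nonneg _).trans (hdev' s)
  rcases coord_eq_zero_or_one s y with hs | hs
  · have := influenceBound_nonneg (m := m) (K := K) β
    rw [hs, zero_mul, abs_zero]
    positivity
  rw [hs, one_mul, cubeDiff_devSum he hs]
  refine (abs_sub _ _).trans (add_le_add ((abs_add_le _ _).trans (add_le_add ?_ hdev)) ?_)
  · calc |∑ a ∈ A, S.fluct β j a (A.erase a) e s y|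
        ≤ ∑ a ∈ A, |S.fluct β j a (A.erase a) e s y| := abs_sum_le_sum_abs _ _
      _ ≤ #A * w := by
        rw [← nsmul_eq_mul]
        exact sum_le_card_nsmul _ _ _ hfluct
      _ ≤ m j * w := by
        gcongr
        exact (card_le_univ A).trans_eq (Fintype.card_fin _)
  · refine (abs_sum_le_sum_abs _ _).trans ?_
    calc ∑ t, |S.dev p j e A t (Function.update y s false) * cubeDiff s (S.prob β t) y|
        ≤ ∑ t, x' * |cubeDiff s (S.prob β t) y| := sum_le_sum fun t _ => by
          rw [abs_mul]
          exact mul_le_mul_of_nonneg_right (hdev' t) (abs_nonneg _)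
      _ ≤ x' * influenceBound m β K := by
        rw [← mul_sum]
        exact mul_le_mul_of_nonneg_left (S.sum_abs_cubeDiff_prob_le β s y) hx'

lemma gibbsExp_devSum_sq (he : e ∉ A) :
    gibbsExp (S.ham β) (fun y => S.devSum β p j e A y ^ 2)
      = gibbsExp (S.ham β) fun y => ∑ s, S.dev p j e A s y * (1 - S.prob β s y)
          * (coord s y * cubeDiff s (S.devSum β p j e A) y) := by
  have hsq (y : S.I → Bool) : S.devSum β p j e A y ^ 2
      = ∑ s, S.dev p j e A s y * (coord s y - condProb (S.ham β) s y)
          * S.devSum β p j e A y := by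
    rw [sq, ← sum_mul]
    rfl
  simp only [hsq]
  rw [gibbsExp_sum, gibbsExp_sum]
  exact sum_congr rfl fun s _ => gibbsExp_integration_by_parts _ s (S.indepOf_dev p he s) _

lemma sum_dev_mul_cubeDiff_devSum_le {y : S.I → Bool} {x z : ℝ} (hx : 0 ≤ x) (hz : 0 ≤ z)
    (hdev : ∀ s, |S.dev p j e A s y| ≤ x)
    (hdiff : ∀ s, |coord s y * cubeDiff s (S.devSum β p j e A) y| ≤ z) :
    ∑ s, S.dev p j e A s y * (1 - S.prob β s y)
      * (coord s y * cubeDiff s (S.devSum β p j e A) y) ≤ S.u ^ 24 * (x * z) := by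
  refine (le_abs_self _).trans (S.abs_sum_le_u_pow_mul (mul_nonneg hx hz) fun s => ?_)
  rw [abs_mul, abs_mul]
  refine mul_le_mul ?_ (hdiff s) (abs_nonneg _) hx
  refine (mul_le_of_le_one_right (abs_nonneg _) ?_).trans (hdev s)
  rw [abs_of_nonneg (sub_nonneg.mpr (S.prob_le_one β s y))]
  exact sub_le_self _ (S.prob_nonneg β s y)

end DevSum

end PlacementSystem

section NegligibleSums

variable {J : Type*} [Fintype J] {m : J → ℕ} {β : J → ℝ} {p c : ℝ}

open PlacementSystem

lemma negligible_sum_dev_mul_prob_sub (hs : IsSubcritical m β p c) (K : ℝ≥0) (j : J)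
    {e : Fin (m j)} {A : Finset (Fin (m j))} (he : e ∉ A) :
    Negligible β fun (S : PlacementSystem m K) y =>
      ∑ t, S.dev p j e A t y * (S.prob β t y - p) := by
  obtain ⟨C, hC, htyp⟩ := exists_abs_sub_le_of_isTypical hs K
  have hp : p ∈ Set.Icc (0 : ℝ) 1 := Set.Ioo_subset_Icc_self hs.mem_Ioo
  have hinf := influenceBound_nonneg (m := m) (K := K) β
  have hr (S : PlacementSystem m K) : 0 ≤ C * S.θ := mul_nonneg hC S.theta_pos.le
  refine negligible_of_truncation (C₁ := K + 2) (C₂ := C ^ 2)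
    (C₃ := C * (m j * (K + 2) + influenceBound m β K)) (by positivity) (by positivity)
    (by positivity) (g := fun S t y =>
      clamp (C * S.θ) (S.dev p j e A t y) * clamp (C * S.θ) (S.prob β t y - p))
    (fun S y hy t => ?_) (fun S t y => ?_) (fun S t y => ?_) fun S s y => ?_
  · rw [clamp_eq_self ((htyp S y hy).1 t),
      clamp_eq_self (x := S.dev p j e A t y) ((htyp S y hy).2.1 j e A t he)]
  · rw [abs_mul]
    exact (mul_le_of_le_one_right (abs_nonneg _) (S.abs_prob_sub_le_one β hp t y)).trans
      (S.abs_dev_le hp j e A t y)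
  · rw [abs_mul, ← mul_pow, sq]
    exact mul_le_mul (abs_clamp_le (hr S) _) (abs_clamp_le (hr S) _) (abs_nonneg _) (hr S)
  · calc ∑ t, |cubeDiff s (fun y => clamp (C * S.θ) (S.dev p j e A t y)
            * clamp (C * S.θ) (S.prob β t y - p)) y|
        ≤ ∑ t, C * S.θ * (|cubeDiff s (S.count j e A t) y| + |cubeDiff s (S.prob β t) y|) :=
          sum_le_sum fun t _ => by
            rw [← S.cubeDiff_dev p, ← cubeDiff_sub_const s (S.prob β t) p]
            exact abs_cubeDiff_clamp_mul_clamp_le (hr S) s _ _ y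
      _ = C * S.θ * (∑ t, |cubeDiff s (S.count j e A t) y|
            + ∑ t, |cubeDiff s (S.prob β t) y|) := by rw [← mul_sum, sum_add_distrib]
      _ ≤ C * S.θ * (m j * (K + 2) + influenceBound m β K) :=
          mul_le_mul_of_nonneg_left (add_le_add (S.sum_abs_cubeDiff_count_le e A s y)
            (S.sum_abs_cubeDiff_prob_le β s y)) (hr S)
      _ = C * (m j * (K + 2) + influenceBound m β K) * S.θ := mul_right_comm _ _ _

lemma negligible_sum_sigmoidRem (hs : IsSubcritical m β p c) (K : ℝ≥0) :
    Negligible β fun (S : PlacementSystem m K) y =>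
      ∑ t, sigmoidRem (2 * meanField m β p) (S.field β t y - 2 * meanField m β p) := by
  obtain ⟨C, hC, htyp⟩ := exists_abs_sub_le_of_isTypical hs K
  have hinf := influenceBound_nonneg (m := m) (K := K) β
  have hr (S : PlacementSystem m K) : 0 ≤ C * S.θ := mul_nonneg hC S.theta_pos.le
  set d := 2 * meanField m β p
  refine negligible_of_truncation (C₁ := (fieldBound m β K + |d|) ^ 2) (C₂ := C ^ 2)
    (C₃ := C * influenceBound m β K) (by positivity) (by positivity) (by positivity)
    (g := fun S t y => sigmoidRem d (clamp (C * S.θ) (S.field β t y - d)))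
    (fun S y hy t => ?_) (fun S t y => ?_) (fun S t y => ?_) fun S s y => ?_
  · rw [clamp_eq_self ((htyp S y hy).2.2 t)]
  · refine (abs_sigmoidRem_le _ _).trans (sq_le_sq.mpr ?_)
    exact ((abs_sub _ _).trans (add_le_add_left (S.abs_field_le β t y) _)).trans (le_abs_self _)
  · refine (abs_sigmoidRem_le _ _).trans ?_
    rw [← mul_pow]
    exact sq_le_sq.mpr ((abs_clamp_le (hr S) _).trans (le_abs_self _))
  · calc ∑ t, |cubeDiff s (fun y => sigmoidRem d (clamp (C * S.θ) (S.field β t y - d))) y|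
        ≤ ∑ t, C * S.θ * |cubeDiff s (S.field β t) y| := sum_le_sum fun t _ => by
          refine (abs_sigmoidRem_sub_le (abs_clamp_le (hr S) _) (abs_clamp_le (hr S) _)).trans ?_
          rw [← cubeDiff_sub_const s (S.field β t) d]
          exact mul_le_mul_of_nonneg_left
            (abs_cubeDiff_clamp_le s _ (fun y => S.field β t y - d) y) (hr S)
      _ ≤ C * S.θ * influenceBound m β K := by
          rw [← mul_sum]
          exact mul_le_mul_of_nonneg_left (S.sum_abs_cubeDiff_field_le β s y) (hr S)
      _ = C * influenceBound m β K * S.θ := mul_right_comm _ _ _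

/-- By integration by parts the second moment is a sum of terms `dev * cubeDiff devSum`, both
factors of which are `O(θ)` on typical configurations. -/
lemma negligible_devSum (hs : IsSubcritical m β p c) (K : ℝ≥0) (j : J)
    {e : Fin (m j)} {A : Finset (Fin (m j))} (he : e ∉ A) :
    Negligible β fun S : PlacementSystem m K => S.devSum β p j e A := by
  obtain ⟨C, hC, htyp⟩ := exists_abs_sub_le_of_isTypical hs K
  obtain ⟨c', hc0, hc⟩ := exists_gibbsExp_atypical_le m β K
  have hp : p ∈ Set.Icc (0 : ℝ) 1 := Set.Ioo_subset_Icc_self hs.mem_Ioo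
  have hinf := influenceBound_nonneg (m := m) (K := K) β
  set B := influenceBound m β K
  set G := m j + C + (C + m j * K) * B
  set G' := m j * (K + 2) + (K + 2) + (K + 2) * B
  have hG' : 0 ≤ G' := by positivity
  refine ⟨C * G + (K + 2) * G' * c', by positivity, fun S => splitBound_of_sq
    (by positivity) ?_⟩
  have hu := S.u_pos
  have hθ := S.theta_pos
  rw [gibbsExp_devSum_sq he]
  calc _ ≤ S.u ^ 24 * (C * S.θ * (G * S.θ)) + (K + 2) * G' * c' := by
        refine S.gibbsExp_le_add_mul_of_isTypical (hc S) hc0 (by positivity) (by positivity)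
          (fun y hy => ?_) fun y => ?_
        · have hdev (t : S.I) : |S.dev p j e A t y| ≤ C * S.θ := (htyp S y hy).2.1 j e A t he
          refine sum_dev_mul_cubeDiff_devSum_le (by positivity) (by positivity) hdev fun s => ?_
          refine (abs_coord_mul_cubeDiff_devSum_le he hθ.le (fun a ha => hy j a (A.erase a) e s
            (ne_of_mem_of_not_mem ha he).symm (notMem_erase a A) fun h => he (mem_of_mem_erase h))
            (hdev s) fun t => S.abs_dev_update_le he (hdev t) s).trans_eq (by ring)
        · exact sum_dev_mul_cubeDiff_devSum_le (by positivity) hG'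
            (fun s => S.abs_dev_le hp j e A s y) fun s => abs_coord_mul_cubeDiff_devSum_le he
              (by positivity) (fun a _ => S.abs_fluct_le β j a _ e s y)
              (S.abs_dev_le hp j e A s y) fun t => S.abs_dev_le hp j e A t _
    _ = C * G * S.u ^ 14 + (K + 2) * G' * c' := by
        rw [PlacementSystem.θ]
        field_simp
    _ ≤ C * G * S.u ^ 18 + (K + 2) * G' * c' * S.u ^ 18 := by
        exact add_le_add (mul_le_mul_of_nonneg_left (pow_le_pow_right₀ S.one_le_u (by norm_num))
          (by positivity)) (le_mul_of_one_le_right (by positivity) (one_le_pow₀ S.one_le_u))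
    _ = (C * G + (K + 2) * G' * c') * S.u ^ 18 := (add_mul _ _ _).symm

end NegligibleSums

section CentredSum

variable {I : Type*} [Fintype I] {p : ℝ}

/-- The number of ones, centred at its mean-field value. -/
def centredSum (p : ℝ) (y : I → Bool) : ℝ := ∑ t, (coord t y - p)

lemma centredSum_eq (y : I → Bool) : centredSum p y = coordSum y - Fintype.card I * p := by
  rw [centredSum, sum_sub_distrib, sum_const, card_univ, nsmul_eq_mul, coordSum]

lemma abs_centredSum_le (hp : p ∈ Set.Icc (0 : ℝ) 1) (y : I → Bool) :
    |centredSum p y| ≤ Fintype.card I := by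
  refine (abs_sum_le_sum_abs _ _).trans ?_
  rw [← nsmul_one, ← card_univ]
  exact sum_le_card_nsmul _ _ _ fun t _ =>
    abs_sub_le_of_nonneg_of_le (coord_nonneg t y) (coord_le_one t y) hp.1 hp.2

lemma cubeDiff_centredSum [DecidableEq I] (s : I) (y : I → Bool) :
    cubeDiff s (centredSum p) y = 1 := by
  rw [funext centredSum_eq, cubeDiff_sub_const, cubeDiff_coordSum]

end CentredSum

section Linearization

variable {J : Type*} [Fintype J] {m : J → ℕ} {K : ℝ≥0} {β : J → ℝ} {p c : ℝ}

namespace PlacementSystem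

variable (S : PlacementSystem m K)

lemma sum_dev_insert {j : J} (r : Fin (m j)) {e : Fin (m j)} {A : Finset (Fin (m j))}
    (he : e ∉ A) (y : S.I → Bool) :
    ∑ t, S.dev p j r (insert e A) t y
      = S.devSum β p j e A y + ∑ t, S.dev p j e A t y * (S.prob β t y - p)
        + p * ∑ t, S.dev p j r A t y + S.κ j * p ^ #A * centredSum p y := by
  have hdev : ∑ t, S.dev p j r (insert e A) t y
      = ∑ t, (coord t y * S.count j e A t y - S.κ j * p ^ (#A + 1)) := by
    simp only [dev, sum_sub_distrib]
    rw [S.sum_count_insert r he, card_insert_of_notMem he]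
  rw [hdev, S.sum_dev_eq_sum_dev p j r e, devSum, centredSum]
  simp only [mul_sum, ← sum_add_distrib]
  refine sum_congr rfl fun t _ => ?_
  rw [dev]
  ring

lemma sum_field_sub (y : S.I → Bool) :
    ∑ t, (S.field β t y - 2 * meanField m β p)
      = ∑ j, β j * ∑ r : Fin (m j), ∑ t,
          (S.count j r (univ.erase r) t y - 2 * p ^ (m j - 1)) := by
  have hfield (t : S.I) : S.field β t y - 2 * meanField m β p
      = ∑ j, β j * ∑ r : Fin (m j), (S.count j r (univ.erase r) t y - 2 * p ^ (m j - 1)) := by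
    rw [S.field_eq, meanField, mul_sum, ← sum_sub_distrib]
    refine sum_congr rfl fun j _ => ?_
    rw [sum_sub_distrib, sum_const, card_fin, nsmul_eq_mul]
    ring
  simp only [hfield]
  rw [sum_comm]
  refine sum_congr rfl fun j _ => ?_
  rw [← mul_sum, sum_comm]

end PlacementSystem

open PlacementSystem

lemma negligible_sum_dev_sub (hs : IsSubcritical m β p c) (K : ℝ≥0) (j : J) (r : Fin (m j))
    (A : Finset (Fin (m j))) :
    Negligible β fun (S : PlacementSystem m K) y =>
      ∑ t, S.dev p j r A t y - S.κ j * (#A * p ^ (#A - 1)) * centredSum p y := by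
  induction A using Finset.induction_on with
  | empty =>
    refine negligible_zero.congr fun S y => ?_
    simp only [dev, S.count_empty, card_empty, pow_zero, mul_one, sub_self, sum_const_zero,
      Nat.cast_zero, zero_mul, mul_zero]
  | insert e A he ih =>
    refine (((negligible_devSum hs K j he).add
      (negligible_sum_dev_mul_prob_sub hs K j he)).add (ih.const_mul p)).congr fun S y => ?_
    have hpow : (#A : ℝ) * p ^ #A = p * (#A * p ^ (#A - 1)) := by
      rcases Nat.eq_zero_or_pos #A with h0 | hpos
      · simp only [h0, Nat.cast_zero, zero_mul, mul_zero]
      · rw [mul_left_comm, mul_pow_sub_one hpos.ne']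
    rw [S.sum_dev_insert (β := β) r he, card_insert_of_notMem he, Nat.add_sub_cancel,
      Nat.cast_add_one]
    linear_combination (-S.κ j * centredSum p y) * hpow

lemma negligible_kappa_sub_two_mul (β : J → ℝ) (hp : p ∈ Set.Icc (0 : ℝ) 1) (K : ℝ≥0) (j : J)
    (a b : ℝ) :
    Negligible β fun (S : PlacementSystem m K) y =>
      (S.κ j - 2) * (a * centredSum p y + Fintype.card S.I * b) := by
  refine ⟨K * (|a| + |b|), by positivity, fun S =>
    splitBound_of_smooth (by positivity) (fun y => ?_) fun s y => ?_⟩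
  · have hu := S.u_pos
    have hcard := S.card_le
    have hsum : |a * centredSum p y + Fintype.card S.I * b| ≤ |a| * S.u ^ 24 + S.u ^ 24 * |b| := by
      refine (abs_add_le _ _).trans ?_
      rw [abs_mul, abs_mul, Nat.abs_cast]
      gcongr
      exact (abs_centredSum_le hp y).trans hcard
    calc |(S.κ j - 2) * (a * centredSum p y + Fintype.card S.I * b)|
        ≤ K / S.u ^ 12 * (|a| * S.u ^ 24 + S.u ^ 24 * |b|) := by
          rw [abs_mul]
          exact mul_le_mul (S.abs_kappa_sub_two_le j) hsum (abs_nonneg _) (by positivity)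
      _ = K * (|a| + |b|) * S.u ^ 12 := by field_simp
      _ ≤ K * (|a| + |b|) * S.u ^ 14 := by
          gcongr
          exacts [S.one_le_u, by norm_num]
  · have hdiff : cubeDiff s (fun y => (S.κ j - 2) * (a * centredSum p y + Fintype.card S.I * b)) y
        = (S.κ j - 2) * a := by
      have hcentred := cubeDiff_centredSum (p := p) s y
      rw [cubeDiff] at hcentred ⊢
      linear_combination (S.κ j - 2) * a * hcentred
    have hθ := S.theta_pos
    calc |cubeDiff s (fun y => (S.κ j - 2) * (a * centredSum p y + Fintype.card S.I * b)) y|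
        ≤ K * S.θ * |a| := by
          rw [hdiff, abs_mul]
          exact mul_le_mul_of_nonneg_right (S.abs_kappa_sub_two_le_theta j) (abs_nonneg a)
      _ ≤ K * S.θ * (|a| + |b|) := by
          gcongr
          exact le_add_of_nonneg_right (abs_nonneg b)
      _ = K * (|a| + |b|) * S.θ := mul_right_comm _ _ _

lemma negligible_sum_count_sub (hs : IsSubcritical m β p c) (K : ℝ≥0) (j : J) (r : Fin (m j)) :
    Negligible β fun (S : PlacementSystem m K) y =>
      ∑ t, (S.count j r (univ.erase r) t y - 2 * p ^ (m j - 1))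
        - 2 * ((m j - 1 : ℕ) * p ^ (m j - 2)) * centredSum p y := by
  have hp : p ∈ Set.Icc (0 : ℝ) 1 := Set.Ioo_subset_Icc_self hs.mem_Ioo
  refine ((negligible_sum_dev_sub hs K j r (univ.erase r)).add
    (negligible_kappa_sub_two_mul β hp K j ((m j - 1 : ℕ) * p ^ (m j - 2)) (p ^ (m j - 1)))).congr
    fun S y => ?_
  simp only [dev, card_univ_erase, Nat.sub_sub, sum_sub_distrib, sum_const, card_univ,
    nsmul_eq_mul]
  ring

/-- The sum of the conditionally centred coordinates. -/
def PlacementSystem.fluctSum (β : J → ℝ) (S : PlacementSystem m K) (y : S.I → Bool) : ℝ :=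
  ∑ t, (coord t y - S.prob β t y)

/-- The deviation from linearity of the sum of the conditionally centred coordinates. -/
def PlacementSystem.remainder (β : J → ℝ) (p : ℝ) (S : PlacementSystem m K) (y : S.I → Bool) : ℝ :=
  meanFieldGap m β p * centredSum p y - S.fluctSum β y

theorem negligible_remainder (hs : IsSubcritical m β p c) (K : ℝ≥0) :
    Negligible β fun S : PlacementSystem m K => S.remainder β p := by
  refine ((negligible_sum_sigmoidRem hs K).add ((Negligible.sum univ fun j _ =>
    (Negligible.sum univ fun r _ => negligible_sum_count_sub hs K j r).const_mul
      (β j)).const_mul (p * (1 - p)))).congr fun S y => ?_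
  have hlinear : ∑ j, β j * ∑ r : Fin (m j),
        (∑ t, (S.count j r (univ.erase r) t y - 2 * p ^ (m j - 1))
          - 2 * ((m j - 1 : ℕ) * p ^ (m j - 2)) * centredSum p y)
      = ∑ t, (S.field β t y - 2 * meanField m β p)
        - 2 * meanFieldDeriv m β p * centredSum p y := by
    rw [S.sum_field_sub, meanFieldDeriv, mul_sum, sum_mul, ← sum_sub_distrib]
    refine sum_congr rfl fun j _ => ?_
    rw [sum_sub_distrib, sum_const, card_fin, nsmul_eq_mul]
    ring
  have htaylor : ∑ t, (S.prob β t y - p)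
      = ∑ t, sigmoidRem (2 * meanField m β p) (S.field β t y - 2 * meanField m β p)
        + p * (1 - p) * ∑ t, (S.field β t y - 2 * meanField m β p) := by
    rw [mul_sum, ← sum_add_distrib]
    refine sum_congr rfl fun t _ => ?_
    rw [sigmoidRem, hs.fixed, add_sub_cancel, ← S.prob_eq_sigmoid_field]
    ring
  have hsplit : centredSum p y = S.fluctSum β y + ∑ t, (S.prob β t y - p) := by
    rw [centredSum, fluctSum, ← sum_add_distrib]
    exact sum_congr rfl fun t _ => (sub_add_sub_cancel _ _ _).symm
  rw [hlinear, remainder, meanFieldGap]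
  linear_combination hsplit + htaylor

end Linearization

section Moments

variable {J : Type*} [Fintype J] {m : J → ℕ} {K : ℝ≥0} {β : J → ℝ} {p c : ℝ}

namespace PlacementSystem

variable (S : PlacementSystem m K)

/-- The sum of the conditional variances, with one factor replaced by the coordinate. -/
def condVariance (β : J → ℝ) (y : S.I → Bool) : ℝ := ∑ t, coord t y * (1 - S.prob β t y)

lemma abs_cubeDiff_fluctSum_le (s : S.I) (y : S.I → Bool) :
    |cubeDiff s (S.fluctSum β) y| ≤ 1 + influenceBound m β K := by
  have hdiff : cubeDiff s (S.fluctSum β) y = 1 - ∑ t, cubeDiff s (S.prob β t) y := by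
    have hsplit : S.fluctSum β = fun y => coordSum y - ∑ t, S.prob β t y :=
      funext fun y => sum_sub_distrib _ _
    rw [hsplit, cubeDiff_sub, cubeDiff_coordSum, cubeDiff_sum]
  rw [hdiff]
  refine (abs_sub _ _).trans (add_le_add abs_one.le ?_)
  exact (abs_sum_le_sum_abs _ _).trans (S.sum_abs_cubeDiff_prob_le β s y)

lemma gibbsExp_fluctSum_mul (f : (S.I → Bool) → ℝ) :
    gibbsExp (S.ham β) (fun y => S.fluctSum β y * f y)
      = gibbsExp (S.ham β) fun y =>
          ∑ s, (1 - S.prob β s y) * (coord s y * cubeDiff s f y) := by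
  simp only [fluctSum, sum_mul, gibbsExp_sum]
  refine sum_congr rfl fun s _ => ?_
  have hparts := gibbsExp_integration_by_parts (S.ham β) s (w := fun _ => 1) (fun _ _ => rfl) f
  simp only [one_mul] at hparts
  exact hparts

lemma gibbsExp_fluctSum : gibbsExp (S.ham β) (S.fluctSum β) = 0 := by
  simpa only [mul_one, cubeDiff, sub_self, mul_zero, sum_const_zero, gibbsExp_const] using
    S.gibbsExp_fluctSum_mul (β := β) fun _ => 1

lemma gibbsExp_fluctSum_sq_le :
    gibbsExp (S.ham β) (fun y => S.fluctSum β y ^ 2)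
      ≤ S.u ^ 24 * (1 + influenceBound m β K) := by
  have hinf := influenceBound_nonneg (m := m) (K := K) β
  simp only [sq]
  rw [S.gibbsExp_fluctSum_mul]
  refine gibbsExp_le_of_le fun y => (le_abs_self _).trans
    (S.abs_sum_le_u_pow_mul (by positivity) fun s => ?_)
  rw [abs_mul, abs_mul, abs_of_nonneg (sub_nonneg.mpr (S.prob_le_one β s y)),
    abs_of_nonneg (coord_nonneg s y)]
  exact (mul_le_of_le_one_left (mul_nonneg (coord_nonneg s y) (abs_nonneg _))
    (sub_le_self _ (S.prob_nonneg β s y))).trans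
    ((mul_le_of_le_one_left (abs_nonneg _) (coord_le_one s y)).trans
      (S.abs_cubeDiff_fluctSum_le s y))

lemma condVariance_sub (y : S.I → Bool) :
    S.condVariance β y - Fintype.card S.I * (p * (1 - p))
      = (1 - p) * centredSum p y - ∑ t, coord t y * (S.prob β t y - p) := by
  rw [centredSum, condVariance, mul_sum, ← sum_sub_distrib, ← nsmul_eq_mul, ← card_univ,
    ← sum_const, ← sum_sub_distrib]
  exact sum_congr rfl fun t _ => by ring

lemma abs_condVariance_sub_le (hp : p ∈ Set.Icc (0 : ℝ) 1) (y : S.I → Bool) :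
    |S.condVariance β y - Fintype.card S.I * (p * (1 - p))|
      ≤ |centredSum p y| + ∑ t, |S.prob β t y - p| := by
  rw [condVariance_sub]
  refine (abs_sub _ _).trans (add_le_add ?_ ?_)
  · rw [abs_mul, abs_of_nonneg (sub_nonneg.mpr hp.2)]
    exact mul_le_of_le_one_left (abs_nonneg _) (sub_le_self _ hp.1)
  · refine (abs_sum_le_sum_abs _ _).trans (sum_le_sum fun t _ => ?_)
    rw [abs_mul, abs_of_nonneg (coord_nonneg t y)]
    exact mul_le_of_le_one_left (abs_nonneg _) (coord_le_one t y)

end PlacementSystem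

open PlacementSystem

lemma SplitBound.gibbsExp_sq_le {S : PlacementSystem m K} {V : (S.I → Bool) → ℝ} {C : ℝ}
    (hC : 0 ≤ C) (hV : SplitBound β S C V) :
    gibbsExp (S.ham β) (fun y => V y ^ 2) ≤ (2 * C + 2 * C ^ 2) * S.u ^ 28 := by
  obtain ⟨V₁, V₂, rfl, hsq, hbdd, -⟩ := hV
  have hV₁ : gibbsExp (S.ham β) (fun y => V₁ y ^ 2) ≤ C * S.u ^ 28 :=
    hsq.trans (mul_le_mul_of_nonneg_left (pow_le_pow_right₀ S.one_le_u (by norm_num)) hC)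
  have hV₂ : gibbsExp (S.ham β) (fun y => V₂ y ^ 2) ≤ (C * S.u ^ 14) ^ 2 :=
    gibbsExp_le_of_le fun y => sq_le_sq' (neg_le_of_abs_le (hbdd y)) (le_of_abs_le (hbdd y))
  refine (gibbsExp_add_sq_le V₁ V₂).trans ((add_le_add (mul_le_mul_of_nonneg_left hV₁ two_pos.le)
    (mul_le_mul_of_nonneg_left hV₂ two_pos.le)).trans_eq (by ring))

lemma exists_gibbsExp_centredSum_sq_le (hs : IsSubcritical m β p c) (K : ℝ≥0) :
    ∃ C : ℝ, 0 ≤ C ∧ ∀ S : PlacementSystem m K,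
      gibbsExp (S.ham β) (fun y => centredSum p y ^ 2) ≤ C * S.u ^ 28 := by
  obtain ⟨C, hC, hrem⟩ := negligible_remainder hs K
  have hgap := hs.gap_pos
  set a := meanFieldGap m β p with ha
  have hinf := influenceBound_nonneg (m := m) (K := K) β
  refine ⟨(2 * (2 * C + 2 * C ^ 2) + 2 * (1 + influenceBound m β K)) / a ^ 2, by positivity,
    fun S => ?_⟩
  have hfluct : gibbsExp (S.ham β) (fun y => S.fluctSum β y ^ 2)
      ≤ (1 + influenceBound m β K) * S.u ^ 28 := by
    rw [mul_comm]
    exact S.gibbsExp_fluctSum_sq_le.trans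
      (mul_le_mul_of_nonneg_right (pow_le_pow_right₀ S.one_le_u (by norm_num)) (by positivity))
  have hsum : gibbsExp (S.ham β) (fun y => centredSum p y ^ 2) * a ^ 2
      = gibbsExp (S.ham β) (fun y => (S.remainder β p y + S.fluctSum β y) ^ 2) := by
    rw [mul_comm, ← gibbsExp_const_mul]
    simp only [remainder, ← ha, sub_add_cancel, mul_pow]
  rw [div_mul_eq_mul_div, le_div_iff₀ (by positivity), hsum]
  refine (gibbsExp_add_sq_le _ _).trans ?_
  linarith [(hrem S).gibbsExp_sq_le hC]

/-- The part of the remainder with small discrete derivatives is compared with the number of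
ones, whose variance is known to be `O(u ^ 28)`. -/
lemma exists_gibbsExp_abs_remainder_sub_le (hs : IsSubcritical m β p c) (K : ℝ≥0) :
    ∃ C : ℝ, 0 ≤ C ∧ ∀ S : PlacementSystem m K,
      gibbsExp (S.ham β) (fun y => |S.remainder β p y
        - gibbsExp (S.ham β) (S.remainder β p)|) ≤ C * S.u ^ 9 := by
  obtain ⟨C, hC, hrem⟩ := negligible_remainder hs K
  obtain ⟨C', hC', hcentred⟩ := exists_gibbsExp_centredSum_sq_le hs K
  refine ⟨2 * C + 2 * (C ^ 2 * C') + 1, by positivity, fun S => ?_⟩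
  obtain ⟨V₁, V₂, hV, hV₁, -, hV₂⟩ : SplitBound β S C (S.remainder β p) := hrem S
  have hu := S.u_pos
  have hvar₁ : gibbsVar (S.ham β) V₁ ≤ C * S.u ^ 18 := (gibbsVar_le_gibbsExp_sq _ V₁).trans hV₁
  have hvar₂ : gibbsVar (S.ham β) V₂ ≤ C ^ 2 * C' * S.u ^ 18 := by
    have hcoord : gibbsVar (S.ham β) coordSum ≤ C' * S.u ^ 28 := by
      refine (gibbsVar_le_gibbsExp_sq_sub _ _ (Fintype.card S.I * p)).trans ?_
      simp only [← centredSum_eq]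
      exact hcentred S
    calc gibbsVar (S.ham β) V₂ ≤ (C * S.θ) ^ 2 * gibbsVar (S.ham β) coordSum :=
          gibbsVar_le_sq_mul_gibbsVar_coordSum (S.supermodular_ham β hs.ferromagnetic) hV₂
      _ ≤ (C * S.θ) ^ 2 * (C' * S.u ^ 28) := mul_le_mul_of_nonneg_left hcoord (sq_nonneg _)
      _ = C ^ 2 * C' * S.u ^ 18 := by
          rw [PlacementSystem.θ]
          field_simp
  refine gibbsExp_abs_le_of_sq_le (by positivity) ?_
  calc gibbsVar (S.ham β) (S.remainder β p)
      ≤ 2 * gibbsVar (S.ham β) V₁ + 2 * gibbsVar (S.ham β) V₂ := by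
        rw [hV]
        exact gibbsVar_add_le V₁ V₂
    _ ≤ (2 * C + 2 * (C ^ 2 * C') + 1) * S.u ^ 18 := by
        linarith [pow_nonneg hu.le 18]
    _ ≤ (2 * C + 2 * (C ^ 2 * C') + 1) ^ 2 * S.u ^ 18 := by
        gcongr
        exact le_self_pow₀ (le_add_of_nonneg_left (by positivity)) two_ne_zero
    _ = ((2 * C + 2 * (C ^ 2 * C') + 1) * S.u ^ 9) ^ 2 := by ring

lemma exists_gibbsExp_sum_abs_prob_sub_le (hs : IsSubcritical m β p c) (K : ℝ≥0) :
    ∃ C : ℝ, 0 ≤ C ∧ ∀ S : PlacementSystem m K,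
      gibbsExp (S.ham β) (fun y => ∑ t, |S.prob β t y - p|) ≤ C * S.u ^ 19 := by
  obtain ⟨C, hC, htyp⟩ := exists_abs_sub_le_of_isTypical hs K
  obtain ⟨c', hc0, hc⟩ := exists_gibbsExp_atypical_le m β K
  refine ⟨C + c', by positivity, fun S => ?_⟩
  have hu := S.u_pos
  have hθ := S.theta_pos
  have hsum {b : ℝ} (hb : 0 ≤ b) {y : S.I → Bool} (hy : ∀ t, |S.prob β t y - p| ≤ b) :
      ∑ t, |S.prob β t y - p| ≤ S.u ^ 24 * b :=
    (le_abs_self _).trans (S.abs_sum_le_u_pow_mul hb fun t => (abs_abs _).trans_le (hy t))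
  calc gibbsExp (S.ham β) (fun y => ∑ t, |S.prob β t y - p|)
      ≤ S.u ^ 24 * (C * S.θ) + 1 * c' :=
        S.gibbsExp_le_add_mul_of_isTypical (hc S) hc0 (by positivity) zero_le_one
          (fun y hy => hsum (by positivity) (htyp S y hy).1)
          fun y => hsum zero_le_one
            fun t => S.abs_prob_sub_le_one β (Set.Ioo_subset_Icc_self hs.mem_Ioo) t y
    _ = C * S.u ^ 19 + c' := by
        rw [PlacementSystem.θ]
        field_simp
    _ ≤ C * S.u ^ 19 + c' * S.u ^ 19 := by
        gcongr
        exact le_mul_of_one_le_right hc0 (one_le_pow₀ S.one_le_u)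
    _ = (C + c') * S.u ^ 19 := (add_mul _ _ _).symm

lemma exists_gibbsExp_abs_condVariance_sub_le (hs : IsSubcritical m β p c) (K : ℝ≥0) :
    ∃ C : ℝ, 0 ≤ C ∧ ∀ S : PlacementSystem m K,
      gibbsExp (S.ham β) (fun y => |S.condVariance β y - Fintype.card S.I * (p * (1 - p))|)
        ≤ C * S.u ^ 19 := by
  obtain ⟨C, hC, hprob⟩ := exists_gibbsExp_sum_abs_prob_sub_le hs K
  obtain ⟨C', hC', hcentred⟩ := exists_gibbsExp_centredSum_sq_le hs K
  refine ⟨(C' + 1) + C, by positivity, fun S => ?_⟩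
  have hu := S.u_pos
  have habs : gibbsExp (S.ham β) (fun y => |centredSum p y|) ≤ (C' + 1) * S.u ^ 14 := by
    refine gibbsExp_abs_le_of_sq_le (by positivity) ((hcentred S).trans ?_)
    calc C' * S.u ^ 28 ≤ (C' + 1) ^ 2 * S.u ^ 28 := by
          gcongr
          nlinarith
      _ = ((C' + 1) * S.u ^ 14) ^ 2 := by ring
  calc gibbsExp (S.ham β) (fun y => |S.condVariance β y - Fintype.card S.I * (p * (1 - p))|)
      ≤ gibbsExp (S.ham β) (fun y => |centredSum p y| + ∑ t, |S.prob β t y - p|) :=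
        gibbsExp_mono fun y => S.abs_condVariance_sub_le (Set.Ioo_subset_Icc_self hs.mem_Ioo) y
    _ ≤ (C' + 1) * S.u ^ 14 + C * S.u ^ 19 := by
        rw [gibbsExp_add]
        exact add_le_add habs (hprob S)
    _ ≤ (C' + 1) * S.u ^ 19 + C * S.u ^ 19 := by
        gcongr
        exacts [S.one_le_u, by norm_num]
    _ = (C' + 1 + C) * S.u ^ 19 := (add_mul _ _ _).symm

end Moments

section GaussWeight

/-- The unnormalized standard Gaussian density. -/
def gaussWeight (x : ℝ) : ℝ := exp (-(1 / 2) * x ^ 2)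

lemma gaussWeight_pos (x : ℝ) : 0 < gaussWeight x := exp_pos _

lemma gaussWeight_neg (x : ℝ) : gaussWeight (-x) = gaussWeight x := by
  rw [gaussWeight, neg_sq, gaussWeight]

lemma hasDerivAt_gaussWeight (x : ℝ) : HasDerivAt gaussWeight (-x * gaussWeight x) x := by
  convert! ((hasDerivAt_pow 2 x).const_mul (-(1 / 2) : ℝ)).exp using 1
  rw [gaussWeight]
  push_cast
  ring

lemma continuous_gaussWeight : Continuous gaussWeight :=
  continuous_iff_continuousAt.mpr fun x => (hasDerivAt_gaussWeight x).continuousAt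

lemma integrable_gaussWeight : Integrable gaussWeight :=
  integrable_exp_neg_mul_sq one_half_pos

lemma integrable_mul_gaussWeight : Integrable fun x => x * gaussWeight x :=
  integrable_mul_exp_neg_mul_sq one_half_pos

lemma integrable_sq_mul_gaussWeight : Integrable fun x => x ^ 2 * gaussWeight x := by
  simpa only [rpow_two, gaussWeight] using
    integrable_rpow_mul_exp_neg_mul_sq (s := 2) one_half_pos (by norm_num)

lemma integral_Ioi_mul_gaussWeight (x : ℝ) :
    ∫ t in Set.Ioi x, t * gaussWeight t = gaussWeight x := by
  have hderiv (t : ℝ) : HasDerivAt (fun t => -gaussWeight t) (t * gaussWeight t) t := by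
    convert! (hasDerivAt_gaussWeight t).neg using 1
    ring
  rw [integral_Ioi_of_hasDerivAt_of_tendsto' (fun t _ => hderiv t)
    integrable_mul_gaussWeight.integrableOn (tendsto_zero_of_hasDerivAt_of_integrableOn_Ioi
      (a := x) (fun t _ => hderiv t) integrable_mul_gaussWeight.integrableOn
      integrable_gaussWeight.neg.integrableOn), zero_sub, neg_neg]

lemma integral_Ioi_sq_mul_gaussWeight (x : ℝ) :
    ∫ t in Set.Ioi x, t ^ 2 * gaussWeight t
      = x * gaussWeight x + ∫ t in Set.Ioi x, gaussWeight t := by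
  have hderiv (t : ℝ) : HasDerivAt (fun t => -(t * gaussWeight t))
      (t ^ 2 * gaussWeight t - gaussWeight t) t := by
    convert! ((hasDerivAt_id t).mul (hasDerivAt_gaussWeight t)).neg using 1
    simp only [id]
    ring
  have hint : Integrable fun t => t ^ 2 * gaussWeight t - gaussWeight t :=
    integrable_sq_mul_gaussWeight.sub integrable_gaussWeight
  have heq := integral_Ioi_of_hasDerivAt_of_tendsto' (a := x) (fun t _ => hderiv t)
    hint.integrableOn (tendsto_zero_of_hasDerivAt_of_integrableOn_Ioi (a := x) (fun t _ => hderiv t)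
      hint.integrableOn integrable_mul_gaussWeight.neg.integrableOn)
  rw [integral_sub integrable_sq_mul_gaussWeight.integrableOn
    integrable_gaussWeight.integrableOn] at heq
  linarith

lemma integral_Ioi_sub_mul_gaussWeight (x : ℝ) :
    ∫ t in Set.Ioi x, (t - x) * gaussWeight t
      = gaussWeight x - x * ∫ t in Set.Ioi x, gaussWeight t := by
  simp only [sub_mul]
  rw [integral_sub integrable_mul_gaussWeight.integrableOn
    (integrable_gaussWeight.const_mul x).integrableOn, integral_Ioi_mul_gaussWeight,
    integral_const_mul]

lemma integral_Ioi_gaussWeight_le {x : ℝ} (hx : 1 ≤ x) :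
    ∫ t in Set.Ioi x, gaussWeight t ≤ gaussWeight x := by
  rw [← integral_Ioi_mul_gaussWeight]
  exact setIntegral_mono_on integrable_gaussWeight.integrableOn
    integrable_mul_gaussWeight.integrableOn measurableSet_Ioi fun t ht =>
      le_mul_of_one_le_left (gaussWeight_pos t).le (hx.trans (le_of_lt ht))

lemma mul_gaussWeight_le_integral_Ioi (x : ℝ) :
    x * gaussWeight x ≤ (1 + x ^ 2) * ∫ t in Set.Ioi x, gaussWeight t := by
  have hexpand (t : ℝ) : (t - x) ^ 2 * gaussWeight t
      = t ^ 2 * gaussWeight t - (2 * x) * (t * gaussWeight t) + x ^ 2 * gaussWeight t := by ring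
  have hint : Integrable fun t => t ^ 2 * gaussWeight t - (2 * x) * (t * gaussWeight t) :=
    integrable_sq_mul_gaussWeight.sub (integrable_mul_gaussWeight.const_mul _)
  have hnonneg : 0 ≤ ∫ t in Set.Ioi x, (t - x) ^ 2 * gaussWeight t :=
    integral_nonneg fun t => mul_nonneg (sq_nonneg _) (gaussWeight_pos t).le
  simp only [hexpand] at hnonneg
  rw [integral_add hint.integrableOn (integrable_gaussWeight.const_mul _).integrableOn,
    integral_sub integrable_sq_mul_gaussWeight.integrableOn
      (integrable_mul_gaussWeight.const_mul _).integrableOn, integral_const_mul,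
    integral_const_mul, integral_Ioi_mul_gaussWeight, integral_Ioi_sq_mul_gaussWeight] at hnonneg
  linarith

lemma integral_Ioi_sub_mul_gaussWeight_le (x : ℝ) (hx : 0 ≤ x) :
    ∫ t in Set.Ioi x, (t - x) * gaussWeight t ≤ gaussWeight x / (1 + x ^ 2) := by
  rw [integral_Ioi_sub_mul_gaussWeight, le_div_iff₀ (by positivity)]
  linarith [mul_le_mul_of_nonneg_left (mul_gaussWeight_le_integral_Ioi x) hx]

variable {h : ℝ → ℝ} {M : ℝ}

lemma integrable_mul_gaussWeight_of_abs_le (hc : Continuous h) (hM : ∀ x, |h x| ≤ |x| + M) :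
    Integrable fun t => h t * gaussWeight t := by
  refine (integrable_mul_gaussWeight.abs.add (integrable_gaussWeight.const_mul M)).mono'
    (hc.mul continuous_gaussWeight).aestronglyMeasurable (ae_of_all _ fun t => ?_)
  simp only [Pi.add_apply, norm_eq_abs, abs_mul, abs_of_pos (gaussWeight_pos t), ← add_mul]
  exact mul_le_mul_of_nonneg_right (hM t) (gaussWeight_pos t).le

lemma abs_integral_Ioi_sub_mul_gaussWeight_le (hL : LipschitzWith 1 h)
    (hint : Integrable fun t => h t * gaussWeight t) (x : ℝ) :
    |∫ t in Set.Ioi x, (h t - h x) * gaussWeight t|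
      ≤ ∫ t in Set.Ioi x, (t - x) * gaussWeight t := by
  have hleft : Integrable fun t => (h t - h x) * gaussWeight t := by
    simp only [sub_mul]
    exact hint.sub (integrable_gaussWeight.const_mul (h x))
  have hright : Integrable fun t => (t - x) * gaussWeight t := by
    simp only [sub_mul]
    exact integrable_mul_gaussWeight.sub (integrable_gaussWeight.const_mul x)
  refine abs_integral_le_integral_abs.trans (setIntegral_mono_on hleft.abs.integrableOn
    hright.integrableOn measurableSet_Ioi fun t ht => ?_)
  rw [abs_mul, abs_of_pos (gaussWeight_pos t)]
  refine mul_le_mul_of_nonneg_right ?_ (gaussWeight_pos t).le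
  simpa [dist_eq, abs_of_pos (sub_pos.mpr (Set.mem_Ioi.mp ht))] using hL.dist_le_mul t x

end GaussWeight

section SteinEquation

/-- The tail integral of `h` against the Gaussian density, divided by that density. When `h` has
Gaussian mean zero, `-steinTail h` is the bounded solution of the Stein equation
`f' x = x * f x + h x`. -/
def steinTail (h : ℝ → ℝ) (x : ℝ) : ℝ :=
  (∫ t in Set.Ioi x, h t * gaussWeight t) / gaussWeight x

variable {h : ℝ → ℝ} {M : ℝ}

lemma abs_steinTail_le_of_one_le (hc : Continuous h) (hM : ∀ x, |h x| ≤ |x| + M) {x : ℝ}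
    (hx : 1 ≤ x) : |steinTail h x| ≤ 1 + M := by
  have hM0 : 0 ≤ M := by simpa using (abs_nonneg (h 0)).trans (hM 0)
  have hint := integrable_mul_gaussWeight_of_abs_le hc hM
  rw [steinTail, abs_div, abs_of_pos (gaussWeight_pos x), div_le_iff₀ (gaussWeight_pos x)]
  calc |∫ t in Set.Ioi x, h t * gaussWeight t|
      ≤ ∫ t in Set.Ioi x, |h t * gaussWeight t| := abs_integral_le_integral_abs
    _ ≤ ∫ t in Set.Ioi x, (t * gaussWeight t + M * gaussWeight t) := by
        refine setIntegral_mono_on hint.abs.integrableOn (integrable_mul_gaussWeight.add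
          (integrable_gaussWeight.const_mul M)).integrableOn measurableSet_Ioi fun t ht => ?_
        have ht0 : 0 ≤ t := zero_le_one.trans (hx.trans (le_of_lt ht))
        rw [abs_mul, abs_of_pos (gaussWeight_pos t), ← add_mul]
        exact mul_le_mul_of_nonneg_right ((hM t).trans_eq (by rw [abs_of_nonneg ht0]))
          (gaussWeight_pos t).le
    _ = gaussWeight x + M * ∫ t in Set.Ioi x, gaussWeight t := by
        rw [integral_add integrable_mul_gaussWeight.integrableOn
          (integrable_gaussWeight.const_mul M).integrableOn, integral_Ioi_mul_gaussWeight,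
          integral_const_mul]
    _ ≤ gaussWeight x + M * gaussWeight x := by
        gcongr
        exact integral_Ioi_gaussWeight_le hx
    _ = (1 + M) * gaussWeight x := (one_add_mul _ _).symm

lemma sub_mul_steinTail_eq (hint : Integrable fun t => h t * gaussWeight t) (x : ℝ) :
    h x - x * steinTail h x
      = (h x * (∫ t in Set.Ioi x, (t - x) * gaussWeight t)
          - x * ∫ t in Set.Ioi x, (h t - h x) * gaussWeight t) / gaussWeight x := by
  have hsub : ∫ t in Set.Ioi x, (h t - h x) * gaussWeight t
      = (∫ t in Set.Ioi x, h t * gaussWeight t) - h x * ∫ t in Set.Ioi x, gaussWeight t := by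
    simp only [sub_mul]
    rw [integral_sub hint.integrableOn (integrable_gaussWeight.const_mul _).integrableOn,
      integral_const_mul]
  have hw := (gaussWeight_pos x).ne'
  rw [hsub, integral_Ioi_sub_mul_gaussWeight, steinTail]
  field_simp
  ring

lemma abs_mul_sub_mul_steinTail_le_of_one_le (hL : LipschitzWith 1 h)
    (hM : ∀ x, |h x| ≤ |x| + M) {x : ℝ} (hx : 1 ≤ x) :
    |x * (h x - x * steinTail h x)| ≤ 2 + M := by
  have hM0 : 0 ≤ M := by simpa using (abs_nonneg (h 0)).trans (hM 0)
  have hint := integrable_mul_gaussWeight_of_abs_le hL.continuous hM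
  have hw := gaussWeight_pos x
  have hx0 : 0 ≤ x := zero_le_one.trans hx
  have hD := integral_Ioi_sub_mul_gaussWeight_le x hx0
  have hE := abs_integral_Ioi_sub_mul_gaussWeight_le hL hint x
  rw [sub_mul_steinTail_eq hint]
  set D := ∫ t in Set.Ioi x, (t - x) * gaussWeight t
  set E := ∫ t in Set.Ioi x, (h t - h x) * gaussWeight t
  have hD0 : 0 ≤ D := (abs_nonneg E).trans hE
  have hnum : |h x * D - x * E| ≤ (2 * x + M) * D :=
    calc |h x * D - x * E| ≤ |h x| * D + x * |E| := by
          refine (abs_sub _ _).trans_eq ?_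
          rw [abs_mul, abs_mul, abs_of_nonneg hD0, abs_of_nonneg hx0]
      _ ≤ (x + M) * D + x * D := by
          gcongr
          exact (hM x).trans_eq (by rw [abs_of_nonneg hx0])
      _ = (2 * x + M) * D := by ring
  calc |x * ((h x * D - x * E) / gaussWeight x)|
      = x * |h x * D - x * E| / gaussWeight x := by
        rw [abs_mul, abs_div, abs_of_nonneg hx0, abs_of_pos hw, mul_div_assoc]
    _ ≤ x * ((2 * x + M) * (gaussWeight x / (1 + x ^ 2))) / gaussWeight x := by
        gcongr
        exact hnum.trans (by gcongr)
    _ = x * (2 * x + M) / (1 + x ^ 2) := by field_simp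
    _ ≤ 2 + M := by
        rw [div_le_iff₀ (by positivity)]
        nlinarith [mul_nonneg hM0 (mul_nonneg hx0 (sub_nonneg.mpr hx))]

lemma hasDerivAt_steinTail (hc : Continuous h) (hint : Integrable fun t => h t * gaussWeight t)
    (x : ℝ) : HasDerivAt (steinTail h) (x * steinTail h x - h x) x := by
  have hsplit : (fun y => ∫ t in Set.Ioi y, h t * gaussWeight t)
      = fun y => (∫ t in Set.Ioi 0, h t * gaussWeight t)
        - ∫ t in (0 : ℝ)..y, h t * gaussWeight t :=
    funext fun y => eq_sub_of_add_eq' (intervalIntegral.integral_interval_add_Ioi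
      hint.integrableOn hint.integrableOn)
  have htail : HasDerivAt (fun y => ∫ t in Set.Ioi y, h t * gaussWeight t)
      (-(h x * gaussWeight x)) x := by
    rw [hsplit]
    exact ((hc.mul continuous_gaussWeight).integral_hasStrictDerivAt 0 x).hasDerivAt.const_sub _
  have hw := (gaussWeight_pos x).ne'
  convert! htail.div (hasDerivAt_gaussWeight x) hw using 1
  rw [steinTail]
  field_simp
  ring

lemma steinTail_comp_neg (hint : Integrable fun t => h t * gaussWeight t)
    (hzero : ∫ t, h t * gaussWeight t = 0) (x : ℝ) :
    steinTail (fun t => h (-t)) (-x) = -steinTail h x := by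
  have hreflect := integral_comp_neg_Ioi (-x) fun t => h t * gaussWeight t
  simp only [gaussWeight_neg, neg_neg] at hreflect
  have hsum := intervalIntegral.integral_Iic_add_Ioi (b := x) hint.integrableOn hint.integrableOn
  rw [steinTail, steinTail, hreflect, gaussWeight_neg, ← neg_div,
    eq_neg_of_add_eq_zero_left (hsum.trans hzero)]

/-- A bound for `steinTail h` on `[-1, 1]` when `|h x| ≤ |x| + M`. -/
def steinCentralBound (M : ℝ) : ℝ :=
  (∫ t, (|t * gaussWeight t| + M * gaussWeight t)) / exp (-(1 / 2))

lemma abs_steinTail_le_of_abs_le_one (hc : Continuous h) (hM : ∀ x, |h x| ≤ |x| + M) {x : ℝ}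
    (hx : |x| ≤ 1) : |steinTail h x| ≤ steinCentralBound M := by
  have hint := integrable_mul_gaussWeight_of_abs_le hc hM
  have hnum : |∫ t in Set.Ioi x, h t * gaussWeight t|
      ≤ ∫ t, (|t * gaussWeight t| + M * gaussWeight t) :=
    calc |∫ t in Set.Ioi x, h t * gaussWeight t|
        ≤ ∫ t in Set.Ioi x, |h t * gaussWeight t| := abs_integral_le_integral_abs
      _ ≤ ∫ t, |h t * gaussWeight t| :=
          setIntegral_le_integral hint.abs (ae_of_all _ fun t => abs_nonneg _)
      _ ≤ ∫ t, (|t * gaussWeight t| + M * gaussWeight t) := by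
          refine integral_mono hint.abs (integrable_mul_gaussWeight.abs.add
            (integrable_gaussWeight.const_mul M)) fun t => ?_
          simp only [abs_mul, abs_of_pos (gaussWeight_pos t), ← add_mul]
          exact mul_le_mul_of_nonneg_right (hM t) (gaussWeight_pos t).le
  rw [steinTail, abs_div, abs_of_pos (gaussWeight_pos x)]
  refine div_le_div₀ ((abs_nonneg _).trans hnum) hnum (exp_pos _) (exp_le_exp.mpr ?_)
  linarith [(sq_le_one_iff_abs_le_one x).mpr hx]

/-- `1`-Lipschitz functions of Gaussian mean zero, growing no faster than `|x| + M`: the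
right-hand sides of the Stein equation for the Wasserstein distance. -/
structure IsSteinTest (h : ℝ → ℝ) (M : ℝ) : Prop where
  lipschitz : LipschitzWith 1 h
  abs_le : ∀ x, |h x| ≤ |x| + M
  integral_eq_zero : ∫ t, h t * gaussWeight t = 0

namespace IsSteinTest

lemma integrable (hh : IsSteinTest h M) : Integrable fun t => h t * gaussWeight t :=
  integrable_mul_gaussWeight_of_abs_le hh.lipschitz.continuous hh.abs_le

lemma nonneg (hh : IsSteinTest h M) : 0 ≤ M := by
  simpa using (abs_nonneg (h 0)).trans (hh.abs_le 0)

lemma comp_neg (hh : IsSteinTest h M) : IsSteinTest (fun t => h (-t)) M where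
  lipschitz := LipschitzWith.of_dist_le_mul fun x y => by
    simpa only [dist_neg_neg] using hh.lipschitz.dist_le_mul (-x) (-y)
  abs_le x := by simpa using hh.abs_le (-x)
  integral_eq_zero := by
    rw [← hh.integral_eq_zero, ← integral_neg_eq_self (fun t => h t * gaussWeight t) volume]
    simp only [gaussWeight_neg]

lemma steinCentralBound_nonneg (hh : IsSteinTest h M) : 0 ≤ steinCentralBound M :=
  (abs_nonneg _).trans (abs_steinTail_le_of_abs_le_one (x := 0) hh.lipschitz.continuous hh.abs_le
    (by norm_num))

lemma abs_steinTail_le (hh : IsSteinTest h M) (x : ℝ) :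
    |steinTail h x| ≤ steinCentralBound M + 1 + M := by
  have hB := hh.steinCentralBound_nonneg
  rcases le_total |x| 1 with hx | hx
  · linarith [abs_steinTail_le_of_abs_le_one hh.lipschitz.continuous hh.abs_le hx, hh.nonneg]
  rcases le_abs'.mp hx with hneg | hpos
  · have hle := abs_steinTail_le_of_one_le hh.comp_neg.lipschitz.continuous hh.comp_neg.abs_le
      (le_neg_of_le_neg hneg)
    rw [steinTail_comp_neg hh.integrable hh.integral_eq_zero, abs_neg] at hle
    linarith
  · linarith [abs_steinTail_le_of_one_le hh.lipschitz.continuous hh.abs_le hpos]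

lemma abs_sub_mul_steinTail_le_of_abs_le_one (hh : IsSteinTest h M) {x : ℝ} (hx : |x| ≤ 1) :
    |h x - x * steinTail h x| ≤ steinCentralBound M + 2 + M := by
  have hmul : |x * steinTail h x| ≤ steinCentralBound M := by
    rw [abs_mul]
    exact (mul_le_of_le_one_left (abs_nonneg _) hx).trans
      (abs_steinTail_le_of_abs_le_one hh.lipschitz.continuous hh.abs_le hx)
  linarith [abs_sub (h x) (x * steinTail h x), hh.abs_le x]

lemma abs_mul_sub_mul_steinTail_le (hh : IsSteinTest h M) (x : ℝ) :
    |x * (h x - x * steinTail h x)| ≤ steinCentralBound M + 2 + M := by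
  have hB := hh.steinCentralBound_nonneg
  rcases le_total |x| 1 with hx | hx
  · rw [abs_mul]
    exact (mul_le_of_le_one_left (abs_nonneg _) hx).trans
      (hh.abs_sub_mul_steinTail_le_of_abs_le_one hx)
  rcases le_abs'.mp hx with hneg | hpos
  · have hle := abs_mul_sub_mul_steinTail_le_of_one_le hh.comp_neg.lipschitz hh.comp_neg.abs_le
      (le_neg_of_le_neg hneg)
    rw [steinTail_comp_neg hh.integrable hh.integral_eq_zero] at hle
    simp only [neg_neg, neg_mul, mul_neg, abs_neg] at hle
    linarith
  · linarith [abs_mul_sub_mul_steinTail_le_of_one_le hh.lipschitz hh.abs_le hpos]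

lemma abs_sub_mul_steinTail_le (hh : IsSteinTest h M) (x : ℝ) :
    |h x - x * steinTail h x| ≤ steinCentralBound M + 2 + M := by
  rcases le_total |x| 1 with hx | hx
  · exact hh.abs_sub_mul_steinTail_le_of_abs_le_one hx
  · refine (le_mul_of_one_le_left (abs_nonneg _) hx).trans ?_
    rw [← abs_mul]
    exact hh.abs_mul_sub_mul_steinTail_le x

lemma abs_mul_steinTail_sub_le (hh : IsSteinTest h M) (x y : ℝ) :
    |x * steinTail h x - y * steinTail h y|
      ≤ (2 * steinCentralBound M + 3 + 2 * M) * |x - y| := by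
  have hderiv (z : ℝ) : HasDerivAt (fun z => z * steinTail h z)
      (steinTail h z - z * (h z - z * steinTail h z)) z := by
    convert! (hasDerivAt_id z).mul
      (hasDerivAt_steinTail hh.lipschitz.continuous hh.integrable z) using 1
    simp only [id]
    ring
  refine Convex.norm_image_sub_le_of_norm_hasDerivWithin_le (s := Set.univ)
    (fun z _ => (hderiv z).hasDerivWithinAt) (fun z _ => (abs_sub _ _).trans ?_) convex_univ
    (Set.mem_univ y) (Set.mem_univ x)
  linarith [hh.abs_steinTail_le z, hh.abs_mul_sub_mul_steinTail_le z]

end IsSteinTest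

lemma integral_mul_gaussWeight_eq (h : ℝ → ℝ) :
    ∫ t, h t * gaussWeight t = √(2 * π) * ∫ z, h z ∂(gaussianReal 0 1) := by
  have hpdf (z : ℝ) : gaussianPDFReal 0 1 z • h z = (√(2 * π))⁻¹ * (h z * gaussWeight z) := by
    rw [gaussianPDFReal, gaussWeight, smul_eq_mul, NNReal.coe_one, mul_one, mul_one, sub_zero,
      show -z ^ 2 / 2 = -(1 / 2) * z ^ 2 by ring]
    ring
  rw [integral_gaussianReal_eq_integral_smul one_ne_zero]
  simp only [hpdf]
  rw [integral_const_mul, mul_inv_cancel_left₀ (by positivity)]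

lemma isSteinTest_sub_integral {ψ : ℝ → ℝ} (hψ : LipschitzWith 1 ψ) :
    IsSteinTest (fun x => ψ x - ∫ z, ψ z ∂(gaussianReal 0 1))
      (∫ z, |z| ∂(gaussianReal 0 1)) := by
  have hdist (x z : ℝ) : |ψ x - ψ z| ≤ |x - z| := by simpa [dist_eq] using hψ.dist_le_mul x z
  have hid : Integrable (fun z : ℝ => z) (gaussianReal 0 1) :=
    memLp_one_iff_integrable.mp (memLp_id_gaussianReal 1)
  have hint : Integrable ψ (gaussianReal 0 1) := by
    refine (hid.abs.add (integrable_const |ψ 0|)).mono' hψ.continuous.aestronglyMeasurable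
      (ae_of_all _ fun z => ?_)
    simpa using sub_le_iff_le_add.mp ((abs_sub_abs_le_abs_sub _ _).trans (hdist z 0))
  refine ⟨?_, fun x => ?_, ?_⟩
  · simpa using hψ.sub (LipschitzWith.const (∫ z, ψ z ∂(gaussianReal 0 1)))
  · calc |ψ x - ∫ z, ψ z ∂(gaussianReal 0 1)|
        = |∫ z, (ψ x - ψ z) ∂(gaussianReal 0 1)| := by
          rw [integral_sub (integrable_const _) hint, integral_const, probReal_univ, one_smul]
      _ ≤ ∫ z, |ψ x - ψ z| ∂(gaussianReal 0 1) := abs_integral_le_integral_abs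
      _ ≤ ∫ z, (|x| + |z|) ∂(gaussianReal 0 1) :=
          integral_mono ((integrable_const _).sub hint).abs
            ((integrable_const _).add hid.abs) fun z => (hdist x z).trans (abs_sub x z)
      _ = |x| + ∫ z, |z| ∂(gaussianReal 0 1) := by
          rw [integral_add (integrable_const _) hid.abs, integral_const, probReal_univ, one_smul]
  · rw [integral_mul_gaussWeight_eq, integral_sub hint (integrable_const _), integral_const,
      probReal_univ, one_smul, sub_self, mul_zero]

/-- `f` solves the Stein equation with right-hand side `h`, and `C` bounds `f`, its derivative
`f'` and the Lipschitz constant of `f'`. -/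
structure IsSteinSolution (h f f' : ℝ → ℝ) (C : ℝ) : Prop where
  hasDerivAt : ∀ x, HasDerivAt f (f' x) x
  stein_eq : ∀ x, f' x - x * f x = h x
  abs_le : ∀ x, |f x| ≤ C
  abs_deriv_le : ∀ x, |f' x| ≤ C
  abs_deriv_sub_le : ∀ x y, |f' x - f' y| ≤ C * |x - y|

theorem exists_isSteinSolution : ∃ C : ℝ, 0 ≤ C ∧ ∀ ψ : ℝ → ℝ, LipschitzWith 1 ψ →
    ∃ f f' : ℝ → ℝ, IsSteinSolution (fun x => ψ x - ∫ z, ψ z ∂(gaussianReal 0 1)) f f' C := by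
  set M := ∫ z, |z| ∂(gaussianReal 0 1)
  set B := steinCentralBound M
  have hM0 : 0 ≤ M := (isSteinTest_sub_integral LipschitzWith.id).nonneg
  have hB0 : 0 ≤ B := (isSteinTest_sub_integral LipschitzWith.id).steinCentralBound_nonneg
  refine ⟨2 * B + 4 + 2 * M, by positivity, fun ψ hψ => ?_⟩
  have hh := isSteinTest_sub_integral hψ
  set h := fun x => ψ x - ∫ z, ψ z ∂(gaussianReal 0 1)
  refine ⟨fun x => -steinTail h x, fun x => h x - x * steinTail h x, fun x => ?_, fun x => ?_,
    fun x => ?_, fun x => ?_, fun x y => ?_⟩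
  · convert! (hasDerivAt_steinTail hh.lipschitz.continuous hh.integrable x).neg using 1
    ring
  · ring
  · rw [abs_neg]
    linarith [hh.abs_steinTail_le x]
  · linarith [hh.abs_sub_mul_steinTail_le x]
  · have hlip : |h x - h y| ≤ |x - y| := by simpa [dist_eq] using hh.lipschitz.dist_le_mul x y
    calc |h x - x * steinTail h x - (h y - y * steinTail h y)|
        = |(h x - h y) - (x * steinTail h x - y * steinTail h y)| := by congr 1; ring
      _ ≤ |x - y| + (2 * B + 3 + 2 * M) * |x - y| :=
          (abs_sub _ _).trans (add_le_add hlip (hh.abs_mul_steinTail_sub_le x y))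
      _ = (2 * B + 4 + 2 * M) * |x - y| := by ring

end SteinEquation

section NormalApproximation

lemma abs_sub_sub_mul_le_of_deriv_lipschitz {f f' : ℝ → ℝ} {C : ℝ} (hC : 0 ≤ C)
    (hderiv : ∀ x, HasDerivAt f (f' x) x) (hlip : ∀ x y, |f' x - f' y| ≤ C * |x - y|) (w : ℝ)
    {δ : ℝ} (hδ : 0 < δ) : |f w - f (w - δ) - δ * f' w| ≤ C * δ ^ 2 := by
  obtain ⟨ξ, hξ, hslope⟩ := exists_hasDerivAt_eq_slope f f' (sub_lt_self w hδ)
    (fun x _ => (hderiv x).continuousAt.continuousWithinAt) fun x _ => hderiv x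
  rw [sub_sub_cancel, eq_div_iff hδ.ne'] at hslope
  have hdist : |ξ - w| ≤ δ := abs_le.mpr ⟨by linarith [hξ.1], by linarith [hξ.2]⟩
  calc |f w - f (w - δ) - δ * f' w| = |f' ξ - f' w| * δ := by
        rw [← hslope, mul_comm δ, ← sub_mul, abs_mul, abs_of_pos hδ]
    _ ≤ C * δ * δ := by
        gcongr
        exact (hlip ξ w).trans (by gcongr)
    _ = C * δ ^ 2 := by ring

lemma abs_gibbsExp_mul_le {Ω : Type*} [Fintype Ω] {h f g : Ω → ℝ} {C : ℝ}
    (hg : ∀ y, |g y| ≤ C) :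
    |gibbsExp h (fun y => f y * g y)| ≤ C * gibbsExp h (fun y => |f y|) := by
  rw [← gibbsExp_const_mul]
  refine (abs_gibbsExp_le _).trans (gibbsExp_mono fun y => ?_)
  rw [abs_mul, mul_comm]
  exact mul_le_mul_of_nonneg_right (hg y) (abs_nonneg _)

section StandardSum

variable {I : Type*} [Fintype I] [DecidableEq I]

/-- The number of ones, centred at its expectation and divided by `σ`. -/
def standardSum (h : (I → Bool) → ℝ) (σ : ℝ) (y : I → Bool) : ℝ :=
  (coordSum y - gibbsExp h coordSum) / σ

lemma cubeDiff_comp_standardSum (h : (I → Bool) → ℝ) (σ : ℝ) (f : ℝ → ℝ) {s : I}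
    {y : I → Bool} (hy : coord s y = 1) :
    cubeDiff s (fun y => f (standardSum h σ y)) y
      = f (standardSum h σ y) - f (standardSum h σ y - 1 / σ) := by
  have hdiff := cubeDiff_coordSum s y
  simp only [cubeDiff, update_eq_self_of_coord_eq_one hy] at hdiff ⊢
  rw [standardSum, standardSum, ← sub_div, ← hdiff]
  congr 3
  ring

end StandardSum

variable {J : Type*} [Fintype J] {m : J → ℕ} {K : ℝ≥0} {β : J → ℝ} {p c : ℝ}

namespace PlacementSystem

variable (S : PlacementSystem m K)

lemma abs_gibbsExp_fluctSum_mul_sub_le {f f' : ℝ → ℝ} {C σ : ℝ} (hC : 0 ≤ C) (hσ : 0 < σ)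
    (hderiv : ∀ x, HasDerivAt f (f' x) x) (hlip : ∀ x y, |f' x - f' y| ≤ C * |x - y|) :
    |gibbsExp (S.ham β) (fun y => S.fluctSum β y * f (standardSum (S.ham β) σ y))
      - 1 / σ * gibbsExp (S.ham β) (fun y => S.condVariance β y * f' (standardSum (S.ham β) σ y))|
      ≤ Fintype.card S.I * (C / σ ^ 2) := by
  rw [S.gibbsExp_fluctSum_mul, ← gibbsExp_const_mul, ← gibbsExp_sub]
  refine (abs_gibbsExp_le _).trans (gibbsExp_le_of_le fun y => ?_)
  rw [condVariance, sum_mul, mul_sum, ← sum_sub_distrib, ← nsmul_eq_mul, ← card_univ]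
  refine (abs_sum_le_sum_abs _ _).trans (sum_le_card_nsmul _ _ _ fun s _ => ?_)
  rcases coord_eq_zero_or_one s y with hzero | hone
  · simp only [hzero, zero_mul, mul_zero, sub_zero, abs_zero]
    positivity
  · rw [hone, cubeDiff_comp_standardSum _ _ f hone]
    set w := standardSum (S.ham β) σ y
    have hprob : |1 - S.prob β s y| ≤ 1 :=
      abs_le.mpr ⟨by linarith [S.prob_le_one β s y], by linarith [S.prob_nonneg β s y]⟩
    calc _ = |1 - S.prob β s y| * |f w - f (w - 1 / σ) - 1 / σ * f' w| := by
          rw [← abs_mul]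
          congr 1
          ring
      _ ≤ 1 * (C * (1 / σ) ^ 2) := by
          gcongr
          exact abs_sub_sub_mul_le_of_deriv_lipschitz hC hderiv hlip w (one_div_pos.mpr hσ)
      _ = C / σ ^ 2 := by rw [one_mul, one_div_pow, mul_one_div]

lemma meanFieldGap_mul_standardSum {σ : ℝ} (hσ : σ ≠ 0) (y : S.I → Bool) :
    meanFieldGap m β p * σ * standardSum (S.ham β) σ y = S.fluctSum β y
      + (S.remainder β p y - gibbsExp (S.ham β) (S.remainder β p)) := by
  have hmean : gibbsExp (S.ham β) (S.remainder β p)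
      = meanFieldGap m β p * (gibbsExp (S.ham β) coordSum - Fintype.card S.I * p) := by
    have hremainder : S.remainder β p = fun y =>
        meanFieldGap m β p * (coordSum y - Fintype.card S.I * p) - S.fluctSum β y :=
      funext fun y => by rw [remainder, centredSum_eq]
    rw [hremainder, gibbsExp_sub, gibbsExp_const_mul, gibbsExp_sub, gibbsExp_const,
      S.gibbsExp_fluctSum, sub_zero]
  rw [hmean, remainder, centredSum_eq, standardSum]
  field_simp
  ring

/-- Stein's identity: every term on the right-hand side is small. -/
lemma gibbsExp_comp_standardSum_eq {g f f' : ℝ → ℝ} {C σ : ℝ} (hσ : σ ≠ 0)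
    (hvar : meanFieldGap m β p * σ ^ 2 = Fintype.card S.I * (p * (1 - p)))
    (hf : IsSteinSolution g f f' C) :
    meanFieldGap m β p * σ * gibbsExp (S.ham β) (fun y => g (standardSum (S.ham β) σ y))
      = -(1 / σ * gibbsExp (S.ham β) fun y =>
            (S.condVariance β y - Fintype.card S.I * (p * (1 - p)))
              * f' (standardSum (S.ham β) σ y))
        - (gibbsExp (S.ham β) (fun y => S.fluctSum β y * f (standardSum (S.ham β) σ y))
          - 1 / σ * gibbsExp (S.ham β) (fun y =>
              S.condVariance β y * f' (standardSum (S.ham β) σ y)))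
        - gibbsExp (S.ham β) fun y => (S.remainder β p y
            - gibbsExp (S.ham β) (S.remainder β p)) * f (standardSum (S.ham β) σ y) := by
  set h := S.ham β
  set W := standardSum h σ
  have hfluct : meanFieldGap m β p * σ * gibbsExp h (fun y => W y * f (W y))
      = gibbsExp h (fun y => S.fluctSum β y * f (W y))
        + gibbsExp h fun y =>
            (S.remainder β p y - gibbsExp h (S.remainder β p)) * f (W y) := by
    rw [← gibbsExp_const_mul, ← gibbsExp_add]
    congr 1
    funext y
    rw [← mul_assoc, S.meanFieldGap_mul_standardSum hσ, add_mul]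
  have hcond : gibbsExp h (fun y =>
        (S.condVariance β y - Fintype.card S.I * (p * (1 - p))) * f' (W y))
      = gibbsExp h (fun y => S.condVariance β y * f' (W y))
        - Fintype.card S.I * (p * (1 - p)) * gibbsExp h (fun y => f' (W y)) := by
    simp only [sub_mul, gibbsExp_sub, gibbsExp_const_mul]
  have hstein : gibbsExp h (fun y => g (W y))
      = gibbsExp h (fun y => f' (W y)) - gibbsExp h (fun y => W y * f (W y)) := by
    simp only [← hf.stein_eq, gibbsExp_sub]
  rw [hstein, mul_sub, hfluct, hcond, ← hvar]
  field_simp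
  ring

lemma abs_gibbsExp_comp_standardSum_le {g f f' : ℝ → ℝ} {C σ : ℝ} (hC : 0 ≤ C) (hσ : 0 < σ)
    (hgap : 0 < meanFieldGap m β p)
    (hvar : meanFieldGap m β p * σ ^ 2 = Fintype.card S.I * (p * (1 - p)))
    (hf : IsSteinSolution g f f' C) :
    meanFieldGap m β p * σ * |gibbsExp (S.ham β) (fun y => g (standardSum (S.ham β) σ y))|
      ≤ 1 / σ * (C * gibbsExp (S.ham β) fun y =>
            |S.condVariance β y - Fintype.card S.I * (p * (1 - p))|)
        + Fintype.card S.I * (C / σ ^ 2)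
        + C * gibbsExp (S.ham β) fun y =>
            |S.remainder β p y - gibbsExp (S.ham β) (S.remainder β p)| := by
  rw [← abs_of_pos (mul_pos hgap hσ), ← abs_mul, S.gibbsExp_comp_standardSum_eq hσ.ne' hvar hf]
  refine (abs_sub _ _).trans (add_le_add ((abs_sub _ _).trans (add_le_add ?_ ?_)) ?_)
  · rw [abs_neg, abs_mul, abs_of_pos (one_div_pos.mpr hσ)]
    exact mul_le_mul_of_nonneg_left (abs_gibbsExp_mul_le fun y => hf.abs_deriv_le _)
      (one_div_pos.mpr hσ).le
  · exact S.abs_gibbsExp_fluctSum_mul_sub_le hC hσ hf.hasDerivAt hf.abs_deriv_sub_le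
  · exact abs_gibbsExp_mul_le fun y => hf.abs_le _

/-- The asymptotic standard deviation of the number of ones. -/
def asympStd (β : J → ℝ) (p : ℝ) : ℝ :=
  √(Fintype.card S.I * (p * (1 - p)) / meanFieldGap m β p)

end PlacementSystem

open PlacementSystem

lemma IsSubcritical.meanFieldGap_mul_asympStd_sq (hs : IsSubcritical m β p c)
    (S : PlacementSystem m K) :
    meanFieldGap m β p * S.asympStd β p ^ 2 = Fintype.card S.I * (p * (1 - p)) := by
  have hgap := hs.gap_pos
  have hp := mul_pos hs.mem_Ioo.1 (sub_pos.mpr hs.mem_Ioo.2)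
  rw [asympStd, sq_sqrt (by positivity), mul_div_cancel₀ _ hgap.ne']

lemma IsSubcritical.exists_mul_u_pow_le_asympStd (hs : IsSubcritical m β p c) (K : ℝ≥0) :
    ∃ b : ℝ, 0 < b ∧ ∀ S : PlacementSystem m K, S.u ^ 24 ≤ 4 * Fintype.card S.I →
      b * S.u ^ 12 ≤ S.asympStd β p := by
  have hgap := hs.gap_pos
  have hp := mul_pos hs.mem_Ioo.1 (sub_pos.mpr hs.mem_Ioo.2)
  refine ⟨√(p * (1 - p) / (4 * meanFieldGap m β p)), by positivity, fun S hcard => ?_⟩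
  refine le_sqrt_of_sq_le ?_
  rw [mul_pow, sq_sqrt (by positivity)]
  calc p * (1 - p) / (4 * meanFieldGap m β p) * (S.u ^ 12) ^ 2
      = S.u ^ 24 * (p * (1 - p) / (4 * meanFieldGap m β p)) := by ring
    _ ≤ 4 * Fintype.card S.I * (p * (1 - p) / (4 * meanFieldGap m β p)) := by gcongr
    _ = Fintype.card S.I * (p * (1 - p)) / meanFieldGap m β p := by
        field_simp

lemma exists_asympStd_mul_abs_gibbsExp_sub_gaussian_le (hs : IsSubcritical m β p c) (K : ℝ≥0) :
    ∃ C : ℝ, 0 ≤ C ∧ ∀ S : PlacementSystem m K, S.u ^ 24 ≤ 4 * Fintype.card S.I →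
      ∀ ψ : ℝ → ℝ, LipschitzWith 1 ψ →
      S.asympStd β p
        * |gibbsExp (S.ham β) (fun y => ψ (standardSum (S.ham β) (S.asympStd β p) y))
          - ∫ z, ψ z ∂(gaussianReal 0 1)| ≤ C * S.u ^ 9 := by
  obtain ⟨Cr, hCr, hremainder⟩ := exists_gibbsExp_abs_remainder_sub_le hs K
  obtain ⟨Cv, hCv, hvariance⟩ := exists_gibbsExp_abs_condVariance_sub_le hs K
  obtain ⟨Cs, hCs, hstein⟩ := exists_isSteinSolution
  obtain ⟨b, hb, hstd⟩ := hs.exists_mul_u_pow_le_asympStd K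
  have hp := mul_pos hs.mem_Ioo.1 (sub_pos.mpr hs.mem_Ioo.2)
  have hgap := hs.gap_pos
  set γ := meanFieldGap m β p
  refine ⟨(Cs * Cv / b + γ * Cs / (p * (1 - p)) + Cs * Cr) / γ, by positivity,
    fun S hcard ψ hψ => ?_⟩
  obtain ⟨f, f', hf⟩ := hstein ψ hψ
  have hu := S.u_pos
  have hσu := hstd S hcard
  have hσ : 0 < S.asympStd β p := (by positivity : 0 < b * S.u ^ 12).trans_le hσu
  have hσ2 := hs.meanFieldGap_mul_asympStd_sq S
  have hcardσ : Fintype.card S.I * (Cs / S.asympStd β p ^ 2) = γ * Cs / (p * (1 - p)) := by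
    rw [mul_div_assoc', div_eq_div_iff (by positivity) hp.ne']
    linear_combination -Cs * hσ2
  have hbound := S.abs_gibbsExp_comp_standardSum_le hCs hσ hgap hσ2 hf
  rw [gibbsExp_sub, gibbsExp_const, hcardσ, mul_assoc] at hbound
  rw [div_mul_eq_mul_div, le_div_iff₀' hgap]
  calc _ ≤ _ := hbound
    _ ≤ 1 / (b * S.u ^ 12) * (Cs * (Cv * S.u ^ 19)) + γ * Cs / (p * (1 - p))
        + Cs * (Cr * S.u ^ 9) := by
        refine add_le_add (add_le_add (mul_le_mul (one_div_le_one_div_of_le (by positivity) hσu)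
          (mul_le_mul_of_nonneg_left (hvariance S) hCs)
          (mul_nonneg hCs (gibbsExp_nonneg fun _ => abs_nonneg _)) (by positivity)) le_rfl)
          (mul_le_mul_of_nonneg_left (hremainder S) hCs)
    _ = Cs * Cv / b * S.u ^ 7 + γ * Cs / (p * (1 - p)) * 1 + Cs * Cr * S.u ^ 9 := by
        field_simp
    _ ≤ Cs * Cv / b * S.u ^ 9 + γ * Cs / (p * (1 - p)) * S.u ^ 9 + Cs * Cr * S.u ^ 9 := by
        gcongr
        exacts [S.one_le_u, by norm_num, one_le_pow₀ S.one_le_u]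
    _ = (Cs * Cv / b + γ * Cs / (p * (1 - p)) + Cs * Cr) * S.u ^ 9 := by ring

theorem exists_abs_gibbsExp_sub_gaussian_le (hs : IsSubcritical m β p c) (K : ℝ≥0) :
    ∃ C : ℝ, 0 ≤ C ∧ ∀ S : PlacementSystem m K, S.u ^ 24 ≤ 4 * Fintype.card S.I →
      ∀ ψ : ℝ → ℝ, LipschitzWith 1 ψ →
      |gibbsExp (S.ham β) (fun y => ψ (standardSum (S.ham β) (S.asympStd β p) y))
        - ∫ z, ψ z ∂(gaussianReal 0 1)| ≤ C / S.u ^ 3 := by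
  obtain ⟨C, hC, hbound⟩ := exists_asympStd_mul_abs_gibbsExp_sub_gaussian_le hs K
  obtain ⟨b, hb, hstd⟩ := hs.exists_mul_u_pow_le_asympStd K
  refine ⟨C / b, by positivity, fun S hcard ψ hψ => ?_⟩
  have hu := S.u_pos
  rw [div_div, le_div_iff₀' (by positivity)]
  refine le_of_mul_le_mul_right ?_ (pow_pos hu 9)
  calc b * S.u ^ 3 * _ * S.u ^ 9 = b * S.u ^ 12 * _ := by ring
    _ ≤ S.asympStd β p * _ := mul_le_mul_of_nonneg_right (hstd S hcard) (abs_nonneg _)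
    _ ≤ C * S.u ^ 9 := hbound S hcard ψ hψ

end NormalApproximation

section EdgeIndices

variable {n : ℕ}

/-- Edge indices as the off-diagonal unordered pairs. -/
def edgeEquiv (n : ℕ) : EdgeIdx n ≃ {e : Sym2 (Fin n) // ¬ e.IsDiag} :=
  Equiv.ofBijective
    (fun s => ⟨s(s.1.1, s.1.2), Sym2.mk_isDiag_iff.not.mpr s.2.ne⟩) <| by
    constructor
    · rintro ⟨⟨a, b⟩, hab⟩ ⟨⟨c, d⟩, hcd⟩ h
      simp only [Subtype.mk.injEq, Sym2.eq_iff] at h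
      rcases h with ⟨rfl, rfl⟩ | ⟨rfl, rfl⟩
      · rfl
      · exact absurd hab hcd.not_gt
    · rintro ⟨e, he⟩
      induction e with | _ a b
      rcases lt_or_gt_of_ne (Sym2.mk_isDiag_iff.not.mp he) with hlt | hlt
      · exact ⟨⟨(a, b), hlt⟩, rfl⟩
      · exact ⟨⟨(b, a), hlt⟩, Subtype.ext Sym2.eq_swap⟩

lemma coe_edgeEquiv (s : EdgeIdx n) : (edgeEquiv n s : Sym2 (Fin n)) = s(s.1.1, s.1.2) := rfl

lemma card_edgeIdx (n : ℕ) : (Fintype.card (EdgeIdx n) : ℝ) = n * (n - 1) / 2 := by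
  rw [Fintype.card_congr (edgeEquiv n), Sym2.card_subtype_not_diag, Fintype.card_fin,
    Nat.cast_choose_two]

lemma yAdj_eq_of_coe_edgeEquiv_eq {a b : Fin n} {s : EdgeIdx n}
    (hs : (edgeEquiv n s : Sym2 (Fin n)) = s(a, b)) (y : EdgeIdx n → Bool) : yAdj y a b = y s := by
  rw [coe_edgeEquiv, Sym2.eq_iff] at hs
  rcases hs with ⟨rfl, rfl⟩ | ⟨rfl, rfl⟩
  · rw [yAdj, dif_pos s.2]; rfl
  · rw [yAdj, dif_neg s.2.not_gt, dif_pos s.2]; rfl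

end EdgeIndices

section UnorderedPairs

variable {α : Type*}

lemma exists_perm_map_eq {s t : Sym2 α} (hs : ¬ s.IsDiag) (ht : ¬ t.IsDiag) :
    ∃ τ : Equiv.Perm α, Sym2.map τ s = t := by
  classical
  induction s with | _ a b
  induction t with | _ c d
  rw [Sym2.mk_isDiag_iff] at hs ht
  have hne : c ≠ Equiv.swap a c b := fun h =>
    hs ((Equiv.swap a c).injective ((Equiv.swap_apply_left a c).trans h))
  refine ⟨(Equiv.swap a c).trans (Equiv.swap (Equiv.swap a c b) d), ?_⟩
  simp [Equiv.swap_apply_of_ne_of_ne hne ht]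

lemma exists_card_eq_three_subset_union [DecidableEq α] {r e : Sym2 α} (hr : ¬ r.IsDiag)
    (he : ¬ e.IsDiag) (hre : r ≠ e) : ∃ T ⊆ r.toFinset ∪ e.toFinset, #T = 3 := by
  refine exists_subset_card_eq (Nat.succ_le_of_lt (not_le.mp fun hle => hre ?_))
  have hr2 := Sym2.card_toFinset_of_not_isDiag r hr
  have he2 := Sym2.card_toFinset_of_not_isDiag e he
  have hunion : r.toFinset = e.toFinset :=
    (eq_of_subset_of_card_le subset_union_left (hle.trans_eq hr2.symm)).trans
      (eq_of_subset_of_card_le subset_union_right (hle.trans_eq he2.symm)).symm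
  exact Sym2.ext fun x => by rw [← Sym2.mem_toFinset, hunion, Sym2.mem_toFinset]

lemma card_mul_pow_le_of_forall_mem {V : Type*} [Fintype V] [Fintype α] {Φ : Finset (V ↪ α)}
    (T : Finset V) {A : V → Finset α} {a : ℕ} (hA : ∀ w ∈ T, #(A w) ≤ a)
    (hΦ : ∀ φ ∈ Φ, ∀ w ∈ T, φ w ∈ A w) :
    #Φ * Fintype.card α ^ #T ≤ a ^ #T * Fintype.card α ^ Fintype.card V := by
  classical
  set B : V → Finset α := fun w => if w ∈ T then A w else univ
  have hcard : #Φ ≤ #(Fintype.piFinset B) := by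
    refine card_le_card_of_injOn (fun φ => ⇑φ) (fun φ hφ => ?_)
      fun _ _ _ _ h => DFunLike.coe_injective h
    rw [mem_coe, Fintype.mem_piFinset]
    intro w
    by_cases hw : w ∈ T
    · simpa only [B, if_pos hw] using hΦ φ hφ w hw
    · simp only [B, if_neg hw, mem_univ]
  have hT : ∏ w ∈ T, #(B w) ≤ a ^ #T :=
    prod_le_pow_card _ _ _ fun w hw => by simpa only [B, if_pos hw] using hA w hw
  have hTc : ∏ w ∈ Tᶜ, #(B w) = Fintype.card α ^ #Tᶜ :=
    prod_eq_pow_card fun w hw => by simp only [B, if_neg (mem_compl.mp hw), card_univ]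
  calc #Φ * Fintype.card α ^ #T
      ≤ #(Fintype.piFinset B) * Fintype.card α ^ #T := Nat.mul_le_mul_right _ hcard
    _ = (∏ w ∈ T, #(B w)) * Fintype.card α ^ Fintype.card V := by
        rw [Fintype.card_piFinset, ← prod_mul_prod_compl T, hTc, mul_assoc, ← pow_add,
          card_compl_add_card]
    _ ≤ a ^ #T * Fintype.card α ^ Fintype.card V := Nat.mul_le_mul_right _ hT

end UnorderedPairs

section Placement

variable {V : Type} {G : SimpleGraph V} {n : ℕ}

/-- The edge of the complete graph onto which `φ` maps the edge `e` of `G`. -/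
def placeEdge (φ : V ↪ Fin n) (e : G.edgeSet) : EdgeIdx n :=
  (edgeEquiv n).symm ⟨Sym2.map φ e,
    (Sym2.isDiag_map φ.injective).not.mpr (G.not_isDiag_of_mem_edgeSet e.2)⟩

lemma coe_edgeEquiv_placeEdge (φ : V ↪ Fin n) (e : G.edgeSet) :
    (edgeEquiv n (placeEdge φ e) : Sym2 (Fin n)) = Sym2.map φ e := by
  rw [placeEdge, Equiv.apply_symm_apply]

lemma placeEdge_eq_iff (φ : V ↪ Fin n) (e : G.edgeSet) (s : EdgeIdx n) :
    placeEdge φ e = s ↔ Sym2.map φ e = (edgeEquiv n s : Sym2 (Fin n)) := by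
  rw [placeEdge, Equiv.symm_apply_eq, Subtype.ext_iff]

lemma placeEdge_injective (φ : V ↪ Fin n) : Function.Injective (placeEdge (G := G) φ) := by
  intro e f h
  rw [placeEdge_eq_iff, coe_edgeEquiv_placeEdge] at h
  exact Subtype.ext (Sym2.map.injective φ.injective h)

lemma forall_adj_imp_yAdj_iff (φ : V ↪ Fin n) (y : EdgeIdx n → Bool) :
    (∀ a b, G.Adj a b → yAdj y (φ a) (φ b) = true)
      ↔ ∀ e : G.edgeSet, y (placeEdge φ e) = true := by
  have hyAdj (a b : V) (hab : G.Adj a b) :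
      yAdj y (φ a) (φ b) = y (placeEdge φ (⟨s(a, b), hab⟩ : G.edgeSet)) :=
    yAdj_eq_of_coe_edgeEquiv_eq (by rw [coe_edgeEquiv_placeEdge, Sym2.map_mk]) y
  constructor
  · rintro h ⟨e, he⟩
    induction e with | _ a b
    exact (hyAdj a b he).symm.trans (h a b he)
  · exact fun h a b hab => (hyAdj a b hab).trans (h _)

variable [Fintype V] {ι : Type*} [Fintype ι] {ε : ι → G.edgeSet}

lemma homCount_eq_card (hε : Function.Surjective ε) (y : EdgeIdx n → Bool) :
    homCount G y = #{φ : V ↪ Fin n | ∀ i, y (placeEdge φ (ε i)) = true} := by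
  classical
  have hiff (φ : V ↪ Fin n) : (∀ i, y (placeEdge φ (ε i)) = true)
      ↔ ∀ a b, G.Adj a b → yAdj y (φ a) (φ b) = true :=
    hε.forall.symm.trans (forall_adj_imp_yAdj_iff φ y).symm
  simp only [homCount, hiff]
  rw [← Fintype.card_subtype, ← Nat.card_eq_fintype_card]
  exact Nat.card_congr ((Equiv.subtypeSubtypeEquivSubtypeInter _ _).symm.trans
    ((Equiv.subtypeInjectiveEquivEmbedding V (Fin n)).subtypeEquiv fun _ => Iff.rfl))

lemma homCount_eq_sum_prod (hε : Function.Surjective ε) (y : EdgeIdx n → Bool) :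
    (homCount G y : ℝ) = ∑ φ : V ↪ Fin n, ∏ i, coord (placeEdge φ (ε i)) y := by
  rw [homCount_eq_card hε, ← sum_boole]
  refine sum_congr rfl fun φ _ => ?_
  simp only [coord, prod_boole, mem_univ, true_implies]

lemma card_placeEdge_eq_mul_card (r : G.edgeSet) (t : EdgeIdx n) :
    #{φ : V ↪ Fin n | placeEdge φ r = t} * Fintype.card (EdgeIdx n)
      = n.descFactorial (Fintype.card V) := by
  have hconst (s : EdgeIdx n) :
      #{φ : V ↪ Fin n | placeEdge φ r = s} = #{φ : V ↪ Fin n | placeEdge φ r = t} := by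
    obtain ⟨τ, hτ⟩ := exists_perm_map_eq (edgeEquiv n s).2 (edgeEquiv n t).2
    refine card_equiv (Equiv.embeddingCongr (Equiv.refl V) τ) fun φ => ?_
    have hmap : Sym2.map (Equiv.embeddingCongr (Equiv.refl V) τ φ) (r : Sym2 V)
        = Sym2.map τ (Sym2.map φ r) := by
      rw [Sym2.map_map]
      rfl
    rw [mem_filter_univ, mem_filter_univ, placeEdge_eq_iff, placeEdge_eq_iff, hmap, ← hτ,
      (Sym2.map.injective τ.injective).eq_iff]
  calc _ = ∑ s : EdgeIdx n, #{φ : V ↪ Fin n | placeEdge φ r = s} := by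
        rw [sum_congr rfl fun s _ => hconst s, sum_const, card_univ, smul_eq_mul, mul_comm]
    _ = Fintype.card (V ↪ Fin n) := (card_eq_sum_card_fiberwise fun _ _ => mem_univ _).symm
    _ = n.descFactorial (Fintype.card V) := by rw [Fintype.card_embedding_eq, Fintype.card_fin]

lemma card_placeEdge_pair_mul_le {r e : G.edgeSet} (hre : r ≠ e) (t s : EdgeIdx n) :
    #{φ : V ↪ Fin n | placeEdge φ r = t ∧ placeEdge φ e = s} * n ^ 3
      ≤ 8 * n ^ Fintype.card V := by
  classical
  obtain ⟨T, hT, hcard⟩ := exists_card_eq_three_subset_union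
    (G.not_isDiag_of_mem_edgeSet r.2) (G.not_isDiag_of_mem_edgeSet e.2) (Subtype.coe_ne_coe.mpr hre)
  set A : V → Finset (Fin n) := fun w =>
    if w ∈ (r : Sym2 V).toFinset then {t.1.1, t.1.2} else {s.1.1, s.1.2}
  have hA : ∀ w ∈ T, #(A w) ≤ 2 := fun w _ => by
    simp only [A]
    split_ifs <;> exact card_le_two
  have himage {φ : V ↪ Fin n} {f : G.edgeSet} {x : EdgeIdx n} (hf : placeEdge φ f = x) {w : V}
      (hw : w ∈ (f : Sym2 V).toFinset) : φ w ∈ ({x.1.1, x.1.2} : Finset (Fin n)) := by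
    rw [placeEdge_eq_iff, coe_edgeEquiv] at hf
    rw [mem_insert, mem_singleton, ← Sym2.mem_iff, ← hf]
    exact Sym2.mem_map.mpr ⟨w, Sym2.mem_toFinset.mp hw, rfl⟩
  have hmem : ∀ φ ∈ ({φ | placeEdge φ r = t ∧ placeEdge φ e = s} : Finset (V ↪ Fin n)),
      ∀ w ∈ T, φ w ∈ A w := fun φ hφ w hw => by
    rw [mem_filter_univ] at hφ
    by_cases hwr : w ∈ (r : Sym2 V).toFinset
    · simpa only [A, if_pos hwr] using himage hφ.1 hwr
    · simpa only [A, if_neg hwr] using himage hφ.2 ((mem_union.mp (hT hw)).resolve_left hwr)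
  simpa only [hcard, Fintype.card_fin, Nat.reducePow] using
    card_mul_pow_le_of_forall_mem T hA hmem

end Placement

section DescFactorial

lemma pow_mul_sub_sq_le_descFactorial_mul (n v : ℕ) :
    (n : ℝ) ^ v * (n - v ^ 2) ≤ n.descFactorial v * n := by
  induction v with
  | zero => simp
  | succ v ih =>
    rcases le_or_gt (n : ℝ) ((v + 1 : ℕ) ^ 2) with hle | hlt
    · exact (mul_nonpos_of_nonneg_of_nonpos (by positivity) (by linarith)).trans (by positivity)
    · have hv0 : (0 : ℝ) ≤ v := Nat.cast_nonneg v
      push_cast at hlt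
      have hvn : v ≤ n := by exact_mod_cast (by nlinarith : (v : ℝ) ≤ n)
      have hsub : (0 : ℝ) ≤ n - v := sub_nonneg.mpr (by exact_mod_cast hvn)
      rw [Nat.descFactorial_succ]
      push_cast [hvn]
      calc _ = (n : ℝ) ^ v * (n * (n - (v + 1) ^ 2)) := by ring
        _ ≤ (n : ℝ) ^ v * ((n - v) * (n - v ^ 2)) := by gcongr ?_ * ?_; nlinarith [pow_nonneg hv0 3]
        _ = (n - v) * ((n : ℝ) ^ v * (n - v ^ 2)) := by ring
        _ ≤ (n - v) * (n.descFactorial v * n) := by gcongr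
        _ = _ := by ring

lemma abs_zpow_mul_descFactorial_div_sub_two_le {n : ℕ} (hn : 2 ≤ n) (v : ℕ) :
    |(n : ℝ) ^ ((2 : ℤ) - v) * (n.descFactorial v / (n * (n - 1) / 2)) - 2|
      ≤ 4 * (1 + v ^ 2) / n := by
  have hn2 : (2 : ℝ) ≤ n := by exact_mod_cast hn
  have hn0 : (0 : ℝ) < n := by linarith
  have hn1 : (0 : ℝ) < n - 1 := by linarith
  set x : ℝ := n.descFactorial v / (n : ℝ) ^ v with hx
  have hx_le : x ≤ 1 := by
    rw [hx, div_le_one (by positivity)]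
    exact_mod_cast Nat.descFactorial_le_pow n v
  have hle_x : n - (v : ℝ) ^ 2 ≤ x * n := by
    rw [hx, div_mul_eq_mul_div, le_div_iff₀ (by positivity), mul_comm]
    exact pow_mul_sub_sq_le_descFactorial_mul n v
  have heq : (n : ℝ) ^ ((2 : ℤ) - v) * (n.descFactorial v / (n * (n - 1) / 2)) - 2
      = 2 * (1 - n * (1 - x)) / (n - 1) := by
    rw [zpow_sub₀ hn0.ne', hx, zpow_natCast, zpow_ofNat]
    field_simp
    ring
  have habs : |1 - n * (1 - x)| ≤ 1 + (v : ℝ) ^ 2 := by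
    have : 0 ≤ n * (1 - x) := mul_nonneg hn0.le (sub_nonneg.mpr hx_le)
    rw [abs_le]
    constructor <;> nlinarith [sq_nonneg (v : ℝ)]
  rw [heq, abs_div, abs_mul, abs_of_pos hn1, abs_two, div_le_div_iff₀ hn1 hn0]
  calc 2 * |1 - n * (1 - x)| * n ≤ 2 * (1 + (v : ℝ) ^ 2) * (2 * (n - 1)) := by
        gcongr
        linarith
    _ = 4 * (1 + v ^ 2) * (n - 1) := by ring

end DescFactorial

section MeanFieldCalculus

variable {J : Type*} [Fintype J] (m : J → ℕ) (β : J → ℝ)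

lemma hasDerivAt_meanField (a : ℝ) : HasDerivAt (meanField m β) (meanFieldDeriv m β a) a :=
  HasDerivAt.fun_sum fun _ _ => (hasDerivAt_pow _ a).const_mul _

lemma hasDerivAt_sigmoid_meanField (a : ℝ) :
    HasDerivAt (fun a => Real.sigmoid (2 * meanField m β a))
      (Real.sigmoid (2 * meanField m β a) * (1 - Real.sigmoid (2 * meanField m β a))
        * (2 * meanFieldDeriv m β a)) a :=
  (Real.hasDerivAt_sigmoid _).comp a ((hasDerivAt_meanField m β a).const_mul 2)

variable {m β}

lemma exists_isSubcritical {p : ℝ} (hβ : ∀ j, 2 ≤ m j → 0 ≤ β j) (hp : p ∈ Set.Ioo (0 : ℝ) 1)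
    (hfix : Real.sigmoid (2 * meanField m β p) = p)
    (huniq : ∀ q ∈ Set.Ioo (0 : ℝ) 1, Real.sigmoid (2 * meanField m β q) = q → q = p)
    (hderiv : deriv (fun a => Real.sigmoid (2 * meanField m β a)) p < 1) :
    ∃ c, IsSubcritical m β p c := by
  obtain ⟨c, hc, hrepel⟩ := exists_mul_sq_le_of_unique_fixedPoint
    (fun a => (hasDerivAt_sigmoid_meanField m β a).differentiableAt) (Set.Ioo_subset_Icc_self hp)
    hfix (fun q _ hq => huniq q (hq ▸ ⟨Real.sigmoid_pos _, Real.sigmoid_lt_one _⟩) hq) hderiv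
  refine ⟨c, hβ, hp, hfix, hc, hrepel, ?_⟩
  rw [(hasDerivAt_sigmoid_meanField m β p).deriv, hfix] at hderiv
  rw [meanFieldGap]
  linarith

end MeanFieldCalculus

section Ergm

variable {k : ℕ} (v : Fin (k + 1) → ℕ)

/-- The constant `K` of the placement systems of graphs with `v j` vertices. -/
def spreadBound : ℝ≥0 := 8 + ∑ j, 4 * (1 + (v j : ℝ≥0) ^ 2)

lemma eight_le_spreadBound : (8 : ℝ) ≤ spreadBound v := by
  have hle : (8 : ℝ≥0) ≤ spreadBound v := le_self_add
  exact_mod_cast hle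

lemma four_mul_le_spreadBound (j : Fin (k + 1)) : 4 * (1 + (v j : ℝ) ^ 2) ≤ spreadBound v := by
  have hle : 4 * (1 + (v j : ℝ≥0) ^ 2) ≤ spreadBound v :=
    (single_le_sum (f := fun j => 4 * (1 + (v j : ℝ≥0) ^ 2)) (fun _ _ => zero_le)
      (mem_univ j)).trans le_add_self
  exact_mod_cast hle

lemma rpow_inv_twelve_pow (n : ℕ) : ((n : ℝ) ^ (((12 : ℕ) : ℝ)⁻¹)) ^ 12 = n :=
  Real.rpow_inv_natCast_pow (Nat.cast_nonneg n) (by norm_num)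

section Edges

variable {V : Type} [Fintype V] {n : ℕ}

lemma zpow_mul_card_placeEdge_eq (hn : 2 ≤ n) {G : SimpleGraph V} (r : G.edgeSet) (t : EdgeIdx n) :
    (n : ℝ) ^ ((2 : ℤ) - Fintype.card V) * #{φ : V ↪ Fin n | placeEdge φ r = t}
      = n ^ ((2 : ℤ) - Fintype.card V)
        * (n.descFactorial (Fintype.card V) / (n * (n - 1) / 2)) := by
  have hn2 : (2 : ℝ) ≤ n := by exact_mod_cast hn
  have hN : (n * (n - 1) / 2 : ℝ) ≠ 0 :=
    (div_pos (mul_pos (by linarith) (by linarith)) two_pos).ne'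
  rw [← card_placeEdge_eq_mul_card r t, Nat.cast_mul, card_edgeIdx, mul_div_cancel_right₀ _ hN]

lemma zpow_mul_card_placeEdge_pair_le (hn : n ≠ 0) {G : SimpleGraph V} {r e : G.edgeSet}
    (hre : r ≠ e) (t s : EdgeIdx n) :
    (n : ℝ) ^ ((2 : ℤ) - Fintype.card V)
      * #{φ : V ↪ Fin n | placeEdge φ r = t ∧ placeEdge φ e = s} ≤ 8 / n := by
  have hn0 : (0 : ℝ) < n := by exact_mod_cast Nat.pos_of_ne_zero hn
  have hcard : (#{φ : V ↪ Fin n | placeEdge φ r = t ∧ placeEdge φ e = s} : ℝ) * n ^ 3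
      ≤ 8 * n ^ Fintype.card V := by exact_mod_cast card_placeEdge_pair_mul_le hre t s
  rw [zpow_sub₀ hn0.ne', zpow_natCast, zpow_ofNat, div_mul_eq_mul_div,
    div_le_div_iff₀ (by positivity) hn0]
  linarith

/-- An enumeration of the edges of `G`. -/
def edgeEnum (G : SimpleGraph V) : Fin (eCount G) ≃ G.edgeSet := (Finite.equivFin G.edgeSet).symm

end Edges

variable (H : ∀ j : Fin (k + 1), SimpleGraph (Fin (v j)))

/-- The placements of the graphs `H j` into the complete graph on `n` vertices. -/
def ergmSystem {n : ℕ} (hn : 2 ≤ n) :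
    PlacementSystem (fun j => eCount (H j)) (spreadBound v) where
  I := EdgeIdx n
  fintypeI := inferInstance
  decidableEqI := inferInstance
  P j := Fin (v j) ↪ Fin n
  fintypeP j := inferInstance
  place j φ e := placeEdge φ (edgeEnum (H j) e)
  c j := (n : ℝ) ^ ((2 : ℤ) - v j)
  κ j := (n : ℝ) ^ ((2 : ℤ) - v j) * (n.descFactorial (v j) / (n * (n - 1) / 2))
  u := (n : ℝ) ^ (((12 : ℕ) : ℝ)⁻¹)
  one_le_u := Real.one_le_rpow (Nat.one_le_cast.mpr (by lia)) (by positivity)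
  place_injective j φ := (placeEdge_injective φ).comp (edgeEnum (H j)).injective
  c_nonneg j := by positivity
  degree_eq j r t := by
    simpa only [Fintype.card_fin] using zpow_mul_card_placeEdge_eq hn (edgeEnum (H j) r) t
  abs_kappa_sub_two_le j := by
    rw [rpow_inv_twelve_pow]
    refine (abs_zpow_mul_descFactorial_div_sub_two_le hn (v j)).trans ?_
    gcongr
    exact four_mul_le_spreadBound v j
  codegree_le j r e t s hre := by
    rw [rpow_inv_twelve_pow]
    refine le_trans ?_ (div_le_div_of_nonneg_right (eight_le_spreadBound v) (Nat.cast_nonneg n))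
    simpa only [Fintype.card_fin] using
      zpow_mul_card_placeEdge_pair_le (by lia) ((edgeEnum (H j)).injective.ne hre) t s
  card_le := by
    rw [card_edgeIdx, pow_mul _ 12 2, rpow_inv_twelve_pow]
    nlinarith [Nat.cast_nonneg (α := ℝ) n]

variable {n : ℕ} (hn : 2 ≤ n)

lemma ergmSystem_u_pow_le_card :
    (ergmSystem v H hn).u ^ 24 ≤ 4 * Fintype.card (ergmSystem v H hn).I := by
  have hn2 : (2 : ℝ) ≤ n := by exact_mod_cast hn
  have hu : (ergmSystem v H hn).u ^ 12 = n := rpow_inv_twelve_pow n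
  have hcard : (Fintype.card (ergmSystem v H hn).I : ℝ) = n * (n - 1) / 2 := card_edgeIdx n
  rw [pow_mul _ 12 2, hu, hcard]
  nlinarith

lemma ergmSystem_u_pow_three : (ergmSystem v H hn).u ^ 3 = (n : ℝ) ^ (1 / 4 : ℝ) := by
  change ((n : ℝ) ^ (((12 : ℕ) : ℝ)⁻¹)) ^ 3 = _
  rw [← Real.rpow_mul_natCast (Nat.cast_nonneg n)]
  norm_num

variable (β : Fin (k + 1) → ℝ)

lemma ergmWeight_eq_exp_ham (y : EdgeIdx n → Bool) :
    ergmWeight β v H n y = Real.exp ((ergmSystem v H hn).ham β y) := by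
  refine congrArg Real.exp (sum_congr rfl fun j _ => ?_)
  rw [homCount_eq_sum_prod (edgeEnum (H j)).surjective, mul_assoc]
  rfl

lemma ergmExp_eq_gibbsExp : ergmExp β v H n = gibbsExp ((ergmSystem v H hn).ham β) := by
  funext f
  simp only [ergmExp, ergmProb, ergmZ, gibbsExp, ergmWeight_eq_exp_ham v H hn β, sum_div,
    div_mul_eq_mul_div]
  rfl

lemma PhiFn_eq_meanField : PhiFn β v H = meanField (fun j => eCount (H j)) β := rfl

lemma phiFn_eq_sigmoid :
    phiFn β v H = fun a => Real.sigmoid (2 * meanField (fun j => eCount (H j)) β a) := by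
  funext a
  rw [phiFn, PhiFn_eq_meanField, Real.sigmoid_def, Real.exp_neg]
  field_simp

lemma Wn_eq_standardSum (p : ℝ) :
    Wn β v H p n
      = standardSum ((ergmSystem v H hn).ham β) ((ergmSystem v H hn).asympStd β p) := by
  have hcard : (Fintype.card (ergmSystem v H hn).I : ℝ) = n * (n - 1) / 2 := card_edgeIdx n
  funext y
  rw [Wn, muN, ergmExp_eq_gibbsExp v H hn, sigmaSq, PhiFn_eq_meanField,
    (hasDerivAt_meanField _ β p).deriv, PlacementSystem.asympStd, meanFieldGap, hcard, ← mul_assoc]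
  rfl

end Ergm

end ErgmCLT

theorem ergm_wasserstein_clt_general {k : ℕ} (β : Fin (k + 1) → ℝ) (v : Fin (k + 1) → ℕ)
    (H : ∀ j : Fin (k + 1), SimpleGraph (Fin (v j)))
    (hβ : ∀ j : Fin (k + 1), 2 ≤ eCount (H j) → 0 ≤ β j)
    (p : ℝ) (hp : p ∈ Set.Ioo (0 : ℝ) 1)
    (hfix : phiFn β v H p = p)
    (huniq : ∀ q ∈ Set.Ioo (0 : ℝ) 1, phiFn β v H q = q → q = p)
    (hsub : deriv (phiFn β v H) p < 1) :
    ∃ C : ℝ, 0 < C ∧ ∀ n : ℕ, 2 ≤ n → ∀ ψ : ℝ → ℝ, LipschitzWith 1 ψ →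
      |(∑ y : EdgeIdx n → Bool, ergmProb β v H n y * ψ (Wn β v H p n y)) -
          ∫ z, ψ z ∂(gaussianReal 0 1)| ≤ C * (n : ℝ) ^ (-(1 / 4 : ℝ)) := by
  rw [ErgmCLT.phiFn_eq_sigmoid] at hfix huniq hsub
  obtain ⟨c, hs⟩ := ErgmCLT.exists_isSubcritical hβ hp hfix huniq hsub
  obtain ⟨C, hC, hclt⟩ := ErgmCLT.exists_abs_gibbsExp_sub_gaussian_le hs (ErgmCLT.spreadBound v)
  refine ⟨C + 1, by positivity, fun n hn ψ hψ => ?_⟩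
  have hbound := hclt (ErgmCLT.ergmSystem v H hn) (ErgmCLT.ergmSystem_u_pow_le_card v H hn) ψ hψ
  rw [← ErgmCLT.Wn_eq_standardSum, ← ErgmCLT.ergmExp_eq_gibbsExp, ErgmCLT.ergmSystem_u_pow_three,
    div_eq_mul_inv, ← Real.rpow_neg (Nat.cast_nonneg n)] at hbound
  refine hbound.trans (mul_le_mul_of_nonneg_right ?_ (by positivity))
  exact (lt_add_one C).le

/-- **Theorem 3.2 (Wasserstein bound)**: CLT with rate `n^{-1/4}`, in the Wasserstein
distance, for the standardized number of edges of an ERGM in the subcritical region. -/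
theorem ergm_wasserstein_clt {k : ℕ} (β : Fin (k + 1) → ℝ) (v : Fin (k + 1) → ℕ)
    (H : ∀ j : Fin (k + 1), SimpleGraph (Fin (v j)))
    -- `β₂, …, β_k > 0`
    (hβ : ∀ j : Fin (k + 1), j ≠ 0 → 0 < β j)
    -- `H₁` is a single edge
    (hv0 : v 0 = 2) (he0 : eCount (H 0) = 1)
    -- the graphs have no isolated vertices
    (hnoiso : ∀ (j : Fin (k + 1)) (a : Fin (v j)), ∃ b, (H j).Adj a b)
    -- `H₂, …, H_k` have at least two edges
    (hedges : ∀ j : Fin (k + 1), j ≠ 0 → 2 ≤ eCount (H j))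
    -- the subcritical region: unique fixed point `p ∈ (0,1)` with `φ_β'(p) < 1`
    (p : ℝ) (hp : p ∈ Set.Ioo (0 : ℝ) 1)
    (hfix : phiFn β v H p = p)
    (huniq : ∀ q ∈ Set.Ioo (0 : ℝ) 1, phiFn β v H q = q → q = p)
    (hsub : deriv (phiFn β v H) p < 1) :
    ∃ C : ℝ, 0 < C ∧ ∀ n : ℕ, 2 ≤ n → ∀ ψ : ℝ → ℝ, LipschitzWith 1 ψ →
      |(∑ y : EdgeIdx n → Bool, ergmProb β v H n y * ψ (Wn β v H p n y)) -
          ∫ z, ψ z ∂(gaussianReal 0 1)| ≤ C * (n : ℝ) ^ (-(1 / 4 : ℝ)) := by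
  refine ergm_wasserstein_clt_general β v H (fun j hj => (hβ j ?_).le) p hp hfix huniq hsub
  rintro rfl
  lia
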